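/- arXiv:1408.0632 — 2 statements merged into one kernel-verified Lean document; each statement's English description precedes it below -/
import Mathlib

section
/- There is a constant C > 0 with the following properties. Define ρⁿ(x) = ψ_n'(x)² − (x²/(4·n^{2/3}) + x)·ψ_n(x)² and ρ(x) = Ai'(x)² − x·Ai(x)². Then: (i) |ρⁿ(x) − ρ̂ⁿ(x)| ≤ C/|x| for every integer n ≥ 1 and every x ∈ [−2·n^{2/3}, ∞) with x ≠ 0; (ii) |ρ(x) − ρ̂(x)| ≤ C/|x| for every x ∈ ℝ with x ≠ 0; (iii) ρⁿ(x) ≤ C·√(|x| + 1) for every n ≥ 1 and every x ∈ ℝ; (iv) ρ(x) ≤ C·√(|x| + 1) for every x ∈ ℝ. -/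
open MeasureTheory Filter Set

noncomputable section

/-- The Airy function `Ai(x) = (1/π)·lim_{b→∞} ∫_0^b cos(t³/3 + x·t) dt`. -/
def Ai (x : ℝ) : ℝ :=
  (1 / Real.pi) *
    limUnder Filter.atTop (fun b : ℝ => ∫ t in (0:ℝ)..b, Real.cos (t ^ 3 / 3 + x * t))

/-- The Airy kernel. -/
def KAi (x y : ℝ) : ℝ :=
  if x = y then (deriv Ai x) ^ 2 - x * (Ai x) ^ 2
  else (Ai x * deriv Ai y - deriv Ai x * Ai y) / (x - y)

/-- One-point correlation function of the Airy₂ random point field. -/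
def rho (x : ℝ) : ℝ := (deriv Ai x) ^ 2 - x * (Ai x) ^ 2

/-- Probabilists' Hermite polynomial `Ĥ_m(x) = (−1)^m e^{x²/2} (d/dx)^m e^{−x²/2}`. -/
def hermiteP (m : ℕ) (x : ℝ) : ℝ :=
  (-1 : ℝ) ^ m * Real.exp (x ^ 2 / 2) * iteratedDeriv m (fun t => Real.exp (-t ^ 2 / 2)) x

/-- Normalized oscillator function `φ_m`. -/
def osc (m : ℕ) (x : ℝ) : ℝ :=
  (2 * Real.pi) ^ (-(1:ℝ)/4) * ((m.factorial : ℝ)) ^ (-(1:ℝ)/2) *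
    Real.exp (-x ^ 2 / 4) * hermiteP m x

/-- `ψ_mⁿ(x) = n^{1/12}·φ_m(2√n + n^{−1/6}·x)`. -/
def psiUp (n m : ℕ) (x : ℝ) : ℝ :=
  (n : ℝ) ^ ((1:ℝ)/12) * osc m (2 * Real.sqrt n + (n : ℝ) ^ (-(1:ℝ)/6) * x)

/-- `ψ_n = ψ_nⁿ`. -/
def psiN (n : ℕ) : ℝ → ℝ := psiUp n n

/-- The finite-`n` Airy kernel. -/
def KAiN (n : ℕ) (x y : ℝ) : ℝ :=
  if x = y then
    (deriv (psiN n) x) ^ 2 - psiN n x * deriv (deriv (psiN n)) x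
      - (1 / (2 * (n : ℝ) ^ ((1:ℝ)/3))) * (psiN n x) ^ 2
  else
    (psiN n x * deriv (psiN n) y - deriv (psiN n) x * psiN n y) / (x - y)
      - (1 / (2 * (n : ℝ) ^ ((1:ℝ)/3))) * (psiN n x * psiN n y)

/-- `(εf)(x) = (1/2)·∫_ℝ sign(x − y)·f(y) dy`. -/
def epsF (f : ℝ → ℝ) (x : ℝ) : ℝ := (1/2) * ∫ y : ℝ, Real.sign (x - y) * f y

/-- `εψ_n`. -/
def epsPsi (n : ℕ) : ℝ → ℝ := epsF (psiN n)

/-- `J₁(x,y) = K_Ai(x,y) + (1/2)·Ai(x)·(1 − ∫_y^∞ Ai(u) du)`. -/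
def J1 (x y : ℝ) : ℝ := KAi x y + (1/2) * Ai x * (1 - ∫ u in Set.Ioi y, Ai u)

/-- Scalar part of the quaternion product of Airy₁ kernels. -/
def L1 (x y : ℝ) : ℝ :=
  J1 x y * J1 y x -
    deriv (fun v => J1 x v) y * ((∫ u in x..y, J1 u x) - (1/2) * Real.sign (y - x))

/-- `J₁ⁿ(x,y) = K_Aiⁿ(x,y) + (1/2)·ψ_{n−1}ⁿ(x)·(εψ_n)(y)`. -/
def J1N (n : ℕ) (x y : ℝ) : ℝ :=
  KAiN n x y + (1/2) * psiUp n (n - 1) x * epsPsi n y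

/-- Scalar part of the quaternion product of finite-`n` Airy₁ kernels. -/
def L1N (n : ℕ) (x y : ℝ) : ℝ :=
  J1N n x y * J1N n y x -
    deriv (fun v => J1N n x v) y * ((∫ u in x..y, J1N n u x) - (1/2) * Real.sign (y - x))

/-- `ρ̂(x) = (1/π)·√(−x)` for `x < 0`, and `0` otherwise. -/
def rhoHat (x : ℝ) : ℝ := if x < 0 then Real.sqrt (-x) / Real.pi else 0

/-- `ρ̂ⁿ(x) = (1/π)·√(−x·(1 + x/(4·n^{2/3})))` on `(−4n^{2/3}, 0)`, and `0` otherwise. -/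
def rhoHatN (n : ℕ) (x : ℝ) : ℝ :=
  if -(4 * (n : ℝ) ^ ((2:ℝ)/3)) < x ∧ x < 0 then
    Real.sqrt (-x * (1 + x / (4 * (n : ℝ) ^ ((2:ℝ)/3)))) / Real.pi
  else 0

/-- `G_{a,b,c}(x,y) = |x|^{−a}·|y|^{−b}·|x−y|^{−c}`. -/
def Gf (a b c : ℝ) (x y : ℝ) : ℝ := |x| ^ (-a) * |y| ^ (-b) * |x - y| ^ (-c)

/-- `Ĝ_{a,b,c}(x,y) = G_{a,b,c}(x,y) + G_{a,b,c}(y,x)`. -/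
def Ghat (a b c : ℝ) (x y : ℝ) : ℝ := Gf a b c x y + Gf a b c y x

/-- Soft-edge one-point correlation function of the `n`-point GUE ensemble. -/
def rhoN (n : ℕ) (x : ℝ) : ℝ :=
  (deriv (psiN n) x) ^ 2 - (x ^ 2 / (4 * (n : ℝ) ^ ((2:ℝ)/3)) + x) * (psiN n x) ^ 2

end


/-! ### Part 1: abstract ODE analysis -/

lemma anti_of_deriv {h h' : ℝ → ℝ} {a b : ℝ} (hab : a ≤ b)
    (hd : ∀ x, a ≤ x → x ≤ b → HasDerivAt h (h' x) x)
    (hn : ∀ x, a ≤ x → x ≤ b → h' x ≤ 0) : h b ≤ h a := by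
  have := antitoneOn_of_hasDerivWithinAt_nonpos (f := h) (f' := h') (convex_Icc a b)
    (fun x hx => (hd x hx.1 hx.2).continuousAt.continuousWithinAt)
    (fun x hx => by
      rw [interior_Icc] at hx
      exact (hd x hx.1.le hx.2.le).hasDerivWithinAt)
    (fun x hx => by
      rw [interior_Icc] at hx
      exact hn x hx.1.le hx.2.le)
  exact this (left_mem_Icc.2 hab) (right_mem_Icc.2 hab) hab

/-- The (negated) potential in the variable `s = -x`. -/
noncomputable def Qf (e s : ℝ) : ℝ := s - e ^ 2 * s ^ 2 / 4 + e / 2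

noncomputable def Rf (e s : ℝ) : ℝ := Real.sqrt (Qf e s)

noncomputable def Bf (e s : ℝ) : ℝ := (1 - e ^ 2 * s / 2) / (2 * Rf e s ^ 3)

noncomputable def Ef (e : ℝ) (F G : ℝ → ℝ) (s : ℝ) : ℝ :=
  G s ^ 2 / Rf e s + Rf e s * F s ^ 2

noncomputable def Tf (e : ℝ) (F G : ℝ → ℝ) (s : ℝ) : ℝ :=
  Ef e F G s + Bf e s * (F s * G s)

lemma Qf_lower {e s : ℝ} (he : 0 ≤ e) (hs : 0 ≤ s) (hes : e ^ 2 * s ≤ 2) : s / 2 ≤ Qf e s := by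
  unfold Qf
  nlinarith [mul_nonneg hs (sub_nonneg.2 hes)]

lemma Qf_upper {e s : ℝ} (he1 : e ≤ 1) : Qf e s ≤ s + 1 / 2 := by
  unfold Qf
  nlinarith [mul_nonneg (sq_nonneg e) (sq_nonneg s)]

lemma Rf_sq {e s : ℝ} (he : 0 ≤ e) (hs : 0 ≤ s) (hes : e ^ 2 * s ≤ 2) :
    Rf e s ^ 2 = Qf e s := by
  unfold Rf
  exact Real.sq_sqrt (by linarith [Qf_lower he hs hes])

lemma Rf_ge_one {e s : ℝ} (he : 0 ≤ e) (hs : 2 ≤ s) (hes : e ^ 2 * s ≤ 2) :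
    1 ≤ Rf e s := by
  unfold Rf
  rw [Real.one_le_sqrt]
  linarith [Qf_lower he (by linarith) hes]

lemma Bf_nonneg {e s : ℝ} (he : 0 ≤ e) (hs : 2 ≤ s) (hes : e ^ 2 * s ≤ 2) :
    0 ≤ Bf e s := by
  unfold Bf
  have := Rf_ge_one he hs hes
  apply div_nonneg (by linarith) (by positivity)

lemma Bf_le {e s : ℝ} (he : 0 ≤ e) (hs : 2 ≤ s) (hes : e ^ 2 * s ≤ 2) :
    Bf e s ≤ 1 / (2 * Rf e s ^ 3) := by
  unfold Bf
  have := Rf_ge_one he hs hes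
  gcongr
  have : 0 ≤ e ^ 2 * s := by positivity
  linarith

lemma Bf_le_half {e s : ℝ} (he : 0 ≤ e) (hs : 2 ≤ s) (hes : e ^ 2 * s ≤ 2) :
    Bf e s ≤ 1 / 2 := by
  refine (Bf_le he hs hes).trans ?_
  have h1 := Rf_ge_one he hs hes
  have : 1 ≤ Rf e s ^ 3 := one_le_pow₀ h1
  apply one_div_le_one_div_of_le <;> linarith

lemma Rf_hasDerivAt {e s : ℝ} (he : 0 ≤ e) (hs : 2 ≤ s) (hes : e ^ 2 * s ≤ 2) :
    HasDerivAt (Rf e) ((1 - e ^ 2 * s / 2) / (2 * Rf e s)) s := by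
  have hQ : HasDerivAt (Qf e) (1 - e ^ 2 * s / 2) s := by
    unfold Qf
    have := (((hasDerivAt_id s).sub ((((hasDerivAt_id s).pow 2).const_mul (e ^ 2)).div_const 4)).add_const (e / 2))
    refine HasDerivAt.congr_deriv this ?_
    simp; ring
  exact hQ.sqrt (by have := Qf_lower he (by linarith) hes; linarith)

noncomputable def Bd (e s : ℝ) : ℝ :=
  -(e ^ 2 / (4 * Rf e s ^ 3) + 3 * (1 - e ^ 2 * s / 2) ^ 2 / (4 * Rf e s ^ 5))

lemma Bf_hasDerivAt {e s : ℝ} (he : 0 ≤ e) (hs : 2 ≤ s) (hes : e ^ 2 * s ≤ 2) :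
    HasDerivAt (Bf e) (Bd e s) s := by
  have hR := Rf_hasDerivAt he hs hes
  have h1 := Rf_ge_one he hs hes
  have hn : HasDerivAt (fun s => 1 - e ^ 2 * s / 2) (-(e ^ 2 / 2)) s := by
    have := (((hasDerivAt_id s).const_mul (e ^ 2)).div_const 2).const_sub 1
    refine HasDerivAt.congr_deriv this ?_
    simp
  have := hn.div ((hR.pow 3).const_mul 2) (by simp only [Pi.pow_apply]; positivity)
  refine HasDerivAt.congr_deriv this ?_
  unfold Bd
  have : Rf e s ≠ 0 := by positivity
  simp only [Pi.pow_apply]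
  field_simp
  norm_num
  ring

lemma Bd_nonpos {e s : ℝ} (he : 0 ≤ e) (hs : 2 ≤ s) (hes : e ^ 2 * s ≤ 2) :
    Bd e s ≤ 0 := by
  have h1 := Rf_ge_one he hs hes
  unfold Bd
  rw [neg_nonpos]
  positivity

lemma Tf_hasDerivAt {e : ℝ} {F G : ℝ → ℝ} (hF : ∀ s, HasDerivAt F (G s) s)
    (hG : ∀ s, HasDerivAt G (-Qf e s * F s) s) {s : ℝ} (he : 0 ≤ e)
    (hs : 2 ≤ s) (hes : e ^ 2 * s ≤ 2) :
    HasDerivAt (Tf e F G) (Bd e s * (F s * G s)) s := by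
  have hR := Rf_hasDerivAt he hs hes
  have h1 := Rf_ge_one he hs hes
  have hB := Bf_hasDerivAt he hs hes
  have h2 := Rf_sq he (by linarith) hes
  have := ((((hG s).pow 2).div hR (by positivity)).add (hR.mul ((hF s).pow 2))).add
    (hB.mul ((hF s).mul (hG s)))
  refine HasDerivAt.congr_deriv this ?_
  rw [← h2]
  unfold Bf
  have : Rf e s ≠ 0 := by positivity
  simp only [Pi.pow_apply, Pi.mul_apply]
  field_simp
  norm_num
  ring

lemma FG_le {e : ℝ} {F G : ℝ → ℝ} {s : ℝ} (he : 0 ≤ e)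
    (hs : 2 ≤ s) (hes : e ^ 2 * s ≤ 2) : |F s * G s| ≤ Ef e F G s / 2 := by
  have h1 := Rf_ge_one he hs hes
  have h0 : 0 < Rf e s := by linarith
  have hx : ∀ y : ℝ, y ^ 2 = (F s) ^ 2 → y * G s ≤ Ef e F G s / 2 := by
    intro y hy
    unfold Ef
    rw [← hy]
    have : 0 ≤ (G s - Rf e s * y) ^ 2 / Rf e s := by positivity
    have e2 : (G s - Rf e s * y) ^ 2 / Rf e s
      = G s ^ 2 / Rf e s + Rf e s * y ^ 2 - 2 * (y * G s) := by
      field_simp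
      ring
    linarith
  rw [abs_le]
  constructor
  · have := hx (-F s) (by ring)
    linarith
  · exact hx _ rfl

lemma Ef_nonneg {e : ℝ} {F G : ℝ → ℝ} {s : ℝ} : 0 ≤ Ef e F G s := by
  have : 0 ≤ Rf e s := Real.sqrt_nonneg _
  unfold Ef
  positivity

lemma Tf_Ef {e : ℝ} {F G : ℝ → ℝ} {s : ℝ} (he : 0 ≤ e)
    (hs : 2 ≤ s) (hes : e ^ 2 * s ≤ 2) :
    |Tf e F G s - Ef e F G s| ≤ Bf e s * (Ef e F G s / 2) := by
  have : Tf e F G s - Ef e F G s = Bf e s * (F s * G s) := by unfold Tf; ring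
  rw [this, abs_mul, abs_of_nonneg (Bf_nonneg he hs hes)]
  exact mul_le_mul_of_nonneg_left (FG_le he hs hes) (Bf_nonneg he hs hes)

lemma Ef_le_Tf {e : ℝ} {F G : ℝ → ℝ} {s : ℝ} (he : 0 ≤ e)
    (hs : 2 ≤ s) (hes : e ^ 2 * s ≤ 2) : Ef e F G s ≤ 2 * Tf e F G s := by
  have h1 := (abs_le.1 (Tf_Ef (F := F) (G := G) he hs hes)).1
  have h2 := Bf_le_half he hs hes
  have h3 := Bf_nonneg he hs hes
  have h4 := Ef_nonneg (e := e) (F := F) (G := G) (s := s)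
  nlinarith

lemma energy_mono {e : ℝ} {F G : ℝ → ℝ} (hF : ∀ s, HasDerivAt F (G s) s)
    (hG : ∀ s, HasDerivAt G (-Qf e s * F s) s) {s1 s2 : ℝ} (he : 0 ≤ e)
    (hs : 2 ≤ s1) (h12 : s1 ≤ s2) (hes : e ^ 2 * s2 ≤ 2) :
    Tf e F G s2 * Real.exp (Bf e s2) ≤ Tf e F G s1 * Real.exp (Bf e s1) ∧
    Tf e F G s1 * Real.exp (-Bf e s1) ≤ Tf e F G s2 * Real.exp (-Bf e s2) := by
  have key : ∀ s, s1 ≤ s → s ≤ s2 → 2 ≤ s ∧ e ^ 2 * s ≤ 2 := by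
    intro s h1 h2
    refine ⟨by linarith, le_trans ?_ hes⟩
    gcongr
  have bound : ∀ s, s1 ≤ s → s ≤ s2 →
      |Bd e s * (F s * G s)| ≤ -Bd e s * Tf e F G s := by
    intro s h1 h2
    obtain ⟨ha, hb⟩ := key s h1 h2
    rw [abs_mul, abs_of_nonpos (Bd_nonpos he ha hb)]
    refine mul_le_mul_of_nonneg_left ?_ (neg_nonneg.2 (Bd_nonpos he ha hb))
    have := FG_le (F := F) (G := G) he ha hb
    have := Ef_le_Tf (F := F) (G := G) he ha hb
    linarith
  constructor
  · refine anti_of_deriv (h := fun s => Tf e F G s * Real.exp (Bf e s)) h12 (fun s h1 h2 => ?_) (fun s h1 h2 => ?_)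
      (h' := fun s => Bd e s * (F s * G s) * Real.exp (Bf e s)
        + Tf e F G s * (Real.exp (Bf e s) * Bd e s))
    · obtain ⟨ha, hb⟩ := key s h1 h2
      exact (Tf_hasDerivAt hF hG he ha hb).mul (Bf_hasDerivAt he ha hb).exp
    · have h3 := (abs_le.1 (bound s h1 h2)).2
      have : Bd e s * (F s * G s) * Real.exp (Bf e s)
        + Tf e F G s * (Real.exp (Bf e s) * Bd e s)
        = (Bd e s * (F s * G s) + Bd e s * Tf e F G s) * Real.exp (Bf e s) := by ring
      show _ ≤ 0
      rw [this]
      apply mul_nonpos_of_nonpos_of_nonneg _ (Real.exp_pos _).le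
      linarith
  · have := anti_of_deriv (h := fun s => -(Tf e F G s * Real.exp (-Bf e s))) h12 (fun s h1 h2 => ?_) (fun s h1 h2 => ?_)
      (h' := fun s => -(Bd e s * (F s * G s) * Real.exp (-Bf e s)
        + Tf e F G s * (Real.exp (-Bf e s) * -Bd e s)))
    · simpa using this
    · obtain ⟨ha, hb⟩ := key s h1 h2
      exact ((Tf_hasDerivAt hF hG he ha hb).mul (Bf_hasDerivAt he ha hb).neg.exp).neg
    · have h3 := (abs_le.1 (bound s h1 h2)).1
      have : -(Bd e s * (F s * G s) * Real.exp (-Bf e s)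
        + Tf e F G s * (Real.exp (-Bf e s) * -Bd e s))
        = -(Bd e s * (F s * G s) - Bd e s * Tf e F G s) * Real.exp (-Bf e s) := by ring
      show _ ≤ 0
      rw [this]
      apply mul_nonpos_of_nonpos_of_nonneg _ (Real.exp_pos _).le
      linarith

/-- If `T(s)` is squeezed by `L e^{-B}`, `L e^{B}`, then `E(s)` is close to `L`. -/
lemma Ef_close {e L : ℝ} {F G : ℝ → ℝ} {s : ℝ} (he : 0 ≤ e) (hL : 0 ≤ L)
    (hs : 2 ≤ s) (hes : e ^ 2 * s ≤ 2)
    (h1 : L ≤ Tf e F G s * Real.exp (Bf e s))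
    (h2 : Tf e F G s * Real.exp (-Bf e s) ≤ L) :
    |Ef e F G s - L| ≤ 5 * L * Bf e s := by
  have b0 := Bf_nonneg he hs hes
  have b1 := Bf_le_half he hs hes
  have hE := Ef_le_Tf (F := F) (G := G) he hs hes
  have hE0 := Ef_nonneg (e := e) (F := F) (G := G) (s := s)
  have hTE := abs_le.1 (Tf_Ef (F := F) (G := G) he hs hes)
  set B := Bf e s
  set T := Tf e F G s
  set E := Ef e F G s
  have hT : 0 ≤ T := by linarith
  have eb : Real.exp (-B) * Real.exp B = 1 := by rw [← Real.exp_add]; simp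
  have u1 : 1 - B ≤ Real.exp (-B) := by linarith [Real.add_one_le_exp (-B)]
  have T1 : T * (1 - B) ≤ L := le_trans (mul_le_mul_of_nonneg_left u1 hT) h2
  have T2 : L * (1 - B) ≤ T := by
    calc L * (1 - B) ≤ L * Real.exp (-B) := mul_le_mul_of_nonneg_left u1 hL
      _ ≤ T * Real.exp B * Real.exp (-B) := mul_le_mul_of_nonneg_right h1 (Real.exp_pos _).le
      _ = T := by rw [mul_assoc, mul_comm (Real.exp B), eb, mul_one]
  have T3 : T ≤ 2 * L := by nlinarith
  have p1 : T * B ≤ 2 * L * B := mul_le_mul_of_nonneg_right T3 b0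
  have p2 : B * (E / 2) ≤ B * T := mul_le_mul_of_nonneg_left (by linarith) b0
  rw [abs_le]
  constructor <;> nlinarith

lemma right_bound {e : ℝ} {f g : ℝ → ℝ} (he : 0 ≤ e) (he1 : e ≤ 1)
    (hf : ∀ x, HasDerivAt f (g x) x)
    (hg : ∀ x, HasDerivAt g ((x + e ^ 2 * x ^ 2 / 4 - e / 2) * f x) x)
    (tf : Tendsto f atTop (nhds 0)) (tg : Tendsto g atTop (nhds 0))
    (txf : Tendsto (fun x => x * f x) atTop (nhds 0)) {x : ℝ} (hx : 1 ≤ x) :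
    |g x ^ 2 - (x + e ^ 2 * x ^ 2 / 4) * f x ^ 2| ≤ 2 * (f 1 ^ 2 + g 1 ^ 2) / x := by
  set q : ℝ → ℝ := fun x => x + e ^ 2 * x ^ 2 / 4 - e / 2 with hq
  set H : ℝ → ℝ := fun x => g x ^ 2 - q x * f x ^ 2 with hH
  have hqd : ∀ y, HasDerivAt q (1 + e ^ 2 * y / 2) y := by
    intro y
    have := (((hasDerivAt_id y).add ((((hasDerivAt_id y).pow 2).const_mul (e ^ 2)).div_const 4)).sub_const (e / 2))
    refine HasDerivAt.congr_deriv this ?_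
    simp; ring
  have hq2 : ∀ y, 1 ≤ y → 1 / 2 ≤ q y := by
    intro y hy
    simp only [hq]
    have : 0 ≤ e ^ 2 * y ^ 2 / 4 := by positivity
    linarith
  have hHd : ∀ y, HasDerivAt H (-(1 + e ^ 2 * y / 2) * f y ^ 2) y := by
    intro y
    refine HasDerivAt.congr_deriv (((hg y).pow 2).sub ((hqd y).mul ((hf y).pow 2))) ?_
    simp [hq]; ring
  have hfg : ∀ y, HasDerivAt (fun y => f y * g y) (g y ^ 2 + q y * f y ^ 2) y := by
    intro y
    refine HasDerivAt.congr_deriv ((hf y).mul (hg y)) ?_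
    simp [hq]; ring
  have tH : Tendsto H atTop (nhds 0) := by
    have : H = fun x => g x * g x - ((x * f x) * f x + e ^ 2 / 4 * ((x * f x) * (x * f x))
        - e / 2 * (f x * f x)) := by
      funext x; simp only [hH, hq]; ring
    rw [this]
    have := (tg.mul tg).sub (((txf.mul tf).add ((txf.mul txf).const_mul (e ^ 2 / 4))).sub
      ((tf.mul tf).const_mul (e / 2)))
    simpa using this
  have tfg : Tendsto (fun y => f y * g y) atTop (nhds 0) := by simpa using tf.mul tg
  have H0 : ∀ y, 1 ≤ y → 0 ≤ H y := by
    intro y hy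
    refine le_of_tendsto tH ?_
    filter_upwards [eventually_ge_atTop y] with z hz
    refine anti_of_deriv hz (fun w _ _ => hHd w) (fun w h1 h2 => ?_)
    have : 0 ≤ (1 + e ^ 2 * w / 2) * f w ^ 2 := by
      have : 0 ≤ w := by linarith
      positivity
    linarith
  have fg0 : ∀ y, 1 ≤ y → f y * g y ≤ 0 := by
    intro y hy
    refine ge_of_tendsto tfg ?_
    filter_upwards [eventually_ge_atTop y] with z hz
    have := anti_of_deriv (h := fun y => -(f y * g y)) hz (fun w _ _ => (hfg w).neg) (fun w h1 h2 => ?_)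
    · simpa using this
    · have := hq2 w (by linarith)
      have : 0 ≤ q w * f w ^ 2 := by positivity
      nlinarith [sq_nonneg (g w)]
  have A1 : x * H x - f x * g x ≤ 1 * H 1 - f 1 * g 1 := by
    refine anti_of_deriv (h := fun x => x * H x - f x * g x) hx
      (fun w _ _ => ((hasDerivAt_id w).mul (hHd w)).sub (hfg w)) (fun w h1 h2 => ?_)
    have h3 := hq2 w (by linarith)
    have h4 : 0 ≤ q w * f w ^ 2 := by positivity
    have : 0 ≤ w := by linarith
    have h5 : 0 ≤ w * ((1 + e ^ 2 * w / 2) * f w ^ 2) := by positivity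
    simp only [id, hH]
    nlinarith
  have A2 : x * f x ^ 2 ≤ 1 * f 1 ^ 2 := by
    refine anti_of_deriv (h := fun x => x * f x ^ 2) hx
      (fun w _ _ => ((hasDerivAt_id w).mul ((hf w).pow 2))) (fun w h1 h2 => ?_)
    have h3 := hq2 w (by linarith)
    have h4 := H0 w h1
    have h5 := fg0 w h1
    have h6 : f w ^ 2 ≤ -2 * (f w * g w) := by
      apply le_of_sq_le_sq _ (by linarith)
      have : f w ^ 2 / 2 ≤ g w ^ 2 := by
        simp only [hH] at h4
        nlinarith [sq_nonneg (f w)]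
      nlinarith [sq_nonneg (f w), mul_le_mul_of_nonneg_left this (sq_nonneg (f w))]
    simp only [id]
    norm_num
    nlinarith
  have x0 : 0 < x := by linarith
  have hHx := H0 x hx
  have hfgx := fg0 x hx
  have e1 : g x ^ 2 - (x + e ^ 2 * x ^ 2 / 4) * f x ^ 2 = H x - e / 2 * f x ^ 2 := by
    simp only [hH, hq]; ring
  rw [e1, le_div_iff₀ x0]
  have hH1 : H 1 ≤ g 1 ^ 2 := by
    have := hq2 1 le_rfl
    simp only [hH]
    nlinarith [sq_nonneg (f 1)]
  have a1 : |H x - e / 2 * f x ^ 2| ≤ H x + f x ^ 2 := by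
    have : 0 ≤ e * f x ^ 2 := by positivity
    have : e * f x ^ 2 ≤ 1 * f x ^ 2 := by gcongr
    rw [abs_le]
    constructor <;> nlinarith [sq_nonneg (f x)]
  nlinarith [sq_nonneg (f 1 + g 1), sq_nonneg (g 1), sq_nonneg (f 1)]

lemma mid_bound {e : ℝ} {f g : ℝ → ℝ} (he : 0 ≤ e) (he1 : e ≤ 1)
    (hf : ∀ x, HasDerivAt f (g x) x)
    (hg : ∀ x, HasDerivAt g ((x + e ^ 2 * x ^ 2 / 4 - e / 2) * f x) x)
    {x : ℝ} (hx0 : -2 ≤ x) (hx : x ≤ 1) :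
    f x ^ 2 + g x ^ 2 ≤ (f (-2) ^ 2 + g (-2) ^ 2) * Real.exp 9 := by
  have key := anti_of_deriv (h := fun x => (f x ^ 2 + g x ^ 2) * Real.exp (-3 * x)) hx0
    (fun w _ _ => (((hf w).pow 2).add ((hg w).pow 2)).mul
      (((hasDerivAt_id w).const_mul (-3)).exp)) (fun w h1 h2 => ?_)
  · have h3 : f x ^ 2 + g x ^ 2 = (f x ^ 2 + g x ^ 2) * Real.exp (-3 * x) * Real.exp (3 * x) := by
      rw [mul_assoc, ← Real.exp_add]; simp
    rw [h3]
    calc _ ≤ (f (-2) ^ 2 + g (-2) ^ 2) * Real.exp (-3 * -2) * Real.exp (3 * x) := by gcongr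
      _ = (f (-2) ^ 2 + g (-2) ^ 2) * Real.exp (6 + 3 * x) := by
        rw [mul_assoc, ← Real.exp_add]; norm_num
      _ ≤ _ := by gcongr; linarith
  · simp only [id, Pi.pow_apply, Pi.add_apply]
    have e2 : e ^ 2 ≤ 1 := by nlinarith
    have w2 : w ^ 2 ≤ 4 := by nlinarith
    have h0 : e ^ 2 * w ^ 2 ≤ 1 * 4 := by gcongr
    have h00 : 0 ≤ e ^ 2 * w ^ 2 := by positivity
    set q := w + e ^ 2 * w ^ 2 / 4 - e / 2 with hq
    have q1 : -3 ≤ 1 + q := by linarith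
    have q2 : 1 + q ≤ 3 := by linarith
    have hpos := Real.exp_pos (-3 * w)
    have : (1 + q) * (2 * (f w * g w)) ≤ 3 * (f w ^ 2 + g w ^ 2) := by
      rcases le_total 0 (f w * g w) with h | h
      · nlinarith [sq_nonneg (f w - g w)]
      · nlinarith [sq_nonneg (f w + g w)]
    have e3 : ((2:ℕ) * f w ^ (2 - 1) * g w + (2:ℕ) * g w ^ (2 - 1) * (q * f w)) * Real.exp (-3 * w) +
      (f w ^ 2 + g w ^ 2) * (Real.exp (-3 * w) * (-3 * 1))
      = ((1 + q) * (2 * (f w * g w)) - 3 * (f w ^ 2 + g w ^ 2)) * Real.exp (-3 * w) := by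
      norm_num; ring
    rw [e3]
    exact mul_nonpos_of_nonpos_of_nonneg (by linarith) hpos.le

set_option maxHeartbeats 800000 in
lemma left_bound {e K : ℝ} {F G : ℝ → ℝ} (he : 0 ≤ e) (he1 : e ≤ 1) (hK : 0 ≤ K) {s : ℝ}
    (hs : 2 ≤ s) (hes : e ^ 2 * s ≤ 2)
    (hE : |Ef e F G s - 1 / Real.pi| ≤ K / (s * Real.sqrt s)) :
    |G s ^ 2 + (s - e ^ 2 * s ^ 2 / 4) * F s ^ 2
      - Real.sqrt (s - e ^ 2 * s ^ 2 / 4) / Real.pi| ≤ (4 * K + 4) / s := by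
  have hs0 : 0 < s := by linarith
  have hR2 := Rf_sq he hs0.le hes
  have hR1 := Rf_ge_one he hs hes
  have hQl := Qf_lower he hs0.le hes
  have hQu := Qf_upper (s := s) he1
  have hpi1 : 1 / Real.pi ≤ 1 := by
    rw [div_le_one Real.pi_pos]; linarith [Real.pi_gt_three]
  have hpi0 : 0 < 1 / Real.pi := by positivity
  set V := s - e ^ 2 * s ^ 2 / 4 with hV
  have hVQ : Qf e s = V + e / 2 := by unfold Qf; ring
  have hV0 : 0 ≤ V := by
    simp only [hV]; nlinarith [mul_nonneg hs0.le (sub_nonneg.2 hes)]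
  set σ := Real.sqrt s with hσ
  have hσ2 : σ ^ 2 = s := Real.sq_sqrt hs0.le
  have hσ0 : 0 < σ := Real.sqrt_pos.2 hs0
  have hVs : Real.sqrt V ^ 2 = V := Real.sq_sqrt hV0
  have hVs0 := Real.sqrt_nonneg V
  set W := Real.sqrt V with hW
  set R := Rf e s with hR
  have hR0 : 0 < R := by linarith
  have ER : Ef e F G s * R = G s ^ 2 + R ^ 2 * F s ^ 2 := by
    unfold Ef; field_simp
    rw [← hR]; field_simp
  have hE0 := Ef_nonneg (e := e) (F := F) (G := G) (s := s)
  set E := Ef e F G s with hEE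
  have R_up : R ≤ 2 * σ := by
    apply le_of_sq_le_sq _ (by positivity)
    nlinarith
  have R_lo : σ ≤ 2 * R := by
    apply le_of_sq_le_sq _ (by positivity)
    nlinarith
  have eσ : e * σ ≤ 2 := by
    apply le_of_sq_le_sq _ (by positivity)
    nlinarith
  have sσ : 1 ≤ s * σ := by
    have : 1 ≤ σ := by
      apply le_of_sq_le_sq _ (by positivity)
      nlinarith
    nlinarith
  have hE1 : E ≤ 1 + K := by
    have := (abs_le.1 hE).2
    have : K / (s * σ) ≤ K := div_le_self hK sσ
    linarith
  have t1 : |R * (E - 1 / Real.pi)| ≤ 2 * K / s := by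
    rw [abs_mul, abs_of_pos hR0]
    calc R * |E - 1 / Real.pi| ≤ 2 * σ * (K / (s * σ)) := by gcongr
      _ = _ := by field_simp
  have t2 : e / 2 * F s ^ 2 ≤ (2 * K + 2) / s := by
    have h1 : R * F s ^ 2 ≤ E := by
      simp only [hEE, Ef]
      have : 0 ≤ G s ^ 2 / Rf e s := by positivity
      linarith
    rw [le_div_iff₀ hs0]
    generalize F s = y at h1 ⊢
    have h2 : e / 2 * y ^ 2 * s = (e * σ) * (σ * y ^ 2) / 2 := by rw [← hσ2]; ring
    have h3 : (e * σ) * (σ * y ^ 2) / 2 ≤ 2 * (2 * R * y ^ 2) / 2 := by gcongr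
    rw [h2]
    refine h3.trans ?_
    have h4 : 2 * (2 * R * y ^ 2) / 2 = 2 * (R * y ^ 2) := by ring
    rw [h4]
    linarith
  have t3 : |(R - W) / Real.pi| ≤ 2 / s := by
    have hRW : (R - W) * (R + W) = e / 2 := by
      have : (R - W) * (R + W) = R ^ 2 - W ^ 2 := by ring
      rw [this, hR2, hVs, hVQ]; ring
    have hRW0 : 0 ≤ R - W := by
      rw [sub_nonneg]
      apply le_of_sq_le_sq _ hR0.le
      rw [hR2, hVs, hVQ]; linarith
    rw [abs_of_nonneg (by positivity), div_eq_mul_one_div, le_div_iff₀ hs0]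
    have : (R - W) * R ≤ e / 2 := by nlinarith [mul_nonneg hRW0 hVs0]
    have h2 : (R - W) * σ ≤ e := by nlinarith
    have h3 : (R - W) * s ≤ 2 := by
      rw [← hσ2]; nlinarith
    have h4 : 0 ≤ (R - W) * s := by positivity
    nlinarith
  have e1 : G s ^ 2 + V * F s ^ 2 - W / Real.pi =
      R * (E - 1 / Real.pi) - e / 2 * F s ^ 2 + (R - W) / Real.pi := by
    have : V = R ^ 2 - e / 2 := by linarith
    rw [this]
    have e2 : R * (E - 1 / Real.pi) = E * R - R / Real.pi := by ring
    rw [e2, ER]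
    ring
  rw [e1]
  have t4 : 0 ≤ e / 2 * F s ^ 2 := by positivity
  have e5 : (4 * K + 4) / s = 2 * K / s + (2 * K + 2) / s + 2 / s := by ring
  rw [e5]
  have t1' := abs_le.1 t1
  have t3' := abs_le.1 t3
  have p1 : 0 ≤ 2 * K / s := by positivity
  have p2 : 0 ≤ 2 / s := by positivity
  have p3 : 0 ≤ (2 * K + 2) / s := by positivity
  rw [abs_le]
  constructor <;> linarith [t1'.1, t1'.2, t3'.1, t3'.2]

noncomputable def rh (e x : ℝ) : ℝ :=
  if x < 0 then Real.sqrt (-x * (1 + e ^ 2 * x / 4)) / Real.pi else 0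

lemma rh_le {e x : ℝ} : 0 ≤ rh e x ∧ rh e x ≤ Real.sqrt |x| := by
  unfold rh
  split_ifs with h
  · constructor
    · positivity
    · have h1 : Real.sqrt (-x * (1 + e ^ 2 * x / 4)) ≤ Real.sqrt |x| := by
        apply Real.sqrt_le_sqrt
        rw [abs_of_neg h]
        nlinarith [mul_nonneg (sq_nonneg e) (sq_nonneg x)]
      refine le_trans (div_le_self (Real.sqrt_nonneg _) ?_) h1
      linarith [Real.pi_gt_three]
  · exact ⟨le_rfl, Real.sqrt_nonneg _⟩

theorem abs_main (K : ℝ) (hK : 0 ≤ K) : ∃ C : ℝ, 0 < C ∧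
    ∀ (e : ℝ) (f g : ℝ → ℝ), 0 ≤ e → e ≤ 1 →
    (∀ x, HasDerivAt f (g x) x) →
    (∀ x, HasDerivAt g ((x + e ^ 2 * x ^ 2 / 4 - e / 2) * f x) x) →
    Tendsto f atTop (nhds 0) → Tendsto g atTop (nhds 0) →
    Tendsto (fun x => x * f x) atTop (nhds 0) →
    (∀ s, 2 ≤ s → e ^ 2 * s ≤ 2 →
      |Ef e (fun s => f (-s)) (fun s => -g (-s)) s - 1 / Real.pi| ≤ K / (s * Real.sqrt s)) →
    (∀ x, e ^ 2 * (-x) ≤ 2 → x ≠ 0 →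
      |g x ^ 2 - (x + e ^ 2 * x ^ 2 / 4) * f x ^ 2 - rh e x| ≤ C / |x|) ∧
    (∀ x, e ^ 2 * (-x) ≤ 2 →
      g x ^ 2 - (x + e ^ 2 * x ^ 2 / 4) * f x ^ 2 ≤ C * Real.sqrt (|x| + 1)) := by
  set M := 2 * (1 + K) * Real.exp 9 with hM
  have hM0 : 0 < M := by positivity
  refine ⟨6 * M + 4 * K + 10, by positivity, ?_⟩
  intro e f g he he1 hf hg tf tg txf hE
  have hpi1 : 1 / Real.pi ≤ 1 := by
    rw [div_le_one Real.pi_pos]; linarith [Real.pi_gt_three]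
  have e2 : e ^ 2 ≤ 1 := by nlinarith
  have hU2 : f (-2) ^ 2 + g (-2) ^ 2 ≤ 2 * (1 + K) := by
    have h2 : e ^ 2 * 2 ≤ 2 := by linarith
    have h := (abs_le.1 (hE 2 le_rfl h2)).2
    have hR1 := Rf_ge_one he le_rfl h2
    have hR2 : Rf e 2 ≤ 2 := by
      apply le_of_sq_le_sq _ (by norm_num)
      rw [Rf_sq he (by norm_num) h2]
      have := Qf_upper (s := 2) he1
      linarith
    have hKs : K / (2 * Real.sqrt 2) ≤ K := by
      apply div_le_self hK
      have : 1 ≤ Real.sqrt 2 := by rw [Real.one_le_sqrt]; norm_num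
      linarith
    simp only [Ef] at h
    have h3 : (-g (-2)) ^ 2 / 2 ≤ (-g (-2)) ^ 2 / Rf e 2 := by gcongr
    have h4 : 1 * f (-2) ^ 2 ≤ Rf e 2 * f (-2) ^ 2 := by gcongr
    nlinarith [sq_nonneg (f (-2))]
  have hmid : ∀ x, -2 ≤ x → x ≤ 1 → f x ^ 2 + g x ^ 2 ≤ M := by
    intro x h1 h2
    refine (mid_bound he he1 hf hg h1 h2).trans ?_
    simp only [hM]; gcongr
  have hmid' : ∀ x, -2 ≤ x → x ≤ 1 →
      |g x ^ 2 - (x + e ^ 2 * x ^ 2 / 4) * f x ^ 2| ≤ 3 * M := by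
    intro x h1 h2
    have h3 := hmid x h1 h2
    have w2 : x ^ 2 ≤ 4 := by nlinarith
    have h0 : e ^ 2 * x ^ 2 ≤ 1 * 4 := by gcongr
    have h00 : 0 ≤ e ^ 2 * x ^ 2 := by positivity
    have v1 : x + e ^ 2 * x ^ 2 / 4 ≤ 3 := by linarith
    have v2 : -3 ≤ x + e ^ 2 * x ^ 2 / 4 := by linarith
    rw [abs_le]
    constructor <;> nlinarith [sq_nonneg (f x), sq_nonneg (g x)]
  have hright : ∀ x, 1 ≤ x → |g x ^ 2 - (x + e ^ 2 * x ^ 2 / 4) * f x ^ 2| ≤ 2 * M / x := by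
    intro x hx
    refine (right_bound he he1 hf hg tf tg txf hx).trans ?_
    have := hmid 1 (by norm_num) le_rfl
    gcongr
  have hleft : ∀ x, x ≤ -2 → e ^ 2 * (-x) ≤ 2 →
      |g x ^ 2 - (x + e ^ 2 * x ^ 2 / 4) * f x ^ 2 - rh e x| ≤ (4 * K + 4) / |x| := by
    intro x hx hex
    have := left_bound he he1 hK (by linarith) hex (hE (-x) (by linarith) hex)
    rw [abs_of_neg (show x < 0 by linarith)]
    unfold rh
    rw [if_pos (show x < 0 by linarith)]
    simp only [neg_neg] at this
    have e1 : -x * (1 + e ^ 2 * x / 4) = -x - e ^ 2 * (-x) ^ 2 / 4 := by ring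
    rw [e1]
    refine le_trans (le_of_eq ?_) this
    congr 1
    ring
  constructor
  · intro x hex hx0
    have hxp : 0 < |x| := abs_pos.2 hx0
    rcases le_total x (-2) with h | h
    · refine (hleft x h hex).trans ?_
      gcongr <;> linarith
    · rcases le_total x 1 with h1 | h1
      · have hx2 : |x| ≤ 2 := abs_le.2 ⟨h, by linarith⟩
        have r := rh_le (e := e) (x := x)
        have r2 : Real.sqrt |x| ≤ 2 := by
          rw [Real.sqrt_le_iff]; constructor <;> linarith
        have m := abs_le.1 (hmid' x h h1)
        rw [le_div_iff₀ hxp]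
        have : |g x ^ 2 - (x + e ^ 2 * x ^ 2 / 4) * f x ^ 2 - rh e x| ≤ 3 * M + 2 := by
          rw [abs_le]
          constructor <;> linarith [m.1, m.2, r.1, r.2]
        nlinarith [abs_nonneg (g x ^ 2 - (x + e ^ 2 * x ^ 2 / 4) * f x ^ 2 - rh e x)]
      · have : rh e x = 0 := by unfold rh; rw [if_neg (by linarith)]
        rw [this, sub_zero, abs_of_pos (show 0 < x by linarith)]
        refine (hright x h1).trans ?_
        gcongr; linarith
  · intro x hex
    have s1 : 1 ≤ Real.sqrt (|x| + 1) := by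
      rw [Real.one_le_sqrt]; linarith [abs_nonneg x]
    rcases le_total x (-2) with h | h
    · have h2 := (abs_le.1 (hleft x h hex)).2
      have hax : 2 ≤ |x| := by rw [abs_of_neg (by linarith)]; linarith
      have h3 : (4 * K + 4) / |x| ≤ 4 * K + 4 := div_le_self (by linarith) (by linarith)
      have h4 := rh_le (e := e) (x := x)
      have h5 : Real.sqrt |x| ≤ Real.sqrt (|x| + 1) := Real.sqrt_le_sqrt (by linarith)
      nlinarith
    · rcases le_total x 1 with h1 | h1
      · have m := abs_le.1 (hmid' x h h1)
        nlinarith [m.2]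
      · have m := abs_le.1 (hright x h1)
        have : 2 * M / x ≤ 2 * M := div_le_self (by linarith) h1
        nlinarith [m.2]

/-! ### Part 2: Hermite functions -/

noncomputable def Hm (n : ℕ) (X : ℝ) : ℝ := Polynomial.aeval X (Polynomial.hermite n)

lemma hermiteP_eq (m : ℕ) (x : ℝ) : hermiteP m x = Hm m x := by
  unfold hermiteP Hm
  rw [Polynomial.hermite_eq_deriv_gaussian', iteratedDeriv_eq_iterate]
  have : (fun t : ℝ => Real.exp (-t ^ 2 / 2)) = fun y => Real.exp (-(y ^ 2 / 2)) := by
    funext t; congr 1; ring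
  rw [this]
  ring

lemma Hm_hasDerivAt (n : ℕ) (X : ℝ) : HasDerivAt (Hm n) (X * Hm n X - Hm (n + 1) X) X := by
  have := (Polynomial.hermite n).hasDerivAt_aeval X
  refine HasDerivAt.congr_deriv this ?_
  unfold Hm
  rw [Polynomial.hermite_succ]
  simp

lemma derivative_hermite_succ (n : ℕ) :
    Polynomial.derivative (Polynomial.hermite (n + 1)) = ((n : Polynomial ℤ) + 1) * Polynomial.hermite n := by
  induction n with
  | zero => simp
  | succ n ih =>
    rw [Polynomial.hermite_succ (n + 1), Polynomial.derivative_sub, Polynomial.derivative_mul, ih,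
      Polynomial.derivative_mul]
    have h := Polynomial.hermite_succ n
    have : Polynomial.derivative ((n : Polynomial ℤ) + 1) = 0 := by simp
    rw [this, Polynomial.derivative_X]
    have h2 : Polynomial.derivative (Polynomial.hermite n)
      = Polynomial.X * Polynomial.hermite n - Polynomial.hermite (n + 1) := by rw [h]; ring
    rw [h2]
    push_cast
    ring

lemma Hm_rec (n : ℕ) (X : ℝ) : Hm (n + 2) X = X * Hm (n + 1) X - (n + 1) * Hm n X := by
  unfold Hm
  rw [Polynomial.hermite_succ (n + 1), derivative_hermite_succ]
  simp

lemma Hm_zero (X : ℝ) : Hm 0 X = 1 := by simp [Hm]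

lemma Hm_one (X : ℝ) : Hm 1 X = X := by simp [Hm]

lemma Hm_succ_hasDerivAt (n : ℕ) (X : ℝ) : HasDerivAt (Hm (n + 1)) ((n + 1) * Hm n X) X := by
  refine HasDerivAt.congr_deriv (Hm_hasDerivAt (n + 1) X) ?_
  rw [Hm_rec]; ring

lemma Hm_neg (n : ℕ) (X : ℝ) : Hm n (-X) = (-1) ^ n * Hm n X := by
  induction n using Nat.twoStepInduction with
  | zero => simp [Hm_zero]
  | one => simp [Hm_one]
  | more n h1 h2 =>
    rw [Hm_rec, Hm_rec, h1, h2]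
    ring

noncomputable def oscC (m : ℕ) : ℝ := (2 * Real.pi) ^ (-(1:ℝ)/4) * ((m.factorial : ℝ)) ^ (-(1:ℝ)/2)

lemma osc_eq (m : ℕ) (X : ℝ) : osc m X = oscC m * (Real.exp (-X ^ 2 / 4) * Hm m X) := by
  unfold osc oscC
  rw [hermiteP_eq]; ring

noncomputable def oscD (m : ℕ) (X : ℝ) : ℝ :=
  oscC m * (Real.exp (-X ^ 2 / 4) * (X / 2 * Hm m X - Hm (m + 1) X))

lemma gauss_hasDerivAt (X : ℝ) :
    HasDerivAt (fun X : ℝ => Real.exp (-X ^ 2 / 4)) (Real.exp (-X ^ 2 / 4) * (-X / 2)) X := by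
  refine HasDerivAt.congr_deriv ((((hasDerivAt_id X).pow 2).neg.div_const 4).exp) ?_
  simp only [id, Pi.pow_apply, Pi.neg_apply]
  push_cast
  ring

lemma osc_hasDerivAt (m : ℕ) (X : ℝ) : HasDerivAt (osc m) (oscD m X) X := by
  have : osc m = fun X => oscC m * (Real.exp (-X ^ 2 / 4) * Hm m X) := funext (osc_eq m)
  rw [this]
  refine HasDerivAt.congr_deriv
    (((gauss_hasDerivAt X).mul (Hm_hasDerivAt m X)).const_mul (oscC m)) ?_
  unfold oscD
  ring

lemma oscD_hasDerivAt (m : ℕ) (X : ℝ) :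
    HasDerivAt (oscD m) ((X ^ 2 / 4 - m - 1 / 2) * osc m X) X := by
  rw [osc_eq]
  unfold oscD
  refine HasDerivAt.congr_deriv
    (((gauss_hasDerivAt X).mul ((((hasDerivAt_id X).div_const 2).mul (Hm_hasDerivAt m X)).sub
      (Hm_succ_hasDerivAt m X))).const_mul (oscC m)) ?_
  simp only [id, Pi.mul_apply, Pi.sub_apply]
  ring

lemma osc_neg (m : ℕ) (X : ℝ) : osc m (-X) = (-1) ^ m * osc m X := by
  rw [osc_eq, osc_eq, Hm_neg]
  ring_nf

lemma oscD_neg (m : ℕ) (X : ℝ) : oscD m (-X) = -(-1) ^ m * oscD m X := by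
  unfold oscD
  rw [Hm_neg, Hm_neg]
  ring_nf

lemma gauss_poly_tendsto (P : Polynomial ℝ) :
    Tendsto (fun X => Real.exp (-X ^ 2 / 4) * P.eval X) atTop (nhds 0) := by
  have h := (P.tendsto_div_exp_atTop.abs).const_mul (Real.exp 1)
  simp only [abs_zero, mul_zero] at h
  refine squeeze_zero_norm (fun X => ?_) h
  rw [Real.norm_eq_abs, abs_mul, abs_div, abs_of_pos (Real.exp_pos _), abs_of_pos (Real.exp_pos _),
    div_eq_mul_inv |_|, ← Real.exp_neg, mul_comm |_| (Real.exp (-X)), ← mul_assoc, ← Real.exp_add]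
  gcongr
  nlinarith [sq_nonneg (X - 2)]

noncomputable def Hp (n : ℕ) : Polynomial ℝ := (Polynomial.hermite n).map (Int.castRingHom ℝ)

lemma Hm_eval (n : ℕ) (X : ℝ) : Hm n X = (Hp n).eval X := by
  unfold Hm Hp
  rw [Polynomial.eval_map, Polynomial.aeval_def]
  rfl

lemma osc_tendsto (m : ℕ) : Tendsto (osc m) atTop (nhds 0) := by
  have : osc m = fun X => Real.exp (-X ^ 2 / 4) * (Polynomial.C (oscC m) * Hp m).eval X := by
    funext X; rw [osc_eq, Hm_eval]; simp; ring
  rw [this]; exact gauss_poly_tendsto _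

lemma xosc_tendsto (m : ℕ) : Tendsto (fun X => X * osc m X) atTop (nhds 0) := by
  have : (fun X => X * osc m X) = fun X => Real.exp (-X ^ 2 / 4) *
      (Polynomial.C (oscC m) * Polynomial.X * Hp m).eval X := by
    funext X; rw [osc_eq, Hm_eval]; simp; ring
  rw [this]; exact gauss_poly_tendsto _

lemma oscD_tendsto (m : ℕ) : Tendsto (oscD m) atTop (nhds 0) := by
  have : oscD m = fun X => Real.exp (-X ^ 2 / 4) *
      (Polynomial.C (oscC m) * (Polynomial.C (1 / 2) * Polynomial.X * Hp m - Hp (m + 1))).eval X := by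
    funext X; unfold oscD; rw [Hm_eval, Hm_eval]; simp; ring
  rw [this]; exact gauss_poly_tendsto _

/-- Central value weights. -/
noncomputable def wc (m : ℕ) : ℝ := Hm (2 * m) 0 ^ 2 / (2 * m).factorial

lemma wc_succ (m : ℕ) : wc (m + 1) = (2 * m + 1) / (2 * m + 2) * wc m := by
  unfold wc
  have e1 : 2 * (m + 1) = 2 * m + 2 := by ring
  rw [e1, Hm_rec, Nat.factorial_succ, Nat.factorial_succ]
  have : (((2 * m).factorial : ℕ) : ℝ) ≠ 0 := by positivity
  have h2 : (2 * (m : ℝ) + 2) ≠ 0 := by positivity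
  have h3 : (2 * (m : ℝ) + 1) ≠ 0 := by positivity
  have h4 : (2 * (m : ℝ) + 1 + 1) ≠ 0 := by positivity
  push_cast
  field_simp
  ring

lemma Hm_odd_zero (m : ℕ) : Hm (2 * m + 1) 0 = 0 := by
  induction m with
  | zero => simp [Hm_one]
  | succ m ih =>
    have e1 : 2 * (m + 1) + 1 = (2 * m + 1) + 2 := by ring
    rw [e1, Hm_rec, ih]; simp

lemma wc_W (m : ℕ) : wc m ^ 2 * (Real.Wallis.W m * (2 * m + 1)) = 1 := by
  induction m with
  | zero => simp [wc, Hm_zero, Real.Wallis.W]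
  | succ m ih =>
    rw [wc_succ, Real.Wallis.W_succ]
    refine Eq.trans ?_ ih
    have h2 : (2 * (m : ℝ) + 2) ≠ 0 := by positivity
    have h3 : (2 * (m : ℝ) + 1) ≠ 0 := by positivity
    have h4 : (2 * (m : ℝ) + 3) ≠ 0 := by positivity
    push_cast
    field_simp
    ring

lemma wc_bounds (m : ℕ) : 2 ≤ Real.pi * (wc m ^ 2 * (2 * m + 1)) ∧
    Real.pi * (wc m ^ 2 * (2 * m + 1)) * (2 * m + 1) ≤ 2 * (2 * m + 2) := by
  have h1 := Real.Wallis.W_le m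
  have h2 := Real.Wallis.le_W m
  have h3 := wc_W m
  have h0 := Real.Wallis.W_pos m
  set W := Real.Wallis.W m
  set y := wc m ^ 2 * (2 * m + 1) with hy
  have hyW : y * W = 1 := by rw [← h3]; ring
  have hy0 : 0 ≤ y := by positivity
  rw [div_mul_eq_mul_div, div_le_iff₀ (by positivity)] at h2
  constructor
  · nlinarith
  · nlinarith

lemma oscC_sq (n : ℕ) : oscC n ^ 2 = ((2 * Real.pi) ^ (-(1:ℝ)/4)) ^ 2 / n.factorial := by
  unfold oscC
  rw [mul_pow, div_eq_mul_inv]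
  congr 1
  rw [← Real.rpow_mul_natCast (by positivity)]
  norm_num
  rw [Real.rpow_neg_one]

lemma P4 : (((2 * Real.pi) ^ (-(1:ℝ)/4)) ^ 2) ^ 2 = 1 / (2 * Real.pi) := by
  rw [← pow_mul, ← Real.rpow_mul_natCast (by positivity)]
  norm_num
  rw [Real.rpow_neg_one, mul_inv]
  ring

lemma close_of_sq {y δ : ℝ} (hy : 0 ≤ y) (h1 : 1 - δ ≤ y ^ 2) (h2 : y ^ 2 ≤ 1 + δ) :
    |y - 1| ≤ δ := by
  rw [abs_le]
  constructor
  · by_contra h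
    push Not at h
    nlinarith
  · by_contra h
    push Not at h
    nlinarith

noncomputable def E0 (n : ℕ) : ℝ :=
  oscD n 0 ^ 2 / Real.sqrt (n + 1 / 2) + Real.sqrt (n + 1 / 2) * osc n 0 ^ 2

lemma E0_eq (n : ℕ) : E0 n = ((2 * Real.pi) ^ (-(1:ℝ)/4)) ^ 2 *
    (Hm (n + 1) 0 ^ 2 / n.factorial / Real.sqrt (n + 1 / 2)
      + Real.sqrt (n + 1 / 2) * (Hm n 0 ^ 2 / n.factorial)) := by
  unfold E0 oscD
  rw [osc_eq]
  have h : ∀ y, (oscC n * y) ^ 2 = oscC n ^ 2 * y ^ 2 := fun y => by ring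
  rw [h, h, oscC_sq]
  norm_num
  ring

lemma E0_close {n : ℕ} (hn : 1 ≤ n) : |E0 n - 1 / Real.pi| ≤ 1 / n := by
  have hpi := Real.pi_pos
  have hn' : (1 : ℝ) ≤ n := by exact_mod_cast hn
  have key : |Real.pi * E0 n - 1| ≤ 1 / n := by
    have hE0 : 0 ≤ E0 n := by unfold E0; positivity
    have hr : Real.sqrt ((n : ℝ) + 1 / 2) ^ 2 = n + 1 / 2 := Real.sq_sqrt (by positivity)
    have hr0 : 0 < Real.sqrt ((n : ℝ) + 1 / 2) := Real.sqrt_pos.2 (by positivity)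
    have hmain : 1 - 1 / (n : ℝ) ≤ (Real.pi * E0 n) ^ 2 ∧ (Real.pi * E0 n) ^ 2 ≤ 1 + 1 / (n : ℝ) := by
      rcases Nat.even_or_odd' n with ⟨m, hm | hm⟩
      · have e1 : (Real.pi * E0 n) ^ 2 = Real.pi * (wc m ^ 2 * (2 * m + 1)) * (n + 1 / 2) / (2 * (n + 1)) := by
          rw [E0_eq]
          have : Hm (n + 1) 0 = 0 := by rw [hm]; exact Hm_odd_zero m
          rw [this]
          have h2 : Hm n 0 ^ 2 / n.factorial = wc m := by rw [hm]; rfl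
          rw [h2, mul_pow, mul_pow, P4]
          have h3 : (n : ℝ) = 2 * m := by rw [hm]; push_cast; ring
          simp only [ne_eq, OfNat.ofNat_ne_zero, not_false_eq_true, zero_pow, zero_div, zero_add]
          rw [mul_pow, hr, h3]
          field_simp
        obtain ⟨b1, b2⟩ := wc_bounds m
        have h3 : (2 : ℝ) * m = n := by rw [hm]; push_cast; ring
        rw [h3] at b1 b2 e1
        rw [e1]
        set y := Real.pi * (wc m ^ 2 * ((n : ℝ) + 1))
        have n0 : (0:ℝ) < n := by linarith
        constructor
        · rw [le_div_iff₀ (by positivity), sub_mul, one_div_mul_eq_div, sub_le_iff_le_add,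
            ← sub_le_iff_le_add', le_div_iff₀ n0]
          have p1 := mul_le_mul_of_nonneg_right b1 (show (0:ℝ) ≤ n * (n + 1 / 2) by positivity)
          nlinarith
        · have : y ≤ 2 * (n + 2) / (n + 1) := by rw [le_div_iff₀ (by positivity)]; exact b2
          calc y * (n + 1 / 2) / (2 * (n + 1)) ≤ (2 * (n + 2) / (n + 1)) * (n + 1 / 2) / (2 * (n + 1)) := by gcongr
            _ ≤ 1 + 1 / n := by
              rw [div_mul_eq_mul_div, div_div, one_add_div (by positivity)]
              rw [div_le_div_iff₀ (by positivity) (by positivity)]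
              nlinarith
      · have h3 : (2 : ℝ) * m + 1 = n := by rw [hm]; push_cast; ring
        have e1 : (Real.pi * E0 n) ^ 2 = Real.pi * (wc m ^ 2 * (2 * m + 1)) * n / (2 * (n + 1 / 2)) := by
          rw [E0_eq]
          have : Hm n 0 = 0 := by rw [hm]; exact Hm_odd_zero m
          rw [this]
          have h2 : Hm (n + 1) 0 ^ 2 / n.factorial = n * wc m := by
            have h4 := wc_succ m
            have h5 : Hm (n + 1) 0 ^ 2 = wc (m + 1) * ((n + 1) * n.factorial) := by
              unfold wc
              have : 2 * (m + 1) = n + 1 := by omega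
              rw [this, Nat.factorial_succ]
              push_cast
              field_simp
            rw [h5, h4]
            have h6 : (2 : ℝ) * m + 2 = n + 1 := by linarith
            rw [h3, h6]
            field_simp
          rw [h2, mul_pow, mul_pow, P4]
          simp only [ne_eq, OfNat.ofNat_ne_zero, not_false_eq_true, zero_pow, zero_div, add_zero, mul_zero]
          rw [div_pow, hr, h3]
          field_simp
        obtain ⟨b1, b2⟩ := wc_bounds m
        have h4 : (2 : ℝ) * m + 2 = n + 1 := by linarith
        rw [h4] at b2
        rw [h3] at b1 b2 e1
        rw [e1]
        set y := Real.pi * (wc m ^ 2 * (n : ℝ))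
        have n0 : (0:ℝ) < n := by linarith
        constructor
        · rw [le_div_iff₀ (by positivity), sub_mul, one_div_mul_eq_div, sub_le_iff_le_add,
            ← sub_le_iff_le_add', le_div_iff₀ n0]
          have p1 := mul_le_mul_of_nonneg_right b1 (show (0:ℝ) ≤ n * n by positivity)
          nlinarith
        · rw [div_le_iff₀ (by positivity), one_add_div (by positivity), div_mul_eq_mul_div, le_div_iff₀ n0]
          nlinarith
    exact close_of_sq (by positivity) hmain.1 hmain.2
  have : E0 n - 1 / Real.pi = (Real.pi * E0 n - 1) / Real.pi := by field_simp
  rw [this, abs_div, abs_of_pos hpi]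
  refine (div_le_self (abs_nonneg _) ?_).trans key
  linarith [Real.pi_gt_three]

noncomputable def kn (n : ℕ) : ℝ := (n : ℝ) ^ (-(1:ℝ)/6)

lemma kn_facts {n : ℕ} (hn : 1 ≤ n) : 0 < kn n ∧ kn n ≤ 1 ∧ kn n ^ 6 * n = 1 ∧
    Real.sqrt n * kn n ^ 3 = 1 ∧ (n : ℝ) ^ ((2:ℝ)/3) * kn n ^ 4 = 1 ∧
    ((n : ℝ) ^ ((1:ℝ)/12)) ^ 2 * kn n = 1 := by
  have hn' : (1 : ℝ) ≤ n := by exact_mod_cast hn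
  have n0 : (0 : ℝ) < n := by linarith
  have hp : ∀ j : ℕ, kn n ^ j = (n : ℝ) ^ (-(1:ℝ)/6 * j) := by
    intro j
    unfold kn
    rw [← Real.rpow_mul_natCast n0.le]
  refine ⟨Real.rpow_pos_of_pos n0 _, Real.rpow_le_one_of_one_le_of_nonpos hn' (by norm_num), ?_, ?_, ?_, ?_⟩
  · rw [hp]
    nth_rewrite 2 [← Real.rpow_one (n : ℝ)]
    rw [← Real.rpow_add n0]
    norm_num
  · rw [hp, Real.sqrt_eq_rpow, ← Real.rpow_add n0]
    norm_num
  · rw [hp, ← Real.rpow_add n0]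
    norm_num
  · unfold kn
    rw [← Real.rpow_mul_natCast n0.le, ← Real.rpow_add n0]
    norm_num

noncomputable def psiD (n : ℕ) (x : ℝ) : ℝ :=
  (n : ℝ) ^ ((1:ℝ)/12) * kn n * oscD n (2 * Real.sqrt n + kn n * x)

lemma psiN_eq (n : ℕ) (x : ℝ) :
    psiN n x = (n : ℝ) ^ ((1:ℝ)/12) * osc n (2 * Real.sqrt n + kn n * x) := rfl

lemma aff_hasDerivAt (n : ℕ) (x : ℝ) :
    HasDerivAt (fun x : ℝ => 2 * Real.sqrt n + kn n * x) (kn n) x := by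
  simpa using ((hasDerivAt_id x).const_mul (kn n)).const_add (2 * Real.sqrt n)

lemma psiN_hasDerivAt (n : ℕ) (x : ℝ) : HasDerivAt (psiN n) (psiD n x) x := by
  have := ((osc_hasDerivAt n (2 * Real.sqrt n + kn n * x)).comp x (aff_hasDerivAt n x)).const_mul
    ((n : ℝ) ^ ((1:ℝ)/12))
  refine HasDerivAt.congr_deriv this ?_
  unfold psiD
  ring

lemma psiD_hasDerivAt {n : ℕ} (hn : 1 ≤ n) (x : ℝ) : HasDerivAt (psiD n)
    ((x + (kn n ^ 2) ^ 2 * x ^ 2 / 4 - kn n ^ 2 / 2) * psiN n x) x := by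
  obtain ⟨k0, k1, h1, h2, h3, h4⟩ := kn_facts hn
  have := ((oscD_hasDerivAt n (2 * Real.sqrt n + kn n * x)).comp x (aff_hasDerivAt n x)).const_mul
    ((n : ℝ) ^ ((1:ℝ)/12) * kn n)
  refine HasDerivAt.congr_deriv this ?_
  rw [psiN_eq]
  have hs : Real.sqrt n ^ 2 = n := Real.sq_sqrt (by positivity)
  set r := Real.sqrt (n : ℝ)
  set k := kn n
  have key : k ^ 2 * ((2 * r + k * x) ^ 2 / 4 - n - 1 / 2) = x + (k ^ 2) ^ 2 * x ^ 2 / 4 - k ^ 2 / 2 := by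
    have : k ^ 2 * ((2 * r + k * x) ^ 2 / 4 - n - 1 / 2)
      = k ^ 2 * (r ^ 2 - n) + (r * k ^ 3) * x + (k ^ 2) ^ 2 * x ^ 2 / 4 - k ^ 2 / 2 := by ring
    rw [this, hs, h2]; ring
  rw [← key]
  ring

lemma rhoN_eq {n : ℕ} (hn : 1 ≤ n) (x : ℝ) :
    rhoN n x = psiD n x ^ 2 - (x + (kn n ^ 2) ^ 2 * x ^ 2 / 4) * psiN n x ^ 2 := by
  obtain ⟨k0, k1, h1, h2, h3, h4⟩ := kn_facts hn
  unfold rhoN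
  rw [(psiN_hasDerivAt n x).deriv]
  have : (n : ℝ) ^ ((2:ℝ)/3) = (kn n ^ 4)⁻¹ := eq_inv_of_mul_eq_one_left h3
  rw [this]
  field_simp
  ring

lemma rhoN_reflect {n : ℕ} (hn : 1 ≤ n) (x : ℝ) :
    rhoN n (-(4 * (n : ℝ) ^ ((2:ℝ)/3)) - x) = rhoN n x := by
  obtain ⟨k0, k1, h1, h2, h3, h4⟩ := kn_facts hn
  rw [rhoN_eq hn, rhoN_eq hn]
  unfold psiD
  rw [psiN_eq, psiN_eq]
  set N := (n : ℝ) ^ ((2:ℝ)/3)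
  have hNr : kn n * N = Real.sqrt n := by
    have : kn n ^ 3 * (kn n * N) = kn n ^ 3 * Real.sqrt n := by
      rw [mul_comm (kn n ^ 3) (Real.sqrt n), h2, ← h3]; ring
    exact mul_left_cancel₀ (by positivity) this
  have e1 : 2 * Real.sqrt n + kn n * (-(4 * N) - x) = -(2 * Real.sqrt n + kn n * x) := by
    rw [← hNr]; ring
  rw [e1, osc_neg, oscD_neg]
  have hs : ((-1 : ℝ) ^ n) ^ 2 = 1 := by rw [← pow_mul, mul_comm, pow_mul]; norm_num
  have e2 : -(4 * N) - x + (kn n ^ 2) ^ 2 * (-(4 * N) - x) ^ 2 / 4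
      = x + (kn n ^ 2) ^ 2 * x ^ 2 / 4 := by
    have : -(4 * N) - x + (kn n ^ 2) ^ 2 * (-(4 * N) - x) ^ 2 / 4
      = -(4 * N) - x + (N * kn n ^ 4) * (4 * N + 2 * x) + (kn n ^ 2) ^ 2 * x ^ 2 / 4 := by ring
    rw [this, h3]; ring
  rw [e2]
  have e3 : ∀ a y : ℝ, (a * (-(-1) ^ n * y)) ^ 2 = ((-1 : ℝ) ^ n) ^ 2 * (a * y) ^ 2 := by intros; ring
  have e4 : ∀ a y : ℝ, (a * ((-1) ^ n * y)) ^ 2 = ((-1 : ℝ) ^ n) ^ 2 * (a * y) ^ 2 := by intros; ring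
  rw [e3, e4, hs]
  ring

lemma rhoHatN_eq {n : ℕ} (hn : 1 ≤ n) {x : ℝ} (hx : -(2 * (n : ℝ) ^ ((2:ℝ)/3)) ≤ x) :
    rhoHatN n x = rh (kn n ^ 2) x := by
  obtain ⟨k0, k1, h1, h2, h3, h4⟩ := kn_facts hn
  have hN : 0 < (n : ℝ) ^ ((2:ℝ)/3) := Real.rpow_pos_of_pos (by exact_mod_cast hn) _
  unfold rhoHatN rh
  have h5 : -(4 * (n : ℝ) ^ ((2:ℝ)/3)) < x := by linarith
  simp only [h5, true_and]
  have : (n : ℝ) ^ ((2:ℝ)/3) = (kn n ^ 4)⁻¹ := eq_inv_of_mul_eq_one_left h3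
  rw [this]
  have e1 : x / (4 * (kn n ^ 4)⁻¹) = (kn n ^ 2) ^ 2 * x / 4 := by
    field_simp
  rw [e1]

lemma aff_tendsto {n : ℕ} (hn : 1 ≤ n) :
    Tendsto (fun x : ℝ => 2 * Real.sqrt n + kn n * x) atTop atTop :=
  tendsto_atTop_add_const_left _ _ (tendsto_id.const_mul_atTop (kn_facts hn).1)

lemma psiN_tendsto {n : ℕ} (hn : 1 ≤ n) : Tendsto (psiN n) atTop (nhds 0) := by
  have := ((osc_tendsto n).comp (aff_tendsto hn)).const_mul ((n : ℝ) ^ ((1:ℝ)/12))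
  rw [mul_zero] at this; exact this

lemma psiD_tendsto {n : ℕ} (hn : 1 ≤ n) : Tendsto (psiD n) atTop (nhds 0) := by
  have := ((oscD_tendsto n).comp (aff_tendsto hn)).const_mul ((n : ℝ) ^ ((1:ℝ)/12) * kn n)
  rw [mul_zero] at this; exact this

lemma xpsiN_tendsto {n : ℕ} (hn : 1 ≤ n) : Tendsto (fun x => x * psiN n x) atTop (nhds 0) := by
  obtain ⟨k0, k1, h1, h2, h3, h4⟩ := kn_facts hn
  have := ((((xosc_tendsto n).comp (aff_tendsto hn)).const_mul ((n : ℝ) ^ ((1:ℝ)/12))).sub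
    ((psiN_tendsto hn).const_mul (2 * Real.sqrt n))).const_mul (kn n)⁻¹
  simp only [mul_zero, sub_zero] at this
  refine this.congr (fun x => ?_)
  rw [psiN_eq]
  simp only [Function.comp]
  field_simp
  ring

lemma center_energy {n : ℕ} (hn : 1 ≤ n) :
    Ef (kn n ^ 2) (fun s => psiN n (-s)) (fun s => -psiD n (-s)) (2 * (n : ℝ) ^ ((2:ℝ)/3)) = E0 n := by
  obtain ⟨k0, k1, h1, h2, h3, h4⟩ := kn_facts hn
  unfold Ef psiD E0
  simp only [psiN_eq]
  have hNr : kn n * (n : ℝ) ^ ((2:ℝ)/3) = Real.sqrt n := by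
    have : kn n ^ 3 * (kn n * (n : ℝ) ^ ((2:ℝ)/3)) = kn n ^ 3 * Real.sqrt n := by
      rw [mul_comm (kn n ^ 3) (Real.sqrt n), h2, ← h3]; ring
    exact mul_left_cancel₀ (by positivity) this
  set N := (n : ℝ) ^ ((2:ℝ)/3)
  have e1 : 2 * Real.sqrt n + kn n * (-(2 * N)) = 0 := by
    rw [← hNr]; ring
  rw [e1]
  have eR : Rf (kn n ^ 2) (2 * N) = kn n * Real.sqrt (n + 1 / 2) := by
    unfold Rf Qf
    have hNk : N = kn n ^ 2 * n := by
      have : kn n ^ 4 * N = kn n ^ 4 * (kn n ^ 2 * n) := by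
        rw [mul_comm, h3, ← h1]; ring
      exact mul_left_cancel₀ (by positivity) this
    have : 2 * N - (kn n ^ 2) ^ 2 * (2 * N) ^ 2 / 4 + kn n ^ 2 / 2 = kn n ^ 2 * (n + 1 / 2) := by
      have h5 : 2 * N - (kn n ^ 2) ^ 2 * (2 * N) ^ 2 / 4 + kn n ^ 2 / 2
        = 2 * N - (N * kn n ^ 4) * N + kn n ^ 2 / 2 := by ring
      rw [h5, h3, hNk]; ring
    rw [this, Real.sqrt_mul (by positivity), Real.sqrt_sq k0.le]
  rw [eR]
  have hr0 : 0 < Real.sqrt ((n : ℝ) + 1 / 2) := Real.sqrt_pos.2 (by positivity)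
  set r := Real.sqrt ((n : ℝ) + 1 / 2)
  set a := (n : ℝ) ^ ((1:ℝ)/12)
  have e2 : (-(a * kn n * oscD n 0)) ^ 2 / (kn n * r) = (a ^ 2 * kn n) * (oscD n 0 ^ 2 / r) := by
    field_simp
  have e3 : kn n * r * (a * osc n 0) ^ 2 = (a ^ 2 * kn n) * (r * osc n 0 ^ 2) := by ring
  rw [e2, e3, h4]; ring

lemma Bf_le' {e s : ℝ} (he : 0 ≤ e) (hs : 2 ≤ s) (hes : e ^ 2 * s ≤ 2) :
    Bf e s ≤ 4 / (s * Real.sqrt s) := by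
  refine (Bf_le he hs hes).trans ?_
  have hs0 : 0 < s := by linarith
  have hσ0 : 0 < Real.sqrt s := Real.sqrt_pos.2 hs0
  have hσ2 : Real.sqrt s ^ 2 = s := Real.sq_sqrt hs0.le
  have hR1 := Rf_ge_one he hs hes
  have R_lo : Real.sqrt s ≤ 2 * Rf e s := by
    apply le_of_sq_le_sq _ (by positivity)
    rw [mul_pow, Rf_sq he hs0.le hes, hσ2]
    have := Qf_lower he hs0.le hes
    linarith
  have h3 : Real.sqrt s ^ 3 ≤ (2 * Rf e s) ^ 3 := by gcongr
  have h4 : s * Real.sqrt s = Real.sqrt s ^ 3 := by rw [pow_succ, hσ2]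
  rw [h4, div_le_div_iff₀ (by positivity) (by positivity)]
  nlinarith

lemma neg_ode {e : ℝ} {f g : ℝ → ℝ} (hf : ∀ x, HasDerivAt f (g x) x)
    (hg : ∀ x, HasDerivAt g ((x + e ^ 2 * x ^ 2 / 4 - e / 2) * f x) x) :
    (∀ s, HasDerivAt (fun s => f (-s)) (-g (-s)) s) ∧
    (∀ s, HasDerivAt (fun s => -g (-s)) (-Qf e s * f (-s)) s) := by
  constructor
  · intro s
    have := (hf (-s)).comp s (hasDerivAt_neg s)
    refine HasDerivAt.congr_deriv this ?_
    ring
  · intro s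
    have := ((hg (-s)).comp s (hasDerivAt_neg s)).neg
    refine HasDerivAt.congr_deriv this ?_
    unfold Qf
    ring

lemma hermite_energy {n : ℕ} (hn : 1 ≤ n) {s : ℝ} (hs : 2 ≤ s) (hes : (kn n ^ 2) ^ 2 * s ≤ 2) :
    |Ef (kn n ^ 2) (fun s => psiN n (-s)) (fun s => -psiD n (-s)) s - 1 / Real.pi|
      ≤ 48 / (s * Real.sqrt s) := by
  obtain ⟨k0, k1, h1, h2, h3, h4⟩ := kn_facts hn
  set e := kn n ^ 2 with he
  have e0 : 0 ≤ e := by positivity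
  have e1 : e ≤ 1 := pow_le_one₀ k0.le k1
  set N := (n : ℝ) ^ ((2:ℝ)/3) with hN
  have heN : e ^ 2 * (2 * N) = 2 := by
    have : e ^ 2 * (2 * N) = 2 * (N * kn n ^ 4) := by rw [he]; ring
    rw [this, h3]; ring
  have sN : s ≤ 2 * N := by
    have : 0 < e ^ 2 := by positivity
    by_contra h
    push Not at h
    have := mul_lt_mul_of_pos_left h this
    linarith
  obtain ⟨hF, hG⟩ := neg_ode (psiN_hasDerivAt n) (psiD_hasDerivAt hn)
  have hB : Bf e (2 * N) = 0 := by
    unfold Bf; rw [heN]; norm_num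
  have hT : Tf e (fun s => psiN n (-s)) (fun s => -psiD n (-s)) (2 * N) = E0 n := by
    unfold Tf; rw [hB, center_energy hn]; ring
  have hE0 : 0 ≤ E0 n := by unfold E0; positivity
  obtain ⟨m1, m2⟩ := energy_mono hF hG e0 hs sN heN.le
  rw [hB, hT] at m1 m2
  simp only [neg_zero, Real.exp_zero, mul_one] at m1 m2
  have hclose := Ef_close e0 hE0 hs hes m1 m2
  have hE0c := E0_close hn
  have hn' : (1 : ℝ) ≤ n := by exact_mod_cast hn
  have hE0u : E0 n ≤ 2 := by
    have h5 := (abs_le.1 hE0c).2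
    have : 1 / (n : ℝ) ≤ 1 := by rw [div_le_one (by linarith)]; exact hn'
    have hpi1 : 1 / Real.pi ≤ 1 := by
      rw [div_le_one Real.pi_pos]; linarith [Real.pi_gt_three]
    linarith
  have hB1 := Bf_le' e0 hs hes
  have hs0 : 0 < s := by linarith
  have hσ0 : 0 < Real.sqrt s := Real.sqrt_pos.2 hs0
  have hσ2 : Real.sqrt s ^ 2 = s := Real.sq_sqrt hs0.le
  have hn3 : 1 / (n : ℝ) ≤ 8 / (s * Real.sqrt s) := by
    have : 1 / (n : ℝ) = e ^ 3 := by
      rw [div_eq_iff (by positivity), ← h1, he]; ring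
    rw [this, le_div_iff₀ (by positivity)]
    have h4 : s * Real.sqrt s = Real.sqrt s ^ 3 := by rw [pow_succ, hσ2]
    rw [h4, ← mul_pow]
    have eσ : e * Real.sqrt s ≤ 2 := by
      apply le_of_sq_le_sq _ (by positivity)
      rw [mul_pow, hσ2]; linarith
    calc (e * Real.sqrt s) ^ 3 ≤ 2 ^ 3 := by gcongr
      _ = 8 := by norm_num
  have hfin : 5 * E0 n * Bf e s ≤ 40 / (s * Real.sqrt s) := by
    have b0 := Bf_nonneg e0 hs hes
    calc 5 * E0 n * Bf e s ≤ 5 * 2 * (4 / (s * Real.sqrt s)) := by gcongr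
      _ = _ := by ring
  have : (48 : ℝ) / (s * Real.sqrt s) = 40 / (s * Real.sqrt s) + 8 / (s * Real.sqrt s) := by ring
  rw [this]
  refine (abs_sub_le _ (E0 n) _).trans ?_
  linarith


/-- Integrand of the contour representation of the Airy function and its derivatives. -/
noncomputable def gz (k : ℕ) (x : ℝ) (z : ℂ) : ℂ :=
  (Complex.I * z) ^ k * Complex.exp (Complex.I * (z ^ 3 / 3 + x * z))

lemma gz_diff (k : ℕ) (x : ℝ) : Differentiable ℂ (gz k x) := by
  unfold gz; fun_prop

lemma gz_cont (k : ℕ) (x : ℝ) : Continuous (gz k x) := (gz_diff k x).continuous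

lemma gz_norm (k : ℕ) (x : ℝ) (z : ℂ) :
    ‖gz k x z‖ = ‖z‖ ^ k * Real.exp (-(z.re ^ 2 * z.im - z.im ^ 3 / 3 + x * z.im)) := by
  unfold gz
  rw [norm_mul, norm_pow, norm_mul, Complex.norm_I, one_mul, Complex.norm_exp]
  congr 2
  have : z ^ 3 / 3 = z ^ 3 * ((1 / 3 : ℝ) : ℂ) := by push_cast; ring
  rw [this]
  simp [pow_succ]
  ring

lemma gz_imag (k : ℕ) (x y : ℝ) : (Complex.I * gz k x (Complex.I * y)).re = 0 := by
  have : gz k x (Complex.I * y) = (((-y) ^ k * Real.exp (y ^ 3 / 3 - x * y) : ℝ) : ℂ) := by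
    unfold gz
    push_cast
    have h1 : Complex.I * (Complex.I * (y:ℂ)) = -y := by
      rw [← mul_assoc, Complex.I_mul_I]; ring
    rw [h1]
    congr 2
    linear_combination ((y:ℂ) ^ 3 / 3 * (Complex.I ^ 2 - 1) + x * y) * Complex.I_sq
  rw [this, Complex.mul_re, Complex.ofReal_re, Complex.ofReal_im, Complex.I_re]
  ring

lemma prim_exists (k : ℕ) (x : ℝ) : ∃ F : ℂ → ℂ, ∀ z, HasDerivAt F (gz k x z) z := by
  obtain ⟨F, hF⟩ := (gz_diff k x).isExactOn_univ
  exact ⟨F, fun z => hF z (mem_univ z)⟩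

lemma prim_line {k : ℕ} {x : ℝ} {F : ℂ → ℂ} (hF : ∀ z, HasDerivAt F (gz k x z) z) (p q : ℂ)
    (t : ℝ) : HasDerivAt (fun t : ℝ => F (p + q * t)) (q * gz k x (p + q * t)) t := by
  have h1 : HasDerivAt (fun t : ℝ => p + q * (t:ℂ)) q t := by
    have := ((Complex.ofRealCLM.hasDerivAt (x := t)).const_mul q).const_add p
    simpa using this
  have := (hF (p + q * t)).comp t h1
  rw [mul_comm]; exact this

lemma prim_ftc {k : ℕ} {x : ℝ} {F : ℂ → ℂ} (hF : ∀ z, HasDerivAt F (gz k x z) z) (p q : ℂ)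
    (a b : ℝ) : ∫ t in a..b, q * gz k x (p + q * t) = F (p + q * b) - F (p + q * a) := by
  refine intervalIntegral.integral_eq_sub_of_hasDerivAt (fun t _ => prim_line hF p q t) ?_
  apply Continuous.intervalIntegrable
  have := gz_cont k x
  fun_prop

lemma prim_imag {k : ℕ} {x : ℝ} {F : ℂ → ℂ} (hF : ∀ z, HasDerivAt F (gz k x z) z) (y : ℝ) :
    (F (Complex.I * y)).re = (F 0).re := by
  have hd : ∀ t : ℝ, HasDerivAt (fun t : ℝ => (F (0 + Complex.I * t)).re) 0 t := by
    intro t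
    have h := prim_line hF 0 Complex.I t
    have h2 := (Complex.reCLM.hasFDerivAt.comp_hasDerivAt t h)
    have e : Complex.reCLM (Complex.I * gz k x (0 + Complex.I * t)) = 0 := by
      rw [zero_add]; exact gz_imag k x t
    rw [e] at h2
    exact h2
  have := is_const_of_deriv_eq_zero (fun t => (hd t).differentiableAt) (fun t => (hd t).deriv) y 0
  simpa using this

lemma gz_shift_bound (k : ℕ) (x t : ℝ) (ht : 0 ≤ t) :
    ‖gz k x (Complex.I + (1:ℂ) * t)‖ ≤ k.factorial * Real.exp (7 / 3 - x) * Real.exp (-t) := by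
  rw [gz_norm]
  have hn : ‖Complex.I + (1:ℂ) * t‖ ≤ 1 + t := by
    refine (norm_add_le _ _).trans ?_
    simp [abs_of_nonneg ht]
  have hp : ‖Complex.I + (1:ℂ) * t‖ ^ k ≤ k.factorial * Real.exp (1 + t) := by
    have h := Real.pow_div_factorial_le_exp (1 + t) (by linarith) k
    rw [div_le_iff₀ (by positivity)] at h
    calc _ ≤ (1 + t) ^ k := by gcongr
      _ ≤ _ := by linarith
  have hre : (Complex.I + (1:ℂ) * t).re = t := by simp
  have him : (Complex.I + (1:ℂ) * t).im = 1 := by simp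
  rw [hre, him]
  calc _ ≤ k.factorial * Real.exp (1 + t) * Real.exp (-(t ^ 2 * 1 - 1 ^ 3 / 3 + x * 1)) := by gcongr
    _ = k.factorial * Real.exp (1 + t + -(t ^ 2 * 1 - 1 ^ 3 / 3 + x * 1)) := by
        rw [mul_assoc, ← Real.exp_add]
    _ ≤ k.factorial * Real.exp (7 / 3 - x + -t) := by
        refine mul_le_mul_of_nonneg_left (Real.exp_le_exp.2 ?_) (by positivity)
        nlinarith [sq_nonneg (t - 1)]
    _ = _ := by rw [Real.exp_add]; ring

lemma exp_neg_int : IntegrableOn (fun t : ℝ => Real.exp (-t)) (Ioi 0) := by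
  simpa using exp_neg_integrableOn_Ioi 0 (b := 1) one_pos

/-- Contour integral for the `k`-th derivative of the Airy function (up to `1/π` and real part). -/
noncomputable def Jk (k : ℕ) (x : ℝ) : ℂ := ∫ t in Ioi (0:ℝ), gz k x (Complex.I + (1:ℂ) * t)

lemma gz_shift_cont (k : ℕ) (x : ℝ) : Continuous (fun t : ℝ => gz k x (Complex.I + (1:ℂ) * t)) := by
  have := gz_cont k x
  fun_prop

lemma gz_shift_int (k : ℕ) (x : ℝ) :
    IntegrableOn (fun t : ℝ => gz k x (Complex.I + (1:ℂ) * t)) (Ioi 0) := by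
  refine Integrable.mono' (exp_neg_int.const_mul (k.factorial * Real.exp (7 / 3 - x)))
    (gz_shift_cont k x).aestronglyMeasurable ?_
  filter_upwards [ae_restrict_mem measurableSet_Ioi] with t ht
  exact gz_shift_bound k x t (le_of_lt ht)

lemma Jk_bound (k : ℕ) (x : ℝ) : ‖Jk k x‖ ≤ k.factorial * Real.exp (7 / 3 - x) := by
  have h := norm_integral_le_of_norm_le (μ := volume.restrict (Ioi (0:ℝ)))
    (f := fun t : ℝ => gz k x (Complex.I + (1:ℂ) * t))
    (exp_neg_int.const_mul (k.factorial * Real.exp (7 / 3 - x))) (by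
      filter_upwards [ae_restrict_mem measurableSet_Ioi] with t ht
      exact gz_shift_bound k x t (le_of_lt ht))
  rw [integral_const_mul, integral_exp_neg_Ioi_zero, mul_one] at h
  exact h

lemma gz_hasDerivAt (k : ℕ) (x : ℝ) (z : ℂ) : HasDerivAt (fun x => gz k x z) (gz (k+1) x z) x := by
  unfold gz
  have h1 : HasDerivAt (fun x : ℝ => Complex.I * (z ^ 3 / 3 + (x:ℂ) * z)) (Complex.I * z) x := by
    have := (((Complex.ofRealCLM.hasDerivAt (x := x)).mul_const z).const_add (z^3/3)).const_mul
      Complex.I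
    simpa using this
  have := h1.cexp.const_mul ((Complex.I * z) ^ k)
  refine this.congr_deriv ?_
  ring

lemma Jk_hasDerivAt (k : ℕ) (x : ℝ) : HasDerivAt (Jk k) (Jk (k+1) x) x := by
  have hs : Ioi (x - 1) ∈ nhds x := Ioi_mem_nhds (by linarith)
  refine (hasDerivAt_integral_of_dominated_loc_of_deriv_le
    (μ := volume.restrict (Ioi (0:ℝ)))
    (F := fun x (t:ℝ) => gz k x (Complex.I + (1:ℂ) * t))
    (F' := fun x (t:ℝ) => gz (k+1) x (Complex.I + (1:ℂ) * t))
    (bound := fun t => (k+1).factorial * Real.exp (7 / 3 - (x - 1)) * Real.exp (-t))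
    hs (Eventually.of_forall fun y => (gz_shift_cont k y).aestronglyMeasurable)
    (gz_shift_int k x) (gz_shift_cont (k+1) x).aestronglyMeasurable ?_
    (exp_neg_int.const_mul _) ?_).2
  · filter_upwards [ae_restrict_mem measurableSet_Ioi] with t ht y hy
    refine (gz_shift_bound (k+1) y t (le_of_lt ht)).trans ?_
    have : x - 1 < y := hy
    gcongr
  · exact Eventually.of_forall fun t y _ => gz_hasDerivAt k y _

lemma Jk_ode (x : ℝ) : (Jk 2 x).re = x * (Jk 0 x).re := by
  have hd : ∀ t : ℝ, HasDerivAt (fun t : ℝ => gz 0 x (Complex.I + (1:ℂ) * t))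
      (-Complex.I * (gz 2 x (Complex.I + (1:ℂ) * t) - x * gz 0 x (Complex.I + (1:ℂ) * t))) t := by
    intro t
    have h0 : HasDerivAt (fun t : ℝ => Complex.I + (1:ℂ) * (t:ℂ)) 1 t := by
      have := (((Complex.ofRealCLM.hasDerivAt (x := t)).const_mul (1:ℂ)).const_add Complex.I)
      simpa using this
    have h1 := (((h0.pow 3).div_const 3).add (h0.const_mul (x:ℂ))).const_mul Complex.I
    have h2 := h1.cexp
    have e : (fun t : ℝ => gz 0 x (Complex.I + (1:ℂ) * t)) = fun t : ℝ =>
      Complex.exp (Complex.I * ((Complex.I + (1:ℂ) * (t:ℂ)) ^ 3 / 3 + x * (Complex.I + (1:ℂ) * t))) := by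
      funext t; unfold gz; simp
    rw [e]
    refine h2.congr_deriv ?_
    unfold gz
    simp only [Pi.add_apply, Pi.pow_apply]
    set z : ℂ := Complex.I + (1:ℂ) * t
    set E := Complex.exp (Complex.I * (z ^ 3 / 3 + x * z))
    push_cast
    linear_combination (E * z ^ 2 * Complex.I) * Complex.I_sq
  have hintg := ((gz_shift_int 2 x).sub ((gz_shift_int 0 x).const_mul (x:ℂ))).const_mul (-Complex.I)
  have hlim : Tendsto (fun t : ℝ => gz 0 x (Complex.I + (1:ℂ) * t)) atTop (nhds 0) := by
    refine squeeze_zero_norm' (a := fun t => ((0:ℕ).factorial * Real.exp (7 / 3 - x)) * Real.exp (-t)) ?_ ?_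
    · filter_upwards [eventually_ge_atTop 0] with t ht
      exact gz_shift_bound 0 x t ht
    · have := (Real.tendsto_exp_neg_atTop_nhds_zero).const_mul ((0:ℕ).factorial * Real.exp (7 / 3 - x))
      rw [mul_zero] at this; exact this
  have h := integral_Ioi_of_hasDerivAt_of_tendsto' (a := 0) (fun t _ => hd t) hintg hlim
  have e1 : ∫ t in Ioi (0:ℝ), (-Complex.I * (gz 2 x (Complex.I + (1:ℂ) * t) - x * gz 0 x (Complex.I + (1:ℂ) * t)))
      = -Complex.I * (Jk 2 x - x * Jk 0 x) := by
    rw [integral_const_mul, integral_sub (gz_shift_int 2 x) ((gz_shift_int 0 x).const_mul (x:ℂ)),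
      integral_const_mul]
    rfl
  rw [e1] at h
  have h3 := congrArg (fun z => (Complex.I * z).re) h
  have e2 : Complex.I * (-Complex.I * (Jk 2 x - x * Jk 0 x)) = Jk 2 x - x * Jk 0 x := by
    linear_combination (-(Jk 2 x - x * Jk 0 x)) * Complex.I_sq
  have e3 : (Complex.I * (0 - gz 0 x (Complex.I + (1:ℂ) * (0:ℝ)))).re = 0 := by
    have := gz_imag 0 x 1
    simp only [Complex.ofReal_one, mul_one] at this
    simp only [Complex.ofReal_zero, mul_zero, add_zero, zero_sub, mul_neg, Complex.neg_re, this, neg_zero]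
  simp only [e2] at h3
  rw [e3] at h3
  simp at h3
  linarith

lemma prim_shift_tendsto {k : ℕ} {x : ℝ} {F : ℂ → ℂ} (hF : ∀ z, HasDerivAt F (gz k x z) z) :
    Tendsto (fun b : ℝ => F (Complex.I + (1:ℂ) * b)) atTop (nhds (F Complex.I + Jk k x)) := by
  have h := (intervalIntegral_tendsto_integral_Ioi 0 (gz_shift_int k x) tendsto_id).const_add (F Complex.I)
  refine h.congr (fun b => ?_)
  have := prim_ftc hF Complex.I 1 0 b
  simp only [one_mul, Complex.ofReal_zero, add_zero] at this
  simp only [id, one_mul, this]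
  ring

lemma cos_int_eq {x : ℝ} {F : ℂ → ℂ} (hF : ∀ z, HasDerivAt F (gz 0 x z) z) (b : ℝ) :
    ∫ t in (0:ℝ)..b, Real.cos (t ^ 3 / 3 + x * t) = (F b).re - (F 0).re := by
  have h := prim_ftc hF 0 1 0 b
  simp only [one_mul, zero_add, Complex.ofReal_zero] at h
  have hi : IntervalIntegrable (fun t : ℝ => gz 0 x t) volume 0 b := by
    apply Continuous.intervalIntegrable
    exact (gz_cont 0 x).comp Complex.continuous_ofReal
  have h2 := Complex.reCLM.intervalIntegral_comp_comm hi
  rw [h] at h2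
  rw [← Complex.sub_re]
  refine Eq.trans ?_ h2
  congr 1
  funext t
  unfold gz
  have : Complex.I * ((t:ℂ) ^ 3 / 3 + x * t) = ((t ^ 3 / 3 + x * t : ℝ) : ℂ) * Complex.I := by
    push_cast; ring
  rw [pow_zero, one_mul, this]
  exact (Complex.exp_ofReal_mul_I_re _).symm

lemma vert_tendsto (x : ℝ) {F : ℂ → ℂ} (hF : ∀ z, HasDerivAt F (gz 0 x z) z) :
    Tendsto (fun b : ℝ => F (Complex.I + (1:ℂ) * b) - F b) atTop (nhds 0) := by
  have h : Tendsto (fun b : ℝ => ∫ y in (0:ℝ)..1, Complex.I * gz 0 x (b + Complex.I * y)) atTop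
      (nhds (∫ y in (0:ℝ)..1, (0:ℂ))) := by
    refine intervalIntegral.tendsto_integral_filter_of_dominated_convergence
      (fun _ => Real.exp (1 / 3 + |x|)) ?_ ?_ intervalIntegrable_const ?_
    · refine Eventually.of_forall fun b => Continuous.aestronglyMeasurable ?_
      have := gz_cont 0 x
      fun_prop
    · refine Eventually.of_forall fun b => Eventually.of_forall fun y hy => ?_
      rw [uIoc_of_le zero_le_one] at hy
      rw [norm_mul, Complex.norm_I, one_mul, gz_norm, pow_zero, one_mul]
      simp only [Complex.add_re, Complex.ofReal_re, Complex.mul_re, Complex.I_re, Complex.I_im,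
        Complex.ofReal_im, Complex.add_im, Complex.mul_im]
      apply Real.exp_le_exp.2
      have y0 := hy.1
      have y1 := hy.2
      have h3 : y ^ 3 ≤ 1 := pow_le_one₀ y0.le y1
      have h4 : -(x * y) ≤ |x| := by
        refine (neg_le_abs _).trans ?_
        rw [abs_mul, abs_of_pos y0]
        nlinarith [abs_nonneg x]
      have h5 : 0 ≤ b ^ 2 * y := by positivity
      ring_nf at h3 h4 h5 ⊢
      linarith
    · refine Eventually.of_forall fun y hy => ?_
      rw [uIoc_of_le zero_le_one] at hy
      have y0 := hy.1
      rw [tendsto_zero_iff_norm_tendsto_zero]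
      have e : (fun b : ℝ => ‖Complex.I * gz 0 x (b + Complex.I * y)‖) = fun b : ℝ =>
          Real.exp (-(b ^ 2 * y + (- y ^ 3 / 3 + x * y))) := by
        funext b
        rw [norm_mul, Complex.norm_I, one_mul, gz_norm, pow_zero, one_mul]
        simp only [Complex.add_re, Complex.ofReal_re, Complex.mul_re, Complex.I_re, Complex.I_im,
          Complex.ofReal_im, Complex.add_im, Complex.mul_im]
        congr 1; ring
      rw [e]
      refine Real.tendsto_exp_neg_atTop_nhds_zero.comp ?_
      refine tendsto_atTop_add_const_right _ _ ?_
      exact (tendsto_pow_atTop two_ne_zero).atTop_mul_const y0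
  simp only [intervalIntegral.integral_zero] at h
  refine h.congr (fun b => ?_)
  rw [prim_ftc hF (b:ℂ) Complex.I 0 1]
  simp [add_comm]

lemma Ai_eq (x : ℝ) : Ai x = (1 / Real.pi) * (Jk 0 x).re := by
  unfold Ai
  obtain ⟨F, hF⟩ := prim_exists 0 x
  congr 1
  apply Tendsto.limUnder_eq
  have h1 : Tendsto (fun b : ℝ => F b) atTop (nhds (F Complex.I + Jk 0 x)) := by
    have := (prim_shift_tendsto hF).sub (vert_tendsto x hF)
    rw [sub_zero] at this
    refine this.congr (fun b => by ring)
  have h2 := ((Complex.continuous_re.tendsto _).comp h1).sub_const (F 0).re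
  have h3 := prim_imag hF 1
  simp only [Complex.ofReal_one, mul_one] at h3
  have e : (F Complex.I + Jk 0 x).re - (F 0).re = (Jk 0 x).re := by
    rw [Complex.add_re, h3]; ring
  rw [e] at h2
  refine h2.congr (fun b => ?_)
  rw [cos_int_eq hF b]; rfl

lemma Jre_hasDerivAt (k : ℕ) (x : ℝ) :
    HasDerivAt (fun x => (1 / Real.pi) * (Jk k x).re) ((1 / Real.pi) * (Jk (k+1) x).re) x :=
  (Complex.reCLM.hasFDerivAt.comp_hasDerivAt x (Jk_hasDerivAt k x)).const_mul _

lemma Ai_fun : Ai = fun x => (1 / Real.pi) * (Jk 0 x).re := funext Ai_eq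

/-- The derivative of the Airy function in contour form. -/
noncomputable def AiD (x : ℝ) : ℝ := (1 / Real.pi) * (Jk 1 x).re

lemma Ai_hasDerivAt (x : ℝ) : HasDerivAt Ai (AiD x) x := by
  rw [Ai_fun]; exact Jre_hasDerivAt 0 x

lemma AiD_hasDerivAt (x : ℝ) : HasDerivAt AiD (x * Ai x) x := by
  have := Jre_hasDerivAt 1 x
  rw [show (1 / Real.pi) * (Jk (1+1) x).re = x * Ai x by rw [Jk_ode, Ai_eq]; ring] at this
  exact this

lemma Jre_bound (k : ℕ) (x : ℝ) : |(1 / Real.pi) * (Jk k x).re| ≤ k.factorial * Real.exp (7/3) * Real.exp (-x) := by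
  rw [abs_mul]
  have h1 : |1 / Real.pi| ≤ 1 := by
    rw [abs_of_pos (by positivity), div_le_one Real.pi_pos]; linarith [Real.pi_gt_three]
  have h2 := (Complex.abs_re_le_norm (Jk k x)).trans (Jk_bound k x)
  rw [sub_eq_add_neg, Real.exp_add, ← mul_assoc] at h2
  calc _ ≤ 1 * |(Jk k x).re| := by gcongr
    _ ≤ _ := by rw [one_mul]; exact h2

lemma Jre_tendsto (k : ℕ) : Tendsto (fun x => (1 / Real.pi) * (Jk k x).re) atTop (nhds 0) := by
  refine squeeze_zero_norm (Jre_bound k) ?_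
  have := Real.tendsto_exp_neg_atTop_nhds_zero.const_mul (k.factorial * Real.exp (7/3))
  rw [mul_zero] at this; exact this

lemma Ai_tendsto : Tendsto Ai atTop (nhds 0) := by rw [Ai_fun]; exact Jre_tendsto 0

lemma AiD_tendsto : Tendsto AiD atTop (nhds 0) := Jre_tendsto 1

lemma xAi_tendsto : Tendsto (fun x => x * Ai x) atTop (nhds 0) := by
  refine squeeze_zero_norm' (a := fun x => Real.exp (7/3) * (x ^ 1 * Real.exp (-x))) ?_ ?_
  · filter_upwards [eventually_ge_atTop 0] with x hx
    have h := Jre_bound 0 x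
    rw [← Ai_eq] at h
    rw [norm_mul, Real.norm_eq_abs, Real.norm_eq_abs, abs_of_nonneg hx]
    simp only [Nat.factorial_zero, Nat.cast_one, one_mul] at h
    calc x * |Ai x| ≤ x * (Real.exp (7/3) * Real.exp (-x)) := by gcongr
      _ = _ := by ring
  · have := (Real.tendsto_pow_mul_exp_neg_atTop_nhds_zero 1).const_mul (Real.exp (7/3))
    rw [mul_zero] at this; exact this


/-- Rescaled steepest-descent integrand. -/
noncomputable def Mi (k : ℕ) (h : ℝ) (u : ℝ) : ℂ :=
  (1 + (1 + Complex.I) * u * h) ^ k *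
    Complex.exp (-2 * u ^ 2 - (2/3) * (1 + Complex.I) * u ^ 3 * h)

lemma Mi_cont (k : ℕ) (h : ℝ) : Continuous (Mi k h) := by
  unfold Mi; fun_prop

lemma Mi_bound (k : ℕ) (h u : ℝ) (h0 : 0 ≤ h) (h1 : h ≤ 1) (hu : -1 ≤ u * h) :
    ‖Mi k h u‖ ≤ k.factorial * Real.exp 4 * Real.exp (-1 * u ^ 2) := by
  unfold Mi
  rw [norm_mul, norm_pow, Complex.norm_exp]
  have hn : ‖1 + (1 + Complex.I) * u * h‖ ≤ 1 + 2 * |u| := by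
    have hI : ‖(1 + Complex.I : ℂ)‖ ≤ 2 := by
      refine (norm_add_le _ _).trans ?_
      simp; norm_num
    refine (norm_add_le _ _).trans ?_
    rw [norm_one, norm_mul, norm_mul, Complex.norm_real, Complex.norm_real, Real.norm_eq_abs,
      Real.norm_eq_abs, abs_of_nonneg h0]
    have : ‖(1 + Complex.I : ℂ)‖ * |u| * h ≤ 2 * |u| * 1 := by gcongr
    linarith
  have hp : ‖1 + (1 + Complex.I) * u * h‖ ^ k ≤ k.factorial * Real.exp (1 + 2 * |u|) := by
    have h := Real.pow_div_factorial_le_exp (1 + 2 * |u|) (by positivity) k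
    rw [div_le_iff₀ (by positivity)] at h
    calc _ ≤ (1 + 2 * |u|) ^ k := by gcongr
      _ ≤ _ := by linarith
  have hre : (-2 * (u:ℂ) ^ 2 - (2/3) * (1 + Complex.I) * u ^ 3 * h).re
      = -2 * u ^ 2 - (2/3) * u ^ 3 * h := by
    have : (-2 * (u:ℂ) ^ 2 - (2/3) * (1 + Complex.I) * u ^ 3 * h)
      = ((-2 * u ^ 2 - (2/3) * u ^ 3 * h : ℝ) : ℂ) + ((-(2/3) * u ^ 3 * h : ℝ) : ℂ) * Complex.I := by
      push_cast; ring
    rw [this]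
    simp only [Complex.add_re, Complex.ofReal_re, Complex.re_ofReal_mul, Complex.I_re]
    ring
  rw [hre]
  calc _ ≤ k.factorial * Real.exp (1 + 2 * |u|) * Real.exp (-2 * u ^ 2 - (2/3) * u ^ 3 * h) := by gcongr
    _ = k.factorial * Real.exp (1 + 2 * |u| + (-2 * u ^ 2 - (2/3) * u ^ 3 * h)) := by
        rw [mul_assoc, ← Real.exp_add]
    _ ≤ k.factorial * Real.exp (4 + -1 * u ^ 2) := by
        refine mul_le_mul_of_nonneg_left (Real.exp_le_exp.2 ?_) (by positivity)
        have a1 : u ^ 2 * (-1) ≤ u ^ 2 * (u * h) := mul_le_mul_of_nonneg_left hu (sq_nonneg u)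
        have a2 : |u| ^ 2 = u ^ 2 := sq_abs u
        nlinarith [sq_nonneg (|u| - 3)]
    _ = _ := by rw [Real.exp_add]; ring

lemma gauss_int : Integrable (fun u : ℝ => Real.exp (-1 * u ^ 2)) := integrable_exp_neg_mul_sq one_pos

/-- Steepest-descent integral. -/
noncomputable def Mk (k : ℕ) (d : ℝ) : ℂ := ∫ u in Ioi (-d ^ 3), Mi k (1 / d ^ 3) u

lemma Mi_bound_d {k : ℕ} {d : ℝ} (hd : 1 ≤ d) {u : ℝ} (hu : u ∈ Ioi (-d ^ 3)) :
    ‖Mi k (1 / d ^ 3) u‖ ≤ k.factorial * Real.exp 4 * Real.exp (-1 * u ^ 2) := by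
  have d3 : 1 ≤ d ^ 3 := one_le_pow₀ hd
  have hu' : -d ^ 3 < u := hu
  refine Mi_bound k _ u (by positivity) ?_ ?_
  · rw [div_le_one (by positivity)]; exact d3
  · rw [mul_one_div, le_div_iff₀ (by positivity)]; linarith

lemma Mi_int (k : ℕ) {d : ℝ} (hd : 1 ≤ d) : IntegrableOn (Mi k (1 / d ^ 3)) (Ioi (-d ^ 3)) := by
  refine Integrable.mono' ((gauss_int.const_mul (k.factorial * Real.exp 4)).integrableOn)
    (Mi_cont k _).aestronglyMeasurable ?_
  filter_upwards [ae_restrict_mem measurableSet_Ioi] with u hu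
  exact Mi_bound_d hd hu

lemma Mk_tendsto (k : ℕ) : Tendsto (Mk k) atTop (nhds ((Real.sqrt (Real.pi / 2) : ℝ) : ℂ)) := by
  have e : ((Real.sqrt (Real.pi / 2) : ℝ) : ℂ) = ∫ u : ℝ, ((Real.exp (-2 * u ^ 2) : ℝ) : ℂ) := by
    rw [← integral_gaussian 2]
    exact (integral_ofReal (𝕜 := ℂ)).symm
  rw [e]
  have h : Tendsto (fun d : ℝ => ∫ u : ℝ, (Ioi (-d ^ 3)).indicator (Mi k (1 / d ^ 3)) u) atTop
      (nhds (∫ u : ℝ, ((Real.exp (-2 * u ^ 2) : ℝ) : ℂ))) := by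
    refine tendsto_integral_filter_of_dominated_convergence
      (fun u => k.factorial * Real.exp 4 * Real.exp (-1 * u ^ 2)) ?_ ?_
      (gauss_int.const_mul _) ?_
    · exact Eventually.of_forall fun d =>
        (Mi_cont k _).aestronglyMeasurable.indicator measurableSet_Ioi
    · filter_upwards [eventually_ge_atTop 1] with d hd
      refine Eventually.of_forall fun u => ?_
      by_cases hu : u ∈ Ioi (-d ^ 3)
      · rw [indicator_of_mem hu]; exact Mi_bound_d hd hu
      · rw [indicator_of_notMem hu, norm_zero]; positivity
    · refine Eventually.of_forall fun u => ?_
      have hc : Tendsto (fun h : ℝ => Mi k h u) (nhds 0) (nhds (Mi k 0 u)) := by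
        have : Continuous (fun h : ℝ => Mi k h u) := by unfold Mi; fun_prop
        exact this.tendsto 0
      have h0 : Mi k 0 u = ((Real.exp (-2 * u ^ 2) : ℝ) : ℂ) := by
        unfold Mi; simp
      have hd0 : Tendsto (fun d : ℝ => 1 / d ^ 3) atTop (nhds 0) :=
        tendsto_const_nhds.div_atTop (tendsto_pow_atTop three_ne_zero)
      rw [← h0]
      refine (hc.comp hd0).congr' ?_
      have : Tendsto (fun d : ℝ => d ^ 3) atTop atTop := tendsto_pow_atTop three_ne_zero
      filter_upwards [this.eventually (eventually_gt_atTop (-u))] with d hd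
      rw [indicator_of_mem (by simp only [mem_Ioi]; linarith)]; rfl
  refine h.congr (fun d => ?_)
  rw [integral_indicator measurableSet_Ioi]; rfl

lemma gz_contour (k : ℕ) {d : ℝ} (hd : 1 ≤ d) (u : ℝ) :
    gz k (-d ^ 4) ((d:ℂ) ^ 2 + ((1 + Complex.I) / d) * u)
      = (Complex.I * d ^ 2) ^ k * Complex.exp (((-(2/3) * d ^ 6 : ℝ) : ℂ) * Complex.I) *
        Mi k (1 / d ^ 3) u := by
  have hd0 : (d:ℂ) ≠ 0 := by
    have : d ≠ 0 := by linarith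
    exact_mod_cast this
  unfold gz Mi
  have e1 : Complex.I * ((d:ℂ) ^ 2 + ((1 + Complex.I) / d) * u)
      = (Complex.I * d ^ 2) * (1 + (1 + Complex.I) * u * ((1 / d ^ 3 : ℝ) : ℂ)) := by
    push_cast; field_simp
  have e2 : Complex.I * (((d:ℂ) ^ 2 + ((1 + Complex.I) / d) * u) ^ 3 / 3
        + ((-d ^ 4 : ℝ) : ℂ) * ((d:ℂ) ^ 2 + ((1 + Complex.I) / d) * u))
      = ((-(2/3) * d ^ 6 : ℝ) : ℂ) * Complex.I
        + (-2 * u ^ 2 - (2/3) * (1 + Complex.I) * u ^ 3 * ((1 / d ^ 3 : ℝ) : ℂ)) := by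
    have hI3 : (1 + Complex.I) ^ 3 = -2 + 2 * Complex.I := by
      linear_combination (3 + Complex.I) * Complex.I_sq
    have hI2 : (1 + Complex.I) ^ 2 = 2 * Complex.I := by
      linear_combination Complex.I_sq
    have e3 : Complex.I * (((d:ℂ) ^ 2 + ((1 + Complex.I) / d) * u) ^ 3 / 3
        + ((-d ^ 4 : ℝ) : ℂ) * ((d:ℂ) ^ 2 + ((1 + Complex.I) / d) * u))
        = Complex.I * (-(2/3) * d ^ 6 + (1 + Complex.I) ^ 2 * u ^ 2
          + (1 + Complex.I) ^ 3 * u ^ 3 / (3 * d ^ 3)) := by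
      push_cast; field_simp; ring
    rw [e3, hI2, hI3]
    push_cast
    linear_combination (2 * (u:ℂ) ^ 2 + 2 * u ^ 3 / (3 * d ^ 3)) * Complex.I_sq
  rw [e1, e2, mul_pow, Complex.exp_add]
  ring

lemma far_tendsto (k : ℕ) {d : ℝ} (hd : 1 ≤ d) {F : ℂ → ℂ}
    (hF : ∀ z, HasDerivAt F (gz k (-d ^ 4) z) z) :
    Tendsto (fun b : ℝ => F ((b:ℂ) + Complex.I * ((b - d ^ 2 : ℝ) : ℂ)) - F (Complex.I + (1:ℂ) * b))
      atTop (nhds 0) := by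
  refine squeeze_zero_norm' (a := fun b : ℝ => 2 ^ (k+1) * ((b ^ 2) ^ (k+1) * Real.exp (-(1/3) * b ^ 2))) ?_ ?_
  · filter_upwards [eventually_ge_atTop (1 + d ^ 2), eventually_ge_atTop (3 * d ^ 4)] with b hb hb2
    have d1 : 1 ≤ d ^ 2 := one_le_pow₀ hd
    have b2 : 2 ≤ b := by linarith
    have hI : ∀ y ∈ Icc 1 b, ‖Complex.I * gz k (-d ^ 4) ((b:ℂ) + Complex.I * (y:ℂ))‖
        ≤ (2 * b) ^ k * Real.exp (-(1/3) * b ^ 2) := by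
      intro y hy
      obtain ⟨y1, y2⟩ := hy
      rw [norm_mul, Complex.norm_I, one_mul, gz_norm]
      have hn : ‖(b:ℂ) + Complex.I * (y:ℂ)‖ ≤ 2 * b := by
        refine (norm_add_le _ _).trans ?_
        rw [norm_mul, Complex.norm_I, one_mul, Complex.norm_real, Complex.norm_real,
          Real.norm_eq_abs, Real.norm_eq_abs, abs_of_nonneg (by linarith), abs_of_nonneg (by linarith)]
        linarith
      have hre : ((b:ℂ) + Complex.I * (y:ℂ)).re = b := by simp
      have him : ((b:ℂ) + Complex.I * (y:ℂ)).im = y := by simp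
      rw [hre, him]
      gcongr
      have h1 : y ^ 2 ≤ b ^ 2 := by gcongr
      have h2 : 3 * d ^ 4 ≤ b ^ 2 := by nlinarith
      have h3 : 0 ≤ y * (b ^ 2 - y ^ 2) := mul_nonneg (by linarith) (by linarith)
      have h4 : 0 ≤ y * (b ^ 2 - 3 * d ^ 4) := mul_nonneg (by linarith) (by linarith)
      have h5 : 0 ≤ (y - 1) * b ^ 2 := mul_nonneg (by linarith) (by positivity)
      nlinarith
    have hmv := (convex_Icc 1 b).norm_image_sub_le_of_norm_hasDerivWithin_le
      (f := fun y : ℝ => F ((b:ℂ) + Complex.I * (y:ℂ)))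
      (fun y _ => (prim_line hF (b:ℂ) Complex.I y).hasDerivWithinAt) hI
      (x := 1) (y := b - d ^ 2) ⟨le_rfl, by linarith⟩ ⟨by linarith, by linarith⟩
    have e : F ((b:ℂ) + Complex.I * ((1:ℝ):ℂ)) = F (Complex.I + (1:ℂ) * b) := by
      congr 1; push_cast; ring
    simp only [e] at hmv
    refine hmv.trans ?_
    rw [Real.norm_eq_abs, abs_of_nonneg (by linarith)]
    calc (2 * b) ^ k * Real.exp (-(1/3) * b ^ 2) * (b - d ^ 2 - 1)
        ≤ (2 * b) ^ k * Real.exp (-(1/3) * b ^ 2) * (2 * b) := by gcongr; linarith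
      _ = (2 * b) ^ (k+1) * Real.exp (-(1/3) * b ^ 2) := by ring
      _ ≤ (2 * b ^ 2) ^ (k+1) * Real.exp (-(1/3) * b ^ 2) := by gcongr; nlinarith
      _ = _ := by rw [mul_pow]; ring
  · have h1 : Tendsto (fun t : ℝ => t ^ (k+1) * Real.exp (-(1/3) * t)) atTop (nhds 0) := by
      have := tendsto_rpow_mul_exp_neg_mul_atTop_nhds_zero (k+1 : ℕ) (1/3) (by norm_num)
      simpa only [Real.rpow_natCast] using this
    have h2 : Tendsto (fun b : ℝ => b ^ 2) atTop atTop := tendsto_pow_atTop two_ne_zero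
    have := (h1.comp h2).const_mul (2 ^ (k+1))
    rw [mul_zero] at this
    exact this

lemma Jk_contour (k : ℕ) {d : ℝ} (hd : 1 ≤ d) :
    (Jk k (-d ^ 4)).re = (((1 + Complex.I) / d) * ((Complex.I * d ^ 2) ^ k *
      Complex.exp (((-(2/3) * d ^ 6 : ℝ) : ℂ) * Complex.I) * Mk k d)).re := by
  obtain ⟨F, hF⟩ := prim_exists k (-d ^ 4)
  have hd0 : 0 < d := by linarith
  have hd0c : (d:ℂ) ≠ 0 := by exact_mod_cast hd0.ne'
  set A : ℂ := (Complex.I * d ^ 2) ^ k * Complex.exp (((-(2/3) * d ^ 6 : ℝ) : ℂ) * Complex.I) with hA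
  have h1 : Tendsto (fun U : ℝ => F ((d:ℂ) ^ 2 + ((1 + Complex.I) / d) * U)
      - F ((d:ℂ) ^ 2 + ((1 + Complex.I) / d) * ((-d ^ 3 : ℝ) : ℂ))) atTop
      (nhds (((1 + Complex.I) / d) * (A * Mk k d))) := by
    have h := ((intervalIntegral_tendsto_integral_Ioi (-d ^ 3) (Mi_int k hd) tendsto_id).const_mul A).const_mul
      ((1 + Complex.I) / d)
    refine h.congr (fun U => ?_)
    rw [← prim_ftc hF ((d:ℂ) ^ 2) ((1 + Complex.I) / d) (-d ^ 3) U,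
      ← intervalIntegral.integral_const_mul, ← intervalIntegral.integral_const_mul]
    congr 1
    funext u
    rw [gz_contour k hd]
  have h2 : Tendsto (fun b : ℝ => F ((b:ℂ) + Complex.I * ((b - d ^ 2 : ℝ) : ℂ))) atTop
      (nhds (F Complex.I + Jk k (-d ^ 4))) := by
    have := (prim_shift_tendsto hF).add (far_tendsto k hd hF)
    rw [add_zero] at this
    exact this.congr (fun b => by ring)
  have h3 : Tendsto (fun U : ℝ => d ^ 2 + U / d) atTop atTop :=
    tendsto_atTop_add_const_left _ _ (tendsto_id.atTop_div_const hd0)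
  have h4 : Tendsto (fun U : ℝ => F ((d:ℂ) ^ 2 + ((1 + Complex.I) / d) * U)) atTop
      (nhds (F Complex.I + Jk k (-d ^ 4))) := by
    refine (h2.comp h3).congr (fun U => ?_)
    simp only [Function.comp]
    congr 1
    push_cast
    field_simp
    ring
  have h5 := tendsto_nhds_unique h1 (h4.sub_const _)
  have e1 : (d:ℂ) ^ 2 + ((1 + Complex.I) / d) * ((-d ^ 3 : ℝ) : ℂ) = Complex.I * ((-d ^ 2 : ℝ) : ℂ) := by
    push_cast; field_simp; ring
  rw [h5, e1, Complex.sub_re, Complex.add_re, prim_imag hF]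
  have := prim_imag hF 1
  rw [Complex.ofReal_one, mul_one] at this
  rw [this]; ring

lemma energy_limit : Tendsto (fun d : ℝ => (d * Ai (-d ^ 4)) ^ 2 + (AiD (-d ^ 4) / d) ^ 2) atTop
    (nhds (1 / Real.pi)) := by
  set c : ℝ := Real.sqrt (Real.pi / 2) with hc
  have hc2 : c ^ 2 = Real.pi / 2 := Real.sq_sqrt (by positivity)
  have hc0 : 0 ≤ c := Real.sqrt_nonneg _
  have t0 : Tendsto (fun d => ‖Mk 0 d - c‖) atTop (nhds 0) := by
    have := ((Mk_tendsto 0).sub_const (c:ℂ)).norm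
    rw [← hc, sub_self, norm_zero] at this
    exact this
  have t1 : Tendsto (fun d => ‖Mk 1 d - c‖) atTop (nhds 0) := by
    have := ((Mk_tendsto 1).sub_const (c:ℂ)).norm
    rw [← hc, sub_self, norm_zero] at this
    exact this
  have tb : Tendsto (fun d => (1 / Real.pi ^ 2) * (4 * c * (2 * ‖Mk 0 d - c‖) + (2 * ‖Mk 0 d - c‖) ^ 2
      + 4 * c * (2 * ‖Mk 1 d - c‖) + (2 * ‖Mk 1 d - c‖) ^ 2)) atTop (nhds 0) := by
    have := ((((t0.const_mul 2).const_mul (4*c)).add ((t0.const_mul 2).pow 2)).add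
      ((t1.const_mul 2).const_mul (4*c))).add ((t1.const_mul 2).pow 2) |>.const_mul (1 / Real.pi ^ 2)
    simpa using this
  rw [tendsto_iff_norm_sub_tendsto_zero]
  refine squeeze_zero' (Eventually.of_forall fun d => norm_nonneg _) ?_ tb
  filter_upwards [eventually_ge_atTop 1] with d hd
  have hd0 : 0 < d := by linarith
  have hd0c : (d:ℂ) ≠ 0 := by exact_mod_cast hd0.ne'
  set ζ : ℂ := (1 + Complex.I) * Complex.exp (((-(2/3) * d ^ 6 : ℝ) : ℂ) * Complex.I) with hζ
  have hζn : ζ.re ^ 2 + ζ.im ^ 2 = 2 := by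
    have h1 : Complex.normSq ζ = 2 := by
      rw [hζ, Complex.normSq_mul, Complex.normSq_eq_norm_sq (Complex.exp _),
        Complex.norm_exp_ofReal_mul_I, Complex.normSq_apply]
      simp; norm_num
    rw [Complex.normSq_apply] at h1
    linarith
  have hζ2 : ‖ζ‖ ≤ 2 := by
    have : ‖ζ‖ ^ 2 = 2 := by
      rw [← Complex.normSq_eq_norm_sq, Complex.normSq_apply]; linarith
    nlinarith [norm_nonneg ζ]
  have a0 : d * (Jk 0 (-d ^ 4)).re = c * ζ.re + (ζ * (Mk 0 d - c)).re := by
    rw [Jk_contour 0 hd, ← Complex.re_ofReal_mul]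
    have : (d:ℂ) * (((1 + Complex.I) / d) * ((Complex.I * d ^ 2) ^ 0 *
      Complex.exp (((-(2/3) * d ^ 6 : ℝ) : ℂ) * Complex.I) * Mk 0 d)) = (c:ℂ) * ζ + ζ * (Mk 0 d - c) := by
      rw [hζ]; field_simp; ring
    rw [this, Complex.add_re, Complex.re_ofReal_mul]
  have a1 : (Jk 1 (-d ^ 4)).re / d = -(c * ζ.im) - (ζ * (Mk 1 d - c)).im := by
    rw [Jk_contour 1 hd, div_eq_inv_mul, ← Complex.re_ofReal_mul]
    have : ((d⁻¹:ℝ):ℂ) * (((1 + Complex.I) / d) * ((Complex.I * d ^ 2) ^ 1 *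
      Complex.exp (((-(2/3) * d ^ 6 : ℝ) : ℂ) * Complex.I) * Mk 1 d))
        = Complex.I * ((c:ℂ) * ζ + ζ * (Mk 1 d - c)) := by
      rw [hζ]; push_cast; field_simp; ring
    rw [this, Complex.I_mul_re, Complex.add_im, Complex.im_ofReal_mul]
    ring
  have b0 : |(ζ * (Mk 0 d - c)).re| ≤ 2 * ‖Mk 0 d - c‖ := by
    refine (Complex.abs_re_le_norm _).trans ?_
    rw [norm_mul]; gcongr
  have b1 : |(ζ * (Mk 1 d - c)).im| ≤ 2 * ‖Mk 1 d - c‖ := by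
    refine (Complex.abs_im_le_norm _).trans ?_
    rw [norm_mul]; gcongr
  have r0 : |ζ.re| ≤ 2 := (Complex.abs_re_le_norm _).trans hζ2
  have r1 : |ζ.im| ≤ 2 := (Complex.abs_im_le_norm _).trans hζ2
  set p := (ζ * (Mk 0 d - c)).re
  set q := (ζ * (Mk 1 d - c)).im
  set P := 2 * ‖Mk 0 d - c‖
  set Q := 2 * ‖Mk 1 d - c‖
  have hpi := Real.pi_pos
  have key : (d * Ai (-d ^ 4)) ^ 2 + (AiD (-d ^ 4) / d) ^ 2 - 1 / Real.pi
      = (1 / Real.pi ^ 2) * (2 * c * ζ.re * p + p ^ 2 + 2 * c * ζ.im * q + q ^ 2) := by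
    have e0 : d * Ai (-d ^ 4) = (1 / Real.pi) * (c * ζ.re + p) := by
      rw [← a0, Ai_eq]; ring
    have e1 : AiD (-d ^ 4) / d = (1 / Real.pi) * (-(c * ζ.im) - q) := by
      rw [← a1]; unfold AiD; ring
    have e2 : 1 / Real.pi = (1 / Real.pi ^ 2) * (c ^ 2 * (ζ.re ^ 2 + ζ.im ^ 2)) := by
      rw [hζn, hc2]; field_simp
    rw [e0, e1]
    nth_rewrite 3 [e2]
    ring
  rw [Real.norm_eq_abs, key, abs_mul, abs_of_pos (by positivity : 0 < 1 / Real.pi ^ 2)]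
  refine mul_le_mul_of_nonneg_left ?_ (by positivity)
  have c1 : |2 * c * ζ.re * p| ≤ 4 * c * P := by
    rw [abs_mul, abs_mul, abs_of_nonneg (by positivity : 0 ≤ 2 * c)]
    calc 2 * c * |ζ.re| * |p| ≤ 2 * c * 2 * P := by gcongr
      _ = _ := by ring
  have c2 : |2 * c * ζ.im * q| ≤ 4 * c * Q := by
    rw [abs_mul, abs_mul, abs_of_nonneg (by positivity : 0 ≤ 2 * c)]
    calc 2 * c * |ζ.im| * |q| ≤ 2 * c * 2 * Q := by gcongr
      _ = _ := by ring
  have c3 : |p ^ 2| ≤ P ^ 2 := by rw [abs_pow]; gcongr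
  have c4 : |q ^ 2| ≤ Q ^ 2 := by rw [abs_pow]; gcongr
  refine (abs_add_le _ _).trans (add_le_add ((abs_add_le _ _).trans (add_le_add
    ((abs_add_le _ _).trans (add_le_add c1 c3)) c2)) c4)


lemma airy_ode (x : ℝ) :
    HasDerivAt AiD ((x + (0:ℝ) ^ 2 * x ^ 2 / 4 - 0 / 2) * Ai x) x := by
  refine (AiD_hasDerivAt x).congr_deriv ?_
  ring

lemma airy_energy {s : ℝ} (hs : 2 ≤ s) :
    |Ef 0 (fun s => Ai (-s)) (fun s => -AiD (-s)) s - 1 / Real.pi| ≤ 48 / (s * Real.sqrt s) := by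
  obtain ⟨hF, hG⟩ := neg_ode Ai_hasDerivAt airy_ode
  set F : ℝ → ℝ := fun s => Ai (-s)
  set G : ℝ → ℝ := fun s => -AiD (-s)
  have hes : ∀ s : ℝ, (0:ℝ) ^ 2 * s ≤ 2 := fun s => by norm_num
  have tE : Tendsto (fun d : ℝ => Ef 0 F G (d ^ 4)) atTop (nhds (1 / Real.pi)) := by
    refine energy_limit.congr' ?_
    filter_upwards [eventually_ge_atTop 1] with d hd
    have hR : Rf 0 (d ^ 4) = d ^ 2 := by
      unfold Rf Qf
      rw [show d ^ 4 - (0:ℝ) ^ 2 * (d ^ 4) ^ 2 / 4 + 0 / 2 = (d ^ 2) ^ 2 by ring]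
      exact Real.sqrt_sq (by positivity)
    unfold Ef
    rw [hR]
    simp only [F, G]
    have : d ≠ 0 := by linarith
    rw [div_pow]
    ring
  have t4 : Tendsto (fun d : ℝ => d ^ 4) atTop atTop := tendsto_pow_atTop four_ne_zero
  have tB : Tendsto (fun d : ℝ => Bf 0 (d ^ 4)) atTop (nhds 0) := by
    have h4 : Tendsto (fun d : ℝ => 4 / (d ^ 4)) atTop (nhds 0) := tendsto_const_nhds.div_atTop t4
    refine squeeze_zero' ?_ ?_ h4
    · filter_upwards [t4.eventually (eventually_ge_atTop 2)] with d hd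
      exact Bf_nonneg le_rfl hd (hes _)
    · filter_upwards [t4.eventually (eventually_ge_atTop 2)] with d hd
      refine (Bf_le' le_rfl hd (hes _)).trans ?_
      have h1 : 1 ≤ Real.sqrt (d ^ 4) := by rw [Real.one_le_sqrt]; linarith
      have h0 : 0 < d ^ 4 := by linarith
      gcongr
      nlinarith
  have tT : Tendsto (fun d : ℝ => Tf 0 F G (d ^ 4)) atTop (nhds (1 / Real.pi)) := by
    have hz : Tendsto (fun d : ℝ => Tf 0 F G (d ^ 4) - Ef 0 F G (d ^ 4)) atTop (nhds 0) := by
      have hb := tB.mul (tE.div_const 2)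
      rw [zero_mul] at hb
      refine squeeze_zero_norm' ?_ hb
      filter_upwards [t4.eventually (eventually_ge_atTop 2)] with d hd
      exact Tf_Ef le_rfl hd (hes _)
    have := hz.add tE
    rw [zero_add] at this
    exact this.congr (fun d => by ring)
  have m1 : 1 / Real.pi ≤ Tf 0 F G s * Real.exp (Bf 0 s) := by
    have h := tT.mul ((Real.continuous_exp.tendsto _).comp tB)
    rw [Real.exp_zero, mul_one] at h
    refine le_of_tendsto h ?_
    filter_upwards [t4.eventually (eventually_ge_atTop s)] with d hd
    exact (energy_mono hF hG le_rfl hs hd (hes _)).1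
  have m2 : Tf 0 F G s * Real.exp (-Bf 0 s) ≤ 1 / Real.pi := by
    have h := tT.mul ((Real.continuous_exp.tendsto _).comp tB.neg)
    rw [neg_zero, Real.exp_zero, mul_one] at h
    refine ge_of_tendsto h ?_
    filter_upwards [t4.eventually (eventually_ge_atTop s)] with d hd
    exact (energy_mono hF hG le_rfl hs hd (hes _)).2
  have hpi := Real.pi_pos
  refine (Ef_close le_rfl (by positivity) hs (hes _) m1 m2).trans ?_
  have hB1 := Bf_le' (e := 0) le_rfl hs (hes _)
  have b0 := Bf_nonneg (e := 0) le_rfl hs (hes _)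
  have hpi1 : 1 / Real.pi ≤ 1 := by
    rw [div_le_one Real.pi_pos]; linarith [Real.pi_gt_three]
  have hs0 : 0 < s := by linarith
  have hσ0 : 0 < Real.sqrt s := Real.sqrt_pos.2 hs0
  calc 5 * (1 / Real.pi) * Bf 0 s ≤ 5 * 1 * (4 / (s * Real.sqrt s)) := by gcongr
    _ = 20 / (s * Real.sqrt s) := by ring
    _ ≤ 48 / (s * Real.sqrt s) := by gcongr; norm_num

lemma rho_eq (x : ℝ) : rho x = AiD x ^ 2 - (x + (0:ℝ) ^ 2 * x ^ 2 / 4) * Ai x ^ 2 := by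
  unfold rho
  rw [(Ai_hasDerivAt x).deriv]
  ring

lemma rhoHat_eq (x : ℝ) : rhoHat x = rh 0 x := by
  unfold rhoHat rh
  norm_num


/-- uniform bounds comparing the (finite-`n` and limiting) soft-edge one-point
correlation functions with `ρ̂ⁿ` and `ρ̂`. -/
theorem airy_one_correlation_bounds :
    ∃ C : ℝ, 0 < C ∧
      (∀ n : ℕ, 1 ≤ n → ∀ x : ℝ, -(2 * (n : ℝ) ^ ((2:ℝ)/3)) ≤ x → x ≠ 0 →
        |rhoN n x - rhoHatN n x| ≤ C / |x|) ∧
      (∀ x : ℝ, x ≠ 0 → |rho x - rhoHat x| ≤ C / |x|) ∧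
      (∀ n : ℕ, 1 ≤ n → ∀ x : ℝ, rhoN n x ≤ C * Real.sqrt (|x| + 1)) ∧
      (∀ x : ℝ, rho x ≤ C * Real.sqrt (|x| + 1)) := by
  obtain ⟨C, hC, H⟩ := abs_main 48 (by norm_num)
  have hA := H 0 Ai AiD le_rfl zero_le_one Ai_hasDerivAt airy_ode Ai_tendsto AiD_tendsto xAi_tendsto
    (fun s hs _ => airy_energy hs)
  have hN : ∀ n : ℕ, 1 ≤ n → _ := fun n hn =>
    H (kn n ^ 2) (psiN n) (psiD n) (by positivity)
      (pow_le_one₀ (kn_facts hn).1.le (kn_facts hn).2.1) (psiN_hasDerivAt n) (psiD_hasDerivAt hn)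
      (psiN_tendsto hn) (psiD_tendsto hn) (xpsiN_tendsto hn)
      (fun s hs hes => hermite_energy hn hs hes)
  have hcond : ∀ n : ℕ, 1 ≤ n → ∀ x : ℝ, -(2 * (n : ℝ) ^ ((2:ℝ)/3)) ≤ x →
      (kn n ^ 2) ^ 2 * (-x) ≤ 2 := by
    intro n hn x hx
    obtain ⟨k0, k1, h1, h2, h3, h4⟩ := kn_facts hn
    calc (kn n ^ 2) ^ 2 * (-x) ≤ (kn n ^ 2) ^ 2 * (2 * (n : ℝ) ^ ((2:ℝ)/3)) := by
          gcongr; linarith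
      _ = 2 * ((n : ℝ) ^ ((2:ℝ)/3) * kn n ^ 4) := by ring
      _ ≤ 2 := by rw [h3]; norm_num
  have h3 : ∀ n : ℕ, 1 ≤ n → ∀ x : ℝ, -(2 * (n : ℝ) ^ ((2:ℝ)/3)) ≤ x →
      rhoN n x ≤ C * Real.sqrt (|x| + 1) := by
    intro n hn x hx
    rw [rhoN_eq hn]
    exact (hN n hn).2 x (hcond n hn x hx)
  refine ⟨C, hC, ?_, ?_, ?_, ?_⟩
  · intro n hn x hx hx0
    rw [rhoN_eq hn, rhoHatN_eq hn hx]
    exact (hN n hn).1 x (hcond n hn x hx) hx0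
  · intro x hx0
    rw [rho_eq, rhoHat_eq]
    exact hA.1 x (by norm_num) hx0
  · intro n hn x
    rcases le_total (-(2 * (n : ℝ) ^ ((2:ℝ)/3))) x with hx | hx
    · exact h3 n hn x hx
    · have hp : 0 < (n : ℝ) ^ ((2:ℝ)/3) := Real.rpow_pos_of_pos (by exact_mod_cast hn) _
      rw [← rhoN_reflect hn x]
      refine (h3 n hn _ (by linarith)).trans ?_
      have : |(-(4 * (n : ℝ) ^ ((2:ℝ)/3)) - x)| ≤ |x| := by
        rw [abs_of_nonpos (by linarith : x ≤ 0)]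
        exact abs_le.2 ⟨by linarith, by linarith⟩
      gcongr
  · intro x
    rw [rho_eq]
    exact hA.2 x (by norm_num)
end

section
/- Let ρ(y) = Ai'(y)² − y·Ai(y)². Then ρ(x) > 0 for every x ∈ ℝ, and for x ∈ ℝ one may define the reduced Palm one-point correlation ρ_x(y) = ρ(y) − K_Ai(x,y)²/ρ(x). For s > 0 put u_s(x) = ∫_{−s}^{s} ρ_x(y)/(x − y) dy − ∫_{−s}^{s} ρ̂(y)/(−y) dy (the first integrand, defined for y ≠ x, is Lebesgue integrable on (−s,s), as is the second). Then there is a continuous function u : ℝ → ℝ such that u_s → u as s → ∞ uniformly on every compact subset of ℝ. -/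
open MeasureTheory Filter Set

open Complex in
/-- the exponential integrand of the Airy function -/
noncomputable def aiE (x : ℝ) (z : ℂ) : ℂ := Complex.exp (I * (z ^ 3 / 3 + x * z))

open Complex in
lemma norm_aiE (x t y : ℝ) :
    ‖aiE x (t + y * I)‖ = Real.exp (-(y * t ^ 2) + y ^ 3 / 3 - x * y) := by
  unfold aiE
  rw [Complex.norm_exp]
  congr 1
  have : I * ((t + y * I : ℂ) ^ 3 / 3 + x * (t + y * I)) =
      ((-(y * t ^ 2) + y ^ 3 / 3 - x * y : ℝ) : ℂ) + ((t ^ 3 / 3 - t * y ^ 2 + x * t : ℝ) : ℂ) * I := by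
    push_cast
    have h2 : I ^ 2 = -1 := Complex.I_sq
    have h3 : I ^ 3 = -I := by rw [pow_succ, h2]; ring
    have h4 : I ^ 4 = 1 := Complex.I_pow_four
    ring_nf
    rw [h2, h3, h4]; ring
  rw [this, Complex.add_re, Complex.ofReal_re, Complex.re_ofReal_mul, Complex.I_re]
  ring

lemma differentiable_aiE (x : ℝ) : Differentiable ℂ (aiE x) := by
  unfold aiE; fun_prop

lemma continuous_aiE (x : ℝ) : Continuous (aiE x) := (differentiable_aiE x).continuous

open Complex in
lemma integrable_aiE (x η : ℝ) (hη : 0 < η) :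
    Integrable (fun t : ℝ => aiE x (t + η * I)) := by
  have h := (integrable_exp_neg_mul_sq hη).const_mul (Real.exp (η ^ 3 / 3 - x * η))
  refine h.mono' ?_ ?_
  · exact ((continuous_aiE x).comp (by fun_prop)).aestronglyMeasurable
  · refine Eventually.of_forall fun t => ?_
    rw [norm_aiE, ← Real.exp_add]
    apply le_of_eq; congr 1; ring

open Complex in
lemma aiE_real_sum (x t : ℝ) :
    aiE x (t : ℂ) + aiE x ((-t : ℝ) : ℂ) = ((2 * Real.cos (t ^ 3 / 3 + x * t) : ℝ) : ℂ) := by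
  unfold aiE
  push_cast
  rw [Complex.two_cos]
  congr 1 <;> congr 1 <;> ring

open Complex in
lemma integral_aiE_real (x b : ℝ) :
    ∫ t in (-b)..b, aiE x (t : ℂ) =
      ((2 * ∫ t in (0:ℝ)..b, Real.cos (t ^ 3 / 3 + x * t) : ℝ) : ℂ) := by
  have hc : Continuous fun t : ℝ => aiE x (t : ℂ) := (continuous_aiE x).comp continuous_ofReal
  have hc' : Continuous fun t : ℝ => aiE x ((-t : ℝ) : ℂ) :=
    (continuous_aiE x).comp (continuous_ofReal.comp continuous_neg)
  rw [← intervalIntegral.integral_add_adjacent_intervals (b := 0) (hc.intervalIntegrable _ _)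
    (hc.intervalIntegrable _ _)]
  have h1 : ∫ t in (-b)..0, aiE x (t : ℂ) = ∫ t in (0:ℝ)..b, aiE x ((-t : ℝ) : ℂ) := by
    rw [intervalIntegral.integral_comp_neg (fun t : ℝ => aiE x (t : ℂ))]; simp
  rw [h1, add_comm, ← intervalIntegral.integral_add (hc.intervalIntegrable _ _)
    (hc'.intervalIntegrable _ _)]
  simp_rw [aiE_real_sum]
  rw [intervalIntegral.integral_ofReal, intervalIntegral.integral_const_mul]

open Complex in
lemma tendsto_side (x η σ : ℝ) (hη : 0 < η) (hσ : σ ^ 2 = 1) :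
    Tendsto (fun b : ℝ => ∫ y in (0:ℝ)..η, aiE x (((σ * b : ℝ) : ℂ) + y * I)) atTop (nhds 0) := by
  have : (0:ℂ) = ∫ y in (0:ℝ)..η, (0:ℂ) := by simp
  rw [this]
  apply intervalIntegral.tendsto_integral_filter_of_dominated_convergence
    (fun _ => Real.exp (η ^ 3 / 3 + |x| * η))
  · refine Eventually.of_forall fun b => ?_
    exact ((continuous_aiE x).comp (by fun_prop)).aestronglyMeasurable
  · refine Eventually.of_forall fun b => Eventually.of_forall fun y hy => ?_
    rw [uIoc_of_le hη.le] at hy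
    rw [norm_aiE]
    apply Real.exp_le_exp.2
    have h1 : 0 ≤ y * (σ * b) ^ 2 := by have := hy.1.le; positivity
    have h2 : y ^ 3 ≤ η ^ 3 := by have := hy.1.le; gcongr; exact hy.2
    have h3 : -(x * y) ≤ |x| * η := by
      have a1 : -(x * y) ≤ |x| * y := by
        have := neg_abs_le x; nlinarith [hy.1]
      have a2 : |x| * y ≤ |x| * η := by gcongr; exact hy.2
      linarith
    linarith
  · exact intervalIntegrable_const
  · refine Eventually.of_forall fun y hy => ?_
    rw [uIoc_of_le hη.le] at hy
    rw [tendsto_zero_iff_norm_tendsto_zero]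
    simp_rw [norm_aiE]
    apply Real.tendsto_exp_atBot.comp
    have : ∀ b : ℝ, -(y * (σ * b) ^ 2) + y ^ 3 / 3 - x * y = -(y * b ^ 2) + (y ^ 3 / 3 - x * y) := by
      intro b; rw [mul_pow, hσ]; ring
    simp_rw [this]
    apply tendsto_atBot_add_const_right
    apply tendsto_neg_atTop_atBot.comp
    exact (tendsto_pow_atTop two_ne_zero).const_mul_atTop hy.1

open Complex in
lemma tendsto_main (x η : ℝ) (hη : 0 < η) :
    Tendsto (fun b : ℝ => ((2 * ∫ t in (0:ℝ)..b, Real.cos (t ^ 3 / 3 + x * t) : ℝ) : ℂ)) atTop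
      (nhds (∫ t : ℝ, aiE x (t + η * I))) := by
  have h1 : Tendsto (fun b : ℝ => ∫ t in (-b)..b, aiE x (t + η * I)) atTop
      (nhds (∫ t : ℝ, aiE x (t + η * I))) :=
    intervalIntegral_tendsto_integral (integrable_aiE x η hη) tendsto_neg_atTop_atBot tendsto_id
  have h2 := tendsto_side x η 1 hη (by norm_num)
  have h3 := tendsto_side x η (-1) hη (by norm_num)
  have h4 := (h1.sub (h2.const_smul I)).add (h3.const_smul I)
  simp only [smul_zero, sub_zero, add_zero] at h4
  refine h4.congr fun b => ?_
  have h := Complex.integral_boundary_rect_eq_zero_of_differentiableOn (aiE x)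
    (((-b : ℝ) : ℂ)) ((b : ℂ) + η * I) (differentiable_aiE x).differentiableOn
  simp at h
  rw [← integral_aiE_real]
  simp only [one_mul, neg_one_mul, ofReal_neg, smul_eq_mul]
  linear_combination -h

open Complex in
lemma Ai_eq_s2 (x η : ℝ) (hη : 0 < η) :
    ((2 * Real.pi * Ai x : ℝ) : ℂ) = ∫ t : ℝ, aiE x (t + η * I) := by
  have h := tendsto_main x η hη
  set L := ∫ t : ℝ, aiE x (t + η * I)
  have hre := (Complex.continuous_re.tendsto L).comp h
  have him := (Complex.continuous_im.tendsto L).comp h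
  simp only [Function.comp_def, ofReal_re, ofReal_im] at hre him
  have h0 : L.im = 0 := (tendsto_nhds_unique him tendsto_const_nhds)
  have h1 : Tendsto (fun b : ℝ => ∫ t in (0:ℝ)..b, Real.cos (t ^ 3 / 3 + x * t)) atTop
      (nhds (L.re / 2)) := by
    refine (hre.div_const 2).congr fun b => by ring
  unfold Ai
  rw [h1.limUnder_eq]
  apply Complex.ext
  · rw [ofReal_re]; field_simp
  · rw [ofReal_im, h0]

open Complex in
/-- the `k`-th derivative integral along the line `Im z = 1` -/
noncomputable def aiJ (k : ℕ) (x : ℝ) : ℂ := ∫ t : ℝ, (I * (t + I)) ^ k * aiE x (t + I)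

open Complex in
lemma norm_aiE_one (x t : ℝ) : ‖aiE x (t + I)‖ = Real.exp (-t ^ 2 + 1 / 3 - x) := by
  have := norm_aiE x t 1
  simp only [ofReal_one, one_mul] at this
  rw [this]; congr 1; ring

open Complex in
lemma norm_aiJ_integrand (k : ℕ) (hk : k ≤ 2) (x t : ℝ) :
    ‖(I * (t + I)) ^ k * aiE x (t + I)‖ ≤
      2 * Real.exp (1 / 3 - x) * Real.exp (-(1 / 2) * t ^ 2) := by
  rw [norm_mul, norm_pow, norm_mul, norm_I, one_mul, norm_aiE_one]
  have h1 : ‖(t + I : ℂ)‖ ^ 2 = t ^ 2 + 1 := by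
    rw [Complex.sq_norm, Complex.normSq_apply]; simp; ring
  have h2 : 1 ≤ ‖(t + I : ℂ)‖ := by nlinarith [norm_nonneg (t + I : ℂ), sq_nonneg t]
  have h3 : ‖(t + I : ℂ)‖ ^ k ≤ ‖(t + I : ℂ)‖ ^ 2 := pow_le_pow_right₀ h2 hk
  have h4 : t ^ 2 + 1 ≤ 2 * Real.exp (t ^ 2 / 2) := by
    have := Real.add_one_le_exp (t ^ 2 / 2); nlinarith [sq_nonneg t]
  calc ‖(t + I : ℂ)‖ ^ k * Real.exp (-t ^ 2 + 1 / 3 - x)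
      ≤ 2 * Real.exp (t ^ 2 / 2) * Real.exp (-t ^ 2 + 1 / 3 - x) := by gcongr; linarith
    _ = 2 * Real.exp (1 / 3 - x) * Real.exp (-(1 / 2) * t ^ 2) := by
      rw [mul_assoc, mul_assoc, ← Real.exp_add, ← Real.exp_add]; congr 2; ring

open Complex in
lemma continuous_aiJ_integrand (k : ℕ) (x : ℝ) :
    Continuous fun t : ℝ => (I * (t + I)) ^ k * aiE x (t + I) := by
  have := (continuous_aiE x).comp (f := fun t : ℝ => (t + I : ℂ)) (by fun_prop)
  simp only [Function.comp_def] at this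
  fun_prop

open Complex in
lemma integrable_aiJ (k : ℕ) (hk : k ≤ 2) (x : ℝ) :
    Integrable fun t : ℝ => (I * (t + I)) ^ k * aiE x (t + I) := by
  refine ((integrable_exp_neg_mul_sq (b := 1 / 2) (by norm_num)).const_mul
    (2 * Real.exp (1 / 3 - x))).mono' (continuous_aiJ_integrand k x).aestronglyMeasurable ?_
  exact Eventually.of_forall fun t => norm_aiJ_integrand k hk x t

open Complex in
lemma norm_aiJ_le : ∃ C : ℝ, 0 < C ∧ ∀ k ≤ 2, ∀ x, ‖aiJ k x‖ ≤ C * Real.exp (-x) := by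
  refine ⟨2 * Real.exp (1 / 3) * ∫ t : ℝ, Real.exp (-(1 / 2) * t ^ 2), ?_, ?_⟩
  · rw [integral_gaussian]; positivity
  · intro k hk x
    have := norm_integral_le_of_norm_le ((integrable_exp_neg_mul_sq (b := 1 / 2)
      (by norm_num)).const_mul (2 * Real.exp (1 / 3 - x)))
      (Eventually.of_forall fun t => norm_aiJ_integrand k hk x t)
    unfold aiJ
    refine this.trans (le_of_eq ?_)
    rw [integral_const_mul, sub_eq_add_neg, Real.exp_add]; ring

open Complex in
lemma hasDerivAt_aiJ (k : ℕ) (hk : k + 1 ≤ 2) (x : ℝ) :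
    HasDerivAt (aiJ k) (aiJ (k + 1) x) x := by
  unfold aiJ
  refine (hasDerivAt_integral_of_dominated_loc_of_deriv_le (𝕜 := ℝ) (E := ℂ) (s := Metric.ball x 1)
    (F := fun x t => (I * (t + I)) ^ k * aiE x (t + I))
    (F' := fun x t => (I * (t + I)) ^ (k + 1) * aiE x (t + I))
    (bound := fun t => 2 * Real.exp (1 / 3 - (x - 1)) * Real.exp (-(1 / 2) * t ^ 2))
    (Metric.ball_mem_nhds x one_pos) ?_ ?_ ?_ ?_ ?_ ?_).2
  · exact Eventually.of_forall fun y => (continuous_aiJ_integrand k y).aestronglyMeasurable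
  · exact integrable_aiJ k (by omega) x
  · exact (continuous_aiJ_integrand (k+1) x).aestronglyMeasurable
  · refine Eventually.of_forall fun t y hy => ?_
    refine (norm_aiJ_integrand (k+1) hk y t).trans ?_
    rw [Metric.mem_ball, Real.dist_eq, abs_lt] at hy
    gcongr
    linarith
  · exact (integrable_exp_neg_mul_sq (b := 1 / 2) (by norm_num)).const_mul _
  · refine Eventually.of_forall fun t y hy => ?_
    unfold aiE
    have h1 : HasDerivAt (fun y : ℝ => I * ((t + I : ℂ) ^ 3 / 3 + (y : ℂ) * (t + I)))
        (I * (t + I)) y := by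
      have := (((Complex.ofRealCLM.hasDerivAt (x := y)).mul_const (t + I : ℂ)).const_add
        ((t + I : ℂ) ^ 3 / 3)).const_mul I
      simpa using this
    have h2 := (h1.cexp).const_mul ((I * (t + I)) ^ k)
    convert! h2 using 1
    ring

open Complex in
lemma aiJ_ode (x : ℝ) : aiJ 2 x = x * aiJ 0 x := by
  have hd : ∀ t : ℝ, HasDerivAt (fun t : ℝ => aiE x (t + I))
      (I * (x * ((I * (t + I)) ^ 0 * aiE x (t + I)) - (I * (t + I)) ^ 2 * aiE x (t + I))) t := by
    intro t
    unfold aiE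
    have h0 : HasDerivAt (fun t : ℝ => (t + I : ℂ)) 1 t := by
      simpa using (Complex.ofRealCLM.hasDerivAt (x := t)).add_const I
    have h1 := ((((h0.pow 3).div_const 3).add (h0.const_mul (x : ℂ))).const_mul I).cexp
    convert! h1 using 1
    simp only [Pi.add_apply, Pi.pow_apply]
    push_cast
    have h2 : I ^ 2 = -1 := Complex.I_sq
    rw [mul_pow I (t + I : ℂ) 2, h2]
    ring
  have i0 := integrable_aiJ 0 (by norm_num) x
  have i2 := integrable_aiJ 2 (by norm_num) x
  have := integral_eq_zero_of_hasDerivAt_of_integrable hd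
    (((i0.const_mul (x : ℂ)).sub i2).const_mul I) (by simpa using i0)
  rw [integral_const_mul, integral_sub (i0.const_mul (x : ℂ)) i2, integral_const_mul] at this
  have h3 := (mul_eq_zero.1 this).resolve_left I_ne_zero
  unfold aiJ
  exact (sub_eq_zero.1 h3).symm

open Complex in
lemma Ai_eq_re (x : ℝ) : Ai x = (aiJ 0 x).re / (2 * Real.pi) := by
  have h := Ai_eq_s2 x 1 one_pos
  have h2 := congrArg Complex.re h
  rw [ofReal_re] at h2
  simp only [ofReal_one, one_mul] at h2
  have : aiJ 0 x = ∫ t : ℝ, aiE x (t + I) := by unfold aiJ; simp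
  rw [this, ← h2]
  field_simp

lemma hasDerivAt_re_aiJ (k : ℕ) (hk : k + 1 ≤ 2) (x : ℝ) :
    HasDerivAt (fun x => (aiJ k x).re / (2 * Real.pi)) ((aiJ (k + 1) x).re / (2 * Real.pi)) x := by
  have := Complex.reCLM.hasFDerivAt.comp_hasDerivAt x (hasDerivAt_aiJ k hk x)
  exact this.div_const _

lemma deriv_Ai_eq (x : ℝ) : deriv Ai x = (aiJ 1 x).re / (2 * Real.pi) := by
  have : Ai = fun x => (aiJ 0 x).re / (2 * Real.pi) := funext Ai_eq_re
  rw [this]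
  exact (hasDerivAt_re_aiJ 0 (by norm_num) x).deriv

lemma hasDerivAt_Ai (x : ℝ) : HasDerivAt Ai (deriv Ai x) x := by
  rw [deriv_Ai_eq]
  have : Ai = fun x => (aiJ 0 x).re / (2 * Real.pi) := funext Ai_eq_re
  rw [this]
  exact hasDerivAt_re_aiJ 0 (by norm_num) x

lemma hasDerivAt_dAi (x : ℝ) : HasDerivAt (deriv Ai) (x * Ai x) x := by
  have : deriv Ai = fun x => (aiJ 1 x).re / (2 * Real.pi) := funext deriv_Ai_eq
  rw [this]
  convert hasDerivAt_re_aiJ 1 (by norm_num) x using 1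
  rw [aiJ_ode, Complex.re_ofReal_mul, Ai_eq_re]; ring

lemma continuous_Ai : Continuous Ai :=
  continuous_iff_continuousAt.2 fun x => (hasDerivAt_Ai x).continuousAt

lemma continuous_dAi : Continuous (deriv Ai) :=
  continuous_iff_continuousAt.2 fun x => (hasDerivAt_dAi x).continuousAt

lemma hasDerivAt_rho (x : ℝ) : HasDerivAt rho (-(Ai x) ^ 2) x := by
  unfold rho
  have h := ((hasDerivAt_dAi x).pow 2).sub ((hasDerivAt_id x).mul ((hasDerivAt_Ai x).pow 2))
  convert! h using 1
  simp; ring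

lemma continuous_rho : Continuous rho :=
  continuous_iff_continuousAt.2 fun x => (hasDerivAt_rho x).continuousAt

lemma Ai_decay : ∃ C : ℝ, 0 < C ∧ ∀ x, |Ai x| ≤ C * Real.exp (-x) ∧
    |deriv Ai x| ≤ C * Real.exp (-x) := by
  obtain ⟨C, hC, h⟩ := norm_aiJ_le
  have key : ∀ k ≤ 2, ∀ x, |(aiJ k x).re / (2 * Real.pi)| ≤ C * Real.exp (-x) := by
    intro k hk x
    have h1 := (Complex.abs_re_le_norm _).trans (h k hk x)
    rw [abs_div, abs_of_pos (by positivity : 0 < 2 * Real.pi)]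
    refine (div_le_self (abs_nonneg _) ?_).trans h1
    linarith [Real.pi_gt_three]
  refine ⟨C, hC, fun x => ⟨?_, ?_⟩⟩
  · rw [Ai_eq_re]; exact key 0 (by norm_num) x
  · rw [deriv_Ai_eq]; exact key 1 (by norm_num) x

lemma rho_decay : ∃ C : ℝ, 0 < C ∧ ∀ x, 0 ≤ x → |rho x| ≤ C * Real.exp (-x) ∧
    (Ai x) ^ 2 ≤ C * Real.exp (-x) ∧ (deriv Ai x) ^ 2 ≤ C * Real.exp (-x) := by
  obtain ⟨C, hC, h⟩ := Ai_decay
  refine ⟨2 * C ^ 2, by positivity, fun x hx => ?_⟩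
  obtain ⟨h1, h2⟩ := h x
  set e := Real.exp (-x) with he
  have e0 : 0 < e := Real.exp_pos _
  have e1 : e ≤ 1 := Real.exp_le_one_iff.2 (by linarith)
  have a1 : (Ai x) ^ 2 ≤ (C * e) ^ 2 := by rw [← sq_abs]; gcongr
  have a2 : (deriv Ai x) ^ 2 ≤ (C * e) ^ 2 := by rw [← sq_abs (deriv Ai x)]; gcongr
  have a3 : x * e ≤ 1 := by
    have := Real.add_one_le_exp x
    have h3 : Real.exp x * e = 1 := by rw [he, ← Real.exp_add]; simp
    nlinarith
  have a4 : (C * e) ^ 2 ≤ C ^ 2 * e := by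
    rw [mul_pow]; have := sq_nonneg C; nlinarith
  have a5 : x * (Ai x) ^ 2 ≤ C ^ 2 * e := by
    calc x * (Ai x) ^ 2 ≤ x * (C * e) ^ 2 := by gcongr
      _ = (x * e) * (C ^ 2 * e) := by ring
      _ ≤ 1 * (C ^ 2 * e) := by gcongr
      _ = _ := one_mul _
  have a6 : 0 ≤ C ^ 2 * e := by positivity
  have a7 : 0 ≤ x * (Ai x) ^ 2 := by positivity
  refine ⟨?_, by linarith, by linarith⟩
  unfold rho
  rw [abs_le]
  constructor <;> nlinarith [sq_nonneg (deriv Ai x)]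


/-- the WKB-corrected energy -/
noncomputable def aiQ (τ : ℝ) : ℝ :=
  rho (-τ ^ 2) / τ - Ai (-τ ^ 2) * deriv Ai (-τ ^ 2) / (2 * τ ^ 3)

lemma hasDerivAt_aiQ (τ : ℝ) (hτ : 0 < τ) :
    HasDerivAt aiQ (3 * (Ai (-τ ^ 2) * deriv Ai (-τ ^ 2)) / (2 * τ ^ 4)) τ := by
  have hs : HasDerivAt (fun τ : ℝ => -τ ^ 2) (-(2 * τ)) τ := by
    simpa using (hasDerivAt_pow 2 τ).fun_neg
  have h1 := (hasDerivAt_rho (-τ ^ 2)).comp τ hs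
  have h2 := (hasDerivAt_Ai (-τ ^ 2)).comp τ hs
  have h3 := (hasDerivAt_dAi (-τ ^ 2)).comp τ hs
  have h4 := (h1.div (hasDerivAt_id τ) hτ.ne').sub
    ((h2.mul h3).div ((hasDerivAt_pow 3 τ).const_mul 2) (by positivity))
  unfold aiQ
  convert! h4 using 1
  simp only [Function.comp_apply, id, Pi.mul_apply, rho]
  field_simp
  push_cast
  ring

lemma rho_neg_sq (τ : ℝ) : rho (-τ ^ 2) = (deriv Ai (-τ ^ 2)) ^ 2 + τ ^ 2 * (Ai (-τ ^ 2)) ^ 2 := by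
  unfold rho; ring

lemma abs_prod_le (τ : ℝ) (hτ : 0 < τ) :
    |Ai (-τ ^ 2) * deriv Ai (-τ ^ 2)| ≤ rho (-τ ^ 2) / (2 * τ) := by
  rw [rho_neg_sq, le_div_iff₀ (by positivity), abs_mul]
  have := sq_nonneg (|deriv Ai (-τ ^ 2)| - τ * |Ai (-τ ^ 2)|)
  rw [← sq_abs (Ai (-τ ^ 2)), ← sq_abs (deriv Ai (-τ ^ 2))]
  nlinarith

lemma aiQ_ge (τ : ℝ) (hτ : 1 ≤ τ) : 3 / 4 * (rho (-τ ^ 2) / τ) ≤ aiQ τ := by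
  have h0 : 0 < τ := by linarith
  have h := abs_prod_le τ h0
  have hρ : 0 ≤ rho (-τ ^ 2) := by rw [rho_neg_sq]; positivity
  have h1 : Ai (-τ ^ 2) * deriv Ai (-τ ^ 2) / (2 * τ ^ 3) ≤ 1 / 4 * (rho (-τ ^ 2) / τ) := by
    calc Ai (-τ ^ 2) * deriv Ai (-τ ^ 2) / (2 * τ ^ 3)
        ≤ rho (-τ ^ 2) / (2 * τ) / (2 * τ ^ 3) := by gcongr; exact (le_abs_self _).trans h
      _ = 1 / 4 * (rho (-τ ^ 2) / τ) * (1 / τ ^ 3) := by field_simp; ring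
      _ ≤ 1 / 4 * (rho (-τ ^ 2) / τ) * 1 := by
        gcongr
        rw [div_le_one (by positivity)]
        exact one_le_pow₀ hτ
      _ = _ := mul_one _
  unfold aiQ
  linarith

lemma abs_aiQ'_le (τ : ℝ) (hτ : 1 ≤ τ) :
    |3 * (Ai (-τ ^ 2) * deriv Ai (-τ ^ 2)) / (2 * τ ^ 4)| ≤ aiQ τ / τ ^ 4 := by
  have h0 : 0 < τ := by linarith
  have h := abs_prod_le τ h0
  have h1 := aiQ_ge τ hτ
  rw [abs_div, abs_mul, abs_of_pos (by positivity : 0 < 2 * τ ^ 4), abs_of_pos (by norm_num : (0:ℝ) < 3)]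
  rw [div_le_div_iff₀ (by positivity) (by positivity)]
  have h2 : rho (-τ ^ 2) / (2 * τ) = (1 / 2) * (rho (-τ ^ 2) / τ) := by field_simp
  have h3 : 3 * |Ai (-τ ^ 2) * deriv Ai (-τ ^ 2)| ≤ 2 * aiQ τ := by linarith
  have : 0 ≤ τ ^ 4 := by positivity
  nlinarith

lemma aiQ_bdd : ∃ H : ℝ, 0 < H ∧ ∀ τ, 1 ≤ τ → aiQ τ ≤ H := by
  have hder : ∀ τ : ℝ, 0 < τ → HasDerivAt (fun τ => aiQ τ * Real.exp (1 / 3 * (τ ^ 3)⁻¹))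
      ((3 * (Ai (-τ ^ 2) * deriv Ai (-τ ^ 2)) / (2 * τ ^ 4) - aiQ τ / τ ^ 4) *
        Real.exp (1 / 3 * (τ ^ 3)⁻¹)) τ := by
    intro τ hτ
    have h1 := (((hasDerivAt_pow 3 τ).inv (by positivity)).const_mul (1 / 3)).exp
    have := (hasDerivAt_aiQ τ hτ).mul h1
    convert! this using 1
    simp only [Pi.inv_apply]
    field_simp
    push_cast
    ring
  have hanti : AntitoneOn (fun τ => aiQ τ * Real.exp (1 / 3 * (τ ^ 3)⁻¹)) (Ici 1) := by
    apply antitoneOn_of_hasDerivWithinAt_nonpos (convex_Ici 1)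
      (fun τ hτ => (hder τ (lt_of_lt_of_le one_pos hτ)).continuousAt.continuousWithinAt)
      (fun τ hτ => (hder τ (by rw [interior_Ici] at hτ; exact lt_trans one_pos hτ)).hasDerivWithinAt)
    intro τ hτ
    rw [interior_Ici] at hτ
    have := (abs_le.1 (abs_aiQ'_le τ (le_of_lt hτ))).2
    exact mul_nonpos_of_nonpos_of_nonneg (by linarith) (Real.exp_pos _).le
  refine ⟨|aiQ 1 * Real.exp (1 / 3 * (1 ^ 3)⁻¹)| + 1, by positivity, fun τ hτ => ?_⟩
  have h1 := hanti (show (1:ℝ) ∈ Ici 1 from mem_Ici.2 le_rfl) (show τ ∈ Ici 1 from hτ) hτ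
  have h2 : 0 ≤ aiQ τ := by
    refine le_trans ?_ (aiQ_ge τ hτ)
    have : 0 ≤ rho (-τ ^ 2) := by rw [rho_neg_sq]; positivity
    have : 0 < τ := by linarith
    positivity
  have h3 : 1 ≤ Real.exp (1 / 3 * (τ ^ 3)⁻¹) := by
    apply Real.one_le_exp
    have : 0 < τ := by linarith
    positivity
  have h4 : aiQ τ ≤ aiQ τ * Real.exp (1 / 3 * (τ ^ 3)⁻¹) := by nlinarith
  have := le_abs_self (aiQ 1 * Real.exp (1 / 3 * (1 ^ 3)⁻¹))
  simp only at h1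
  linarith

lemma aiQ_lim : ∃ C H : ℝ, 0 < H ∧ ∀ τ, 1 ≤ τ → aiQ τ ≤ H ∧ |aiQ τ - C| ≤ H / (3 * τ ^ 3) := by
  obtain ⟨H, hH, hb⟩ := aiQ_bdd
  have hder : ∀ c τ : ℝ, 0 < τ → HasDerivAt (fun τ => aiQ τ + c * (τ ^ 3)⁻¹)
      (3 * (Ai (-τ ^ 2) * deriv Ai (-τ ^ 2)) / (2 * τ ^ 4) - 3 * c / τ ^ 4) τ := by
    intro c τ hτ
    have h1 := (((hasDerivAt_pow 3 τ).inv (by positivity)).const_mul c)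
    have := (hasDerivAt_aiQ τ hτ).add h1
    convert! this using 1
    field_simp
    push_cast
    ring
  have hanti : AntitoneOn (fun τ => aiQ τ + H / 3 * (τ ^ 3)⁻¹) (Ici 1) := by
    apply antitoneOn_of_hasDerivWithinAt_nonpos (convex_Ici 1)
      (fun τ hτ => (hder _ τ (lt_of_lt_of_le one_pos hτ)).continuousAt.continuousWithinAt)
      (fun τ hτ => (hder _ τ (by rw [interior_Ici] at hτ; exact lt_trans one_pos hτ)).hasDerivWithinAt)
    intro τ hτ
    rw [interior_Ici] at hτ
    have h0 : (0:ℝ) < τ := lt_trans one_pos hτ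
    have h1 := (abs_le.1 (abs_aiQ'_le τ (le_of_lt hτ))).2
    have h2 : aiQ τ / τ ^ 4 ≤ H / τ ^ 4 := by gcongr; exact hb τ (le_of_lt hτ)
    have h3 : 3 * (H / 3) / τ ^ 4 = H / τ ^ 4 := by ring
    linarith
  have hmono : MonotoneOn (fun τ => aiQ τ + -(H / 3) * (τ ^ 3)⁻¹) (Ici 1) := by
    apply monotoneOn_of_hasDerivWithinAt_nonneg (convex_Ici 1)
      (fun τ hτ => (hder _ τ (lt_of_lt_of_le one_pos hτ)).continuousAt.continuousWithinAt)
      (fun τ hτ => (hder _ τ (by rw [interior_Ici] at hτ; exact lt_trans one_pos hτ)).hasDerivWithinAt)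
    intro τ hτ
    rw [interior_Ici] at hτ
    have h0 : (0:ℝ) < τ := lt_trans one_pos hτ
    have h1 := (abs_le.1 (abs_aiQ'_le τ (le_of_lt hτ))).1
    have h2 : aiQ τ / τ ^ 4 ≤ H / τ ^ 4 := by gcongr; exact hb τ (le_of_lt hτ)
    have h3 : 3 * -(H / 3) / τ ^ 4 = -(H / τ ^ 4) := by ring
    linarith
  have hle : ∀ σ τ : ℝ, 1 ≤ σ → 1 ≤ τ →
      aiQ σ + -(H / 3) * (σ ^ 3)⁻¹ ≤ aiQ τ + H / 3 * (τ ^ 3)⁻¹ := by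
    intro σ τ hσ hτ
    have hm : 1 ≤ max σ τ := le_max_of_le_left hσ
    have h1 := hmono (show σ ∈ Ici 1 from hσ) (show max σ τ ∈ Ici 1 from hm) (le_max_left _ _)
    have h2 := hanti (show τ ∈ Ici 1 from hτ) (show max σ τ ∈ Ici 1 from hm) (le_max_right _ _)
    have h3 : 0 ≤ H / 3 * ((max σ τ) ^ 3)⁻¹ := by
      have : (0:ℝ) < max σ τ := by linarith
      positivity
    simp only at h1 h2
    linarith
  set S := (fun σ => aiQ σ + -(H / 3) * (σ ^ 3)⁻¹) '' Ici 1
  have hS : S.Nonempty := ⟨_, 1, le_refl (1:ℝ), rfl⟩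
  have hSb : BddAbove S := ⟨aiQ 1 + H / 3 * (1 ^ 3)⁻¹, by
    rintro _ ⟨σ, hσ, rfl⟩; exact hle σ 1 hσ le_rfl⟩
  refine ⟨sSup S, H, hH, fun τ hτ => ⟨hb τ hτ, ?_⟩⟩
  have h1 : aiQ τ + -(H / 3) * (τ ^ 3)⁻¹ ≤ sSup S := le_csSup hSb ⟨τ, hτ, rfl⟩
  have h2 : sSup S ≤ aiQ τ + H / 3 * (τ ^ 3)⁻¹ := csSup_le hS (by
    rintro _ ⟨σ, hσ, rfl⟩; exact hle σ τ hσ hτ)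
  have h0 : 0 < τ := by linarith
  have h3 : H / (3 * τ ^ 3) = H / 3 * (τ ^ 3)⁻¹ := by field_simp
  rw [h3, abs_le]
  constructor <;> linarith

/-- Left asymptotics, with an unknown constant. -/
lemma rho_left : ∃ C M : ℝ, 0 < M ∧ ∀ y, y ≤ -1 →
    |rho y - C * √(-y)| ≤ M / (-y) ∧ (Ai y) ^ 2 ≤ M * √(-y) / (-y) ∧
      (deriv Ai y) ^ 2 ≤ M * √(-y) := by
  obtain ⟨C, H, hH, h⟩ := aiQ_lim
  refine ⟨C, 4 / 3 * H, by positivity, fun y hy => ?_⟩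
  set τ := √(-y) with hτd
  have hτ : 1 ≤ τ := by rw [hτd, Real.one_le_sqrt]; linarith
  have h0 : 0 < τ := by linarith
  have hy2 : τ ^ 2 = -y := Real.sq_sqrt (by linarith)
  have hyy : y = -τ ^ 2 := by linarith
  obtain ⟨h1, h2⟩ := h τ hτ
  have h3 := aiQ_ge τ hτ
  have h4 := abs_prod_le τ h0
  rw [← hy2, hyy]
  have hr : rho (-τ ^ 2) / τ ≤ 4 / 3 * H := by linarith
  have hr' : rho (-τ ^ 2) ≤ 4 / 3 * H * τ := by rwa [div_le_iff₀ h0] at hr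
  refine ⟨?_, ?_, ?_⟩
  · have e : rho (-τ ^ 2) - C * τ = τ * (aiQ τ - C) + Ai (-τ ^ 2) * deriv Ai (-τ ^ 2) / (2 * τ ^ 2) := by
      unfold aiQ; field_simp; ring
    rw [e]
    refine (abs_add_le _ _).trans ?_
    rw [abs_mul, abs_div, abs_of_pos h0, abs_of_pos (by positivity : 0 < 2 * τ ^ 2)]
    have e1 : τ * |aiQ τ - C| ≤ H / 3 / τ ^ 2 := by
      calc τ * |aiQ τ - C| ≤ τ * (H / (3 * τ ^ 3)) := by gcongr
        _ = _ := by field_simp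
    have e2 : |Ai (-τ ^ 2) * deriv Ai (-τ ^ 2)| ≤ 2 / 3 * H := by
      refine h4.trans ?_
      rw [div_le_iff₀ (by positivity)]; linarith
    have e3 : |Ai (-τ ^ 2) * deriv Ai (-τ ^ 2)| / (2 * τ ^ 2) ≤ H / 3 / τ ^ 2 := by
      calc _ ≤ (2 / 3 * H) / (2 * τ ^ 2) := by gcongr
        _ = _ := by field_simp
    calc _ ≤ H / 3 / τ ^ 2 + H / 3 / τ ^ 2 := add_le_add e1 e3
      _ = (2 / 3 * H) / τ ^ 2 := by ring
      _ ≤ _ := by gcongr; norm_num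
  · rw [rho_neg_sq] at hr'
    rw [le_div_iff₀ (by positivity)]
    nlinarith [sq_nonneg (deriv Ai (-τ ^ 2))]
  · rw [rho_neg_sq] at hr'
    have : 0 ≤ τ ^ 2 * (Ai (-τ ^ 2)) ^ 2 := by positivity
    linarith

open scoped FourierTransform

lemma plancherel_aux (f : ℝ → ℂ) (hc : Continuous f) (hi : Integrable f) (hF : Integrable (𝓕 f)) :
    ∫ v, ‖𝓕 f v‖ ^ 2 = ∫ t, ‖f t‖ ^ 2 := by
  have h := VectorFourier.integral_sesq_fourierIntegral_eq_neg_flip (μ := volume) (ν := volume)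
    (innerSL ℂ (E := ℂ))
    (L := innerₗ ℝ) Real.continuous_fourierChar continuous_inner hi hF
  have hinv := hc.fourierInv_fourier_eq hi hF
  apply Complex.ofRealLI.injective
  have h2 : ∫ v, (innerSL ℂ (𝓕 f v)) (𝓕 f v) = ∫ t, (innerSL ℂ (f t)) (𝓕⁻ (𝓕 f) t) := by
    rw [flip_innerₗ] at h; exact h
  rw [hinv] at h2
  simpa [← LinearIsometry.integral_comp_comm, inner_self_eq_norm_sq_to_K] using h2

lemma integrable_exp_neg_abs' (c : ℝ) (hc : 0 < c) : Integrable fun x : ℝ => Real.exp (-c * |x|) := by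
  rw [← integrableOn_univ, ← Set.Iic_union_Ioi (a := (0:ℝ))]
  refine IntegrableOn.union ?_ ?_
  · refine (integrableOn_exp_mul_Iic hc 0).congr_fun (fun x hx => ?_) measurableSet_Iic
    simp only [abs_of_nonpos (mem_Iic.1 hx)]; congr 1; ring
  · refine (exp_neg_integrableOn_Ioi 0 hc).congr_fun (fun x hx => ?_) measurableSet_Ioi
    simp only [abs_of_pos (mem_Ioi.1 hx)]

lemma integral_exp_neg_abs' (c : ℝ) (hc : 0 < c) : ∫ x : ℝ, Real.exp (-c * |x|) = 2 / c := by
  rw [integral_comp_abs (f := fun x => Real.exp (-c * x)), integral_exp_mul_Ioi (by linarith)]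
  simp; ring

lemma exists_bound (f : ℝ → ℝ) (hf : Continuous f) (M₁ M₂ : ℝ) (h1 : ∀ x, x ≤ -1 → |f x| ≤ M₁)
    (h2 : ∀ x, 0 ≤ x → |f x| ≤ M₂ * Real.exp (-x)) :
    ∃ M : ℝ, 0 < M ∧ ∀ c x, 0 < c → c ≤ 1 / 2 → |Real.exp (c * x) * f x| ≤ M * Real.exp (-c * |x|) := by
  obtain ⟨M₃, h3⟩ := (isCompact_Icc (a := (-1:ℝ)) (b := 0)).exists_bound_of_continuousOn hf.continuousOn
  refine ⟨|M₁| + |M₂| + |M₃| + 1, by positivity, fun c x hc hc' => ?_⟩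
  rw [abs_mul, Real.abs_exp]
  have a1 := le_abs_self M₁
  have a2 := le_abs_self M₂
  have a3 := le_abs_self M₃
  have b1 := abs_nonneg M₁
  have b2 := abs_nonneg M₂
  have b3 := abs_nonneg M₃
  rcases le_total 0 x with hx | hx
  · rw [abs_of_nonneg hx]
    calc Real.exp (c * x) * |f x| ≤ Real.exp (c * x) * (M₂ * Real.exp (-x)) := by gcongr; exact h2 x hx
      _ = M₂ * Real.exp (c * x + -x) := by rw [Real.exp_add]; ring
      _ ≤ (|M₁| + |M₂| + |M₃| + 1) * Real.exp (-c * x) := by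
        gcongr
        · linarith
        · nlinarith
  · rw [abs_of_nonpos hx, mul_comm, show -c * -x = c * x by ring]
    gcongr
    rcases le_total x (-1) with hx' | hx'
    · linarith [h1 x hx']
    · have := h3 x ⟨hx', hx⟩
      rw [Real.norm_eq_abs] at this
      linarith

lemma Ai_weight : ∃ M : ℝ, 0 < M ∧ ∀ c x, 0 < c → c ≤ 1 / 2 →
    |Real.exp (c * x) * Ai x| ≤ M * Real.exp (-c * |x|) := by
  obtain ⟨C, M, hM, h⟩ := rho_left
  obtain ⟨D, hD, h'⟩ := Ai_decay
  refine exists_bound Ai continuous_Ai (M + 1) D (fun x hx => ?_) (fun x _ => (h' x).1)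
  have h1 := (h x hx).2.1
  have h2 : M * √(-x) / (-x) ≤ M := by
    rw [div_le_iff₀ (by linarith)]
    gcongr
    rw [Real.sqrt_le_left (by linarith)]
    nlinarith
  have := sq_abs (Ai x)
  nlinarith [abs_nonneg (Ai x)]

lemma rho_weight (C M : ℝ) (hM : ∀ y, y ≤ -1 → |rho y - C * √(-y)| ≤ M / (-y)) : ∃ M' : ℝ, 0 < M' ∧ ∀ c x, 0 < c → c ≤ 1 / 2 →
    |Real.exp (c * x) * (rho x - C * √(-x))| ≤ M' * Real.exp (-c * |x|) := by
  obtain ⟨D, hD, h'⟩ := rho_decay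
  refine exists_bound (fun x => rho x - C * √(-x)) (by have := continuous_rho; fun_prop) |M| D (fun x hx => ?_) (fun x hx => ?_)
  · refine (hM x hx).trans ?_
    rw [div_le_iff₀ (by linarith)]
    nlinarith [le_abs_self M, abs_nonneg M]
  · rw [Real.sqrt_eq_zero_of_nonpos (by linarith)]
    simpa using (h' x hx).1

open Complex in
lemma fourier_aiE (η v : ℝ) (hη : 0 < η) :
    𝓕 (fun t : ℝ => aiE 0 (t + η * I)) v =
      ((2 * Real.pi * (Real.exp (η * (-2 * Real.pi * v)) * Ai (-2 * Real.pi * v)) : ℝ) : ℂ) := by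
  have h := Ai_eq_s2 (-2 * Real.pi * v) η hη
  rw [Real.fourier_real_eq_integral_exp_smul]
  have e : (2 * Real.pi * (Real.exp (η * (-2 * Real.pi * v)) * Ai (-2 * Real.pi * v)) : ℝ) =
    (Real.exp (η * (-2 * Real.pi * v))) * (2 * Real.pi * Ai (-2 * Real.pi * v)) := by ring
  rw [e, Complex.ofReal_mul, h, ← integral_const_mul]
  congr 1
  ext t
  unfold aiE
  rw [smul_eq_mul, Complex.ofReal_exp, ← Complex.exp_add, ← Complex.exp_add]
  congr 1
  push_cast
  have h2 : I ^ 2 = -1 := Complex.I_sq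
  ring_nf
  rw [h2]; ring

lemma integrable_weight_Ai (η : ℝ) (h0 : 0 < η) (h1 : η ≤ 1 / 2) :
    Integrable fun x => Real.exp (η * x) * Ai x := by
  obtain ⟨M, hM, h⟩ := Ai_weight
  refine ((integrable_exp_neg_abs' η h0).const_mul M).mono' ?_ (Eventually.of_forall fun x => h η x h0 h1)
  have := continuous_Ai
  exact (by fun_prop : Continuous fun x => Real.exp (η * x) * Ai x).aestronglyMeasurable

open Complex in
lemma Ai_sq_transform (η : ℝ) (h0 : 0 < η) (h1 : η ≤ 1 / 2) :
    ∫ x, Real.exp (2 * η * x) * (Ai x) ^ 2 =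
      1 / (2 * Real.pi) * (Real.exp (2 * η ^ 3 / 3) * √(Real.pi / (2 * η))) := by
  have hpi := Real.pi_pos
  have hcont : Continuous (fun t : ℝ => aiE 0 (t + η * I)) :=
    (continuous_aiE 0).comp (by fun_prop)
  have hF : 𝓕 (fun t : ℝ => aiE 0 (t + η * I)) = fun v =>
    ((2 * Real.pi * (Real.exp (η * (-2 * Real.pi * v)) * Ai (-2 * Real.pi * v)) : ℝ) : ℂ) :=
    funext fun v => fourier_aiE η v h0
  have hFi : Integrable (𝓕 (fun t : ℝ => aiE 0 (t + η * I))) := by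
    rw [hF]
    exact (((integrable_weight_Ai η h0 h1).comp_mul_left' (R := -2 * Real.pi)
      (by simp)).const_mul (2 * Real.pi)).ofReal
  have h := plancherel_aux _ hcont (integrable_aiE 0 η h0) hFi
  rw [hF] at h
  simp_rw [norm_aiE, Complex.norm_real, Real.norm_eq_abs, sq_abs] at h
  have e1 : ∀ t : ℝ, Real.exp (-(η * t ^ 2) + η ^ 3 / 3 - 0 * η) ^ 2 =
      Real.exp (2 * η ^ 3 / 3) * Real.exp (-(2 * η) * t ^ 2) := by
    intro t
    rw [← Real.exp_nat_mul, ← Real.exp_add]; congr 1; push_cast; ring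
  have e2 : ∀ v : ℝ, (2 * Real.pi * (Real.exp (η * (-2 * Real.pi * v)) * Ai (-2 * Real.pi * v))) ^ 2 =
      (2 * Real.pi) ^ 2 * (fun x => Real.exp (2 * η * x) * (Ai x) ^ 2) (-2 * Real.pi * v) := by
    intro v
    simp only
    have e3 : Real.exp (2 * η * (-2 * Real.pi * v)) = Real.exp (η * (-2 * Real.pi * v)) ^ 2 := by
      rw [← Real.exp_nat_mul]; congr 1; push_cast; ring
    rw [e3]; ring
  simp_rw [e1, e2] at h
  rw [integral_const_mul, integral_const_mul, integral_gaussian,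
    Measure.integral_comp_mul_left (fun x => Real.exp (2 * η * x) * (Ai x) ^ 2)] at h
  rw [← h, abs_inv, abs_mul, abs_of_pos hpi]
  simp only [smul_eq_mul]
  norm_num
  field_simp


lemma integral_sqrt_exp (δ : ℝ) (hδ : 0 < δ) :
    ∫ x : ℝ, Real.exp (δ ^ 2 * x) * √(-x) = √Real.pi / (2 * δ ^ 3) := by
  have h1 := integral_comp_neg_Iic (0:ℝ) (fun x : ℝ => Real.exp (-δ ^ 2 * x) * √x)
  have h0 : ∫ x : ℝ, Real.exp (δ ^ 2 * x) * √(-x) = ∫ x in Iic (0:ℝ), Real.exp (δ ^ 2 * x) * √(-x) := by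
    rw [setIntegral_eq_integral_of_forall_compl_eq_zero]
    intro x hx
    rw [Real.sqrt_eq_zero_of_nonpos (by simp at hx; linarith), mul_zero]
  rw [h0]
  have h2 : ∀ x : ℝ, Real.exp (-δ ^ 2 * -x) = Real.exp (δ ^ 2 * x) := fun x => by congr 1; ring
  simp only [h2, neg_zero] at h1
  rw [h1]
  have h3 := Real.integral_rpow_mul_exp_neg_mul_Ioi (a := 3 / 2) (r := δ ^ 2) (by norm_num) (by positivity)
  have h4 : ∫ x in Ioi (0:ℝ), Real.exp (-δ ^ 2 * x) * √x =
      ∫ t in Ioi (0:ℝ), t ^ ((3:ℝ) / 2 - 1) * Real.exp (-(δ ^ 2 * t)) := by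
    congr 1; ext x
    rw [Real.sqrt_eq_rpow, mul_comm]
    norm_num
  rw [h4, h3, show (3:ℝ) / 2 = 1 / 2 + 1 by norm_num, Real.Gamma_add_one (by norm_num),
    Real.Gamma_one_half_eq]
  have h5 : (1 / δ ^ 2) ^ ((1:ℝ) / 2 + 1) = 1 / δ ^ 3 := by
    rw [show 1 / δ ^ 2 = (1 / δ) ^ 2 by rw [div_pow, one_pow], ← Real.rpow_natCast (1 / δ) 2,
      ← Real.rpow_mul (by positivity), show ((2:ℕ):ℝ) * (1 / 2 + 1) = ((3:ℕ):ℝ) by norm_num,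
      Real.rpow_natCast, div_pow, one_pow]
  rw [h5]; field_simp

lemma const_estimate (C M' : ℝ) (hM : ∀ c x, 0 < c → c ≤ 1 / 2 →
    |Real.exp (c * x) * (rho x - C * √(-x))| ≤ M' * Real.exp (-c * |x|))
    (δ : ℝ) (h0 : 0 < δ) (h1 : δ ≤ 1 / 2) :
    |Real.exp (δ ^ 6 / 12) / Real.pi - C| ≤ 4 * M' / √Real.pi * δ := by
  have hpi := Real.pi_pos
  have hsp : 0 < √Real.pi := Real.sqrt_pos.2 hpi
  have hc : 0 < δ ^ 2 := by positivity
  have hc' : δ ^ 2 ≤ 1 / 2 := by nlinarith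
  have hS := integral_sqrt_exp δ h0
  have hSi : Integrable fun x : ℝ => Real.exp (δ ^ 2 * x) * √(-x) := by
    by_contra hn
    rw [integral_undef hn] at hS
    have : 0 < √Real.pi / (2 * δ ^ 3) := by positivity
    linarith
  have hT := Ai_sq_transform (δ ^ 2 / 2) (by positivity) (by nlinarith)
  rw [show 2 * (δ ^ 2 / 2) = δ ^ 2 by ring, show 2 * (δ ^ 2 / 2) ^ 3 / 3 = δ ^ 6 / 12 by ring,
    Real.sqrt_div hpi.le, Real.sqrt_sq h0.le] at hT
  have hTi : Integrable fun x : ℝ => Real.exp (δ ^ 2 * x) * (Ai x) ^ 2 := by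
    by_contra hn
    rw [integral_undef hn] at hT
    have : 0 < 1 / (2 * Real.pi) * (Real.exp (δ ^ 6 / 12) * (√Real.pi / δ)) := by positivity
    linarith
  have hDi : Integrable fun x => Real.exp (δ ^ 2 * x) * (rho x - C * √(-x)) := by
    refine ((integrable_exp_neg_abs' _ hc).const_mul M').mono' ?_
      (Eventually.of_forall fun x => hM _ x hc hc')
    have := continuous_rho
    exact (by fun_prop : Continuous _).aestronglyMeasurable
  have hDb : |∫ x, Real.exp (δ ^ 2 * x) * (rho x - C * √(-x))| ≤ M' * (2 / δ ^ 2) := by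
    have := norm_integral_le_of_norm_le
      (f := fun x => Real.exp (δ ^ 2 * x) * (rho x - C * √(-x)))
      ((integrable_exp_neg_abs' _ hc).const_mul M')
      (Eventually.of_forall fun x => hM _ x hc hc')
    rwa [integral_const_mul, integral_exp_neg_abs' _ hc] at this
  have hsum : ∀ x, Real.exp (δ ^ 2 * x) * rho x =
      Real.exp (δ ^ 2 * x) * (rho x - C * √(-x)) + C * (Real.exp (δ ^ 2 * x) * √(-x)) := by
    intro x; ring
  have hGi : Integrable fun x => Real.exp (δ ^ 2 * x) * rho x := by
    simp_rw [hsum]; exact hDi.add (hSi.const_mul C)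
  have hGe : ∫ x, Real.exp (δ ^ 2 * x) * rho x =
      (∫ x, Real.exp (δ ^ 2 * x) * (rho x - C * √(-x))) + C * (√Real.pi / (2 * δ ^ 3)) := by
    simp_rw [hsum]
    rw [integral_add hDi (hSi.const_mul C), integral_const_mul, hS]
  have hd : ∀ x, HasDerivAt (fun x => Real.exp (δ ^ 2 * x) * rho x)
      (δ ^ 2 * (Real.exp (δ ^ 2 * x) * rho x) - Real.exp (δ ^ 2 * x) * (Ai x) ^ 2) x := by
    intro x
    have h := (((hasDerivAt_id x).const_mul (δ ^ 2)).exp).mul (hasDerivAt_rho x)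
    convert! h using 1
    simp; ring
  have hz := integral_eq_zero_of_hasDerivAt_of_integrable hd ((hGi.const_mul _).sub hTi) hGi
  rw [integral_sub (hGi.const_mul _) hTi, integral_const_mul, hT, hGe] at hz
  set I := ∫ x, Real.exp (δ ^ 2 * x) * (rho x - C * √(-x))
  have hI : Real.exp (δ ^ 6 / 12) / Real.pi - C = 2 * δ ^ 3 / √Real.pi * I := by
    have : √Real.pi * (Real.exp (δ ^ 6 / 12) / Real.pi - C) = 2 * δ ^ 3 * I := by
      have e : δ ^ 2 * (I + C * (√Real.pi / (2 * δ ^ 3))) =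
        1 / (2 * Real.pi) * (Real.exp (δ ^ 6 / 12) * (√Real.pi / δ)) := by linarith
      field_simp at e ⊢
      linear_combination -e
    field_simp
    field_simp at this
    linarith
  rw [hI, abs_mul, abs_of_pos (by positivity)]
  calc 2 * δ ^ 3 / √Real.pi * |I| ≤ 2 * δ ^ 3 / √Real.pi * (M' * (2 / δ ^ 2)) := by gcongr
    _ = _ := by field_simp; ring

lemma const_eq (C M : ℝ) (hM : ∀ y, y ≤ -1 → |rho y - C * √(-y)| ≤ M / (-y)) : C = 1 / Real.pi := by
  obtain ⟨M', -, h⟩ := rho_weight C M hM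
  have t1 : Tendsto (fun δ : ℝ => |Real.exp (δ ^ 6 / 12) / Real.pi - C|) (nhdsWithin 0 (Ioi 0))
      (nhds |1 / Real.pi - C|) := by
    have : Continuous fun δ : ℝ => |Real.exp (δ ^ 6 / 12) / Real.pi - C| := by fun_prop
    have := this.tendsto 0
    simp only [ne_eq, OfNat.ofNat_ne_zero, not_false_eq_true, zero_pow, zero_div, Real.exp_zero] at this
    exact this.mono_left nhdsWithin_le_nhds
  have t2 : Tendsto (fun δ : ℝ => 4 * M' / √Real.pi * δ) (nhdsWithin 0 (Ioi 0)) (nhds 0) := by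
    have : Continuous fun δ : ℝ => 4 * M' / √Real.pi * δ := by fun_prop
    have := this.tendsto 0
    simp only [mul_zero] at this
    exact this.mono_left nhdsWithin_le_nhds
  have hle := le_of_tendsto_of_tendsto t1 t2 (by
    filter_upwards [Ioc_mem_nhdsGT (show (0:ℝ) < 1 / 2 by norm_num)] with δ hδ
    exact const_estimate C M' h δ hδ.1 hδ.2)
  have := abs_eq_zero.1 (le_antisymm hle (abs_nonneg _))
  linarith

lemma rho_antitone : Antitone rho :=
  antitone_of_hasDerivAt_nonpos hasDerivAt_rho fun x => by
    simpa using neg_nonpos.2 (sq_nonneg (Ai x))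

lemma rho_nonneg (x : ℝ) : 0 ≤ rho x := by
  obtain ⟨C, hC, h⟩ := rho_decay
  have t : Tendsto rho atTop (nhds 0) := by
    have t1 : Tendsto (fun x : ℝ => C * Real.exp (-x)) atTop (nhds 0) := by
      simpa using (Real.tendsto_exp_neg_atTop_nhds_zero).const_mul C
    refine squeeze_zero_norm' ?_ t1
    filter_upwards [eventually_ge_atTop 0] with x hx using (h x hx).1
  exact rho_antitone.le_of_tendsto t x

lemma rho_pos (x : ℝ) : 0 < rho x := by
  by_contra hn
  have hx : rho x = 0 := le_antisymm (not_lt.1 hn) (rho_nonneg x)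
  have hz : ∀ y, x ≤ y → rho y = 0 := fun y hy =>
    le_antisymm (hx ▸ rho_antitone hy) (rho_nonneg y)
  have hA : ∀ y, x < y → Ai y = 0 := by
    intro y hy
    have h1 := hasDerivAt_rho y
    have h2 : HasDerivAt rho 0 y :=
      (hasDerivAt_const y (0:ℝ)).congr_of_eventuallyEq (by
        filter_upwards [Ioi_mem_nhds hy] with z hz' using hz z (le_of_lt hz'))
    have := h1.unique h2
    simpa using this
  have hA' : ∀ y, x < y → deriv Ai y = 0 := by
    intro y hy
    have h2 : HasDerivAt Ai 0 y :=
      (hasDerivAt_const y (0:ℝ)).congr_of_eventuallyEq (by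
        filter_upwards [Ioi_mem_nhds hy] with z hz' using hA z hz')
    exact h2.deriv
  have hall : ∀ y, Ai y = 0 := by
    intro y
    rcases lt_or_ge x y with hy | hy
    · exact hA y hy
    set c := 2 + |y| + |x| with hcdef
    have hder : ∀ z, HasDerivAt (fun z => ((Ai z) ^ 2 + (deriv Ai z) ^ 2) * Real.exp (c * z))
        ((2 * (Ai z * deriv Ai z) * (1 + z) + c * ((Ai z) ^ 2 + (deriv Ai z) ^ 2)) * Real.exp (c * z)) z := by
      intro z
      have h := (((hasDerivAt_Ai z).pow 2).add ((hasDerivAt_dAi z).pow 2)).mul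
        (((hasDerivAt_id z).const_mul c).exp)
      convert! h using 1
      simp; ring
    have hmono : MonotoneOn (fun z => ((Ai z) ^ 2 + (deriv Ai z) ^ 2) * Real.exp (c * z)) (Icc y (x + 1)) := by
      apply monotoneOn_of_hasDerivWithinAt_nonneg (convex_Icc _ _)
        (fun z _ => (hder z).continuousAt.continuousWithinAt)
        (fun z _ => (hder z).hasDerivWithinAt)
      intro z hz
      rw [interior_Icc] at hz
      apply mul_nonneg _ (Real.exp_pos _).le
      have b1 : |1 + z| ≤ c := by
        rw [abs_le, hcdef]
        constructor <;> linarith [hz.1, hz.2, neg_abs_le y, le_abs_self x, abs_nonneg x, abs_nonneg y]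
      have b2 : |2 * (Ai z * deriv Ai z)| ≤ (Ai z) ^ 2 + (deriv Ai z) ^ 2 := by
        rw [abs_le]
        constructor <;> nlinarith [sq_nonneg (Ai z + deriv Ai z), sq_nonneg (Ai z - deriv Ai z)]
      have b3 : |2 * (Ai z * deriv Ai z) * (1 + z)| ≤ ((Ai z) ^ 2 + (deriv Ai z) ^ 2) * c := by
        rw [abs_mul]; gcongr
      have := (abs_le.1 b3).1
      linarith
    have h1 := hmono (show y ∈ Icc y (x + 1) from ⟨le_rfl, by linarith⟩)
      (show x + 1 ∈ Icc y (x + 1) from ⟨by linarith, le_rfl⟩) (by linarith)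
    simp only [hA (x + 1) (by linarith), hA' (x + 1) (by linarith)] at h1
    have h2 := Real.exp_pos (c * y)
    have h3 : (Ai y) ^ 2 + (deriv Ai y) ^ 2 ≤ 0 := by
      by_contra hc
      have := mul_pos (not_le.1 hc) h2
      simp at h1
      linarith
    have : (Ai y) ^ 2 = 0 := le_antisymm (by nlinarith [sq_nonneg (deriv Ai y)]) (sq_nonneg _)
    exact pow_eq_zero_iff (two_ne_zero) |>.1 this
  have hT := Ai_sq_transform (1 / 2) (by norm_num) le_rfl
  simp only [hall] at hT
  have : 0 < 1 / (2 * Real.pi) * (Real.exp (2 * (1 / 2) ^ 3 / 3) * √(Real.pi / (2 * (1 / 2)))) := by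
    have := Real.pi_pos
    positivity
  rw [← hT] at this
  simp at this


lemma taylor_one {f f' : ℝ → ℝ} (hf : ∀ x, HasDerivAt f (f' x) x) (hc : Continuous f') (x y : ℝ) :
    (y - x) * ∫ θ in (0:ℝ)..1, f' (x + θ * (y - x)) = f y - f x := by
  have hd : ∀ θ : ℝ, HasDerivAt (fun θ => f (x + θ * (y - x))) ((y - x) * f' (x + θ * (y - x))) θ := by
    intro θ
    have h1 : HasDerivAt (fun θ : ℝ => x + θ * (y - x)) (y - x) θ := by
      simpa using ((hasDerivAt_id θ).mul_const (y - x)).const_add x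
    have h := (hf (x + θ * (y - x))).comp θ h1
    rw [mul_comm] at h
    exact h
  have := intervalIntegral.integral_eq_sub_of_hasDerivAt (a := 0) (b := 1) (fun θ _ => hd θ)
    ((by fun_prop : Continuous _).intervalIntegrable _ _)
  rw [intervalIntegral.integral_const_mul] at this
  rw [this]; simp

lemma taylor_two {f f' f'' : ℝ → ℝ} (hf : ∀ x, HasDerivAt f (f' x) x)
    (hf' : ∀ x, HasDerivAt f' (f'' x) x) (hc : Continuous f'') (x y : ℝ) :
    (y - x) ^ 2 * ∫ θ in (0:ℝ)..1, (1 - θ) * f'' (x + θ * (y - x)) =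
      f y - f x - (y - x) * f' x := by
  have hd : ∀ θ : ℝ, HasDerivAt
      (fun θ => (1 - θ) * ((y - x) * f' (x + θ * (y - x))) + f (x + θ * (y - x)))
      ((y - x) ^ 2 * ((1 - θ) * f'' (x + θ * (y - x)))) θ := by
    intro θ
    have h1 : HasDerivAt (fun θ : ℝ => x + θ * (y - x)) (y - x) θ := by
      simpa using ((hasDerivAt_id θ).mul_const (y - x)).const_add x
    have h := (hf (x + θ * (y - x))).comp θ h1
    have h' := (hf' (x + θ * (y - x))).comp θ h1
    have h2 := (((hasDerivAt_id θ).const_sub 1).mul (h'.const_mul (y - x))).add h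
    convert! h2 using 1
    simp; ring
  have := intervalIntegral.integral_eq_sub_of_hasDerivAt (a := 0) (b := 1) (fun θ _ => hd θ)
    ((by fun_prop : Continuous _).intervalIntegrable _ _)
  rw [intervalIntegral.integral_const_mul] at this
  rw [this]; simp; ring

/-- The continuous extension of the Palm integrand. -/
noncomputable def palmR (x y : ℝ) : ℝ := ∫ θ in (0:ℝ)..1, (Ai (x + θ * (y - x))) ^ 2

noncomputable def palmG (x y : ℝ) : ℝ :=
  deriv Ai x * (∫ θ in (0:ℝ)..1, (1 - θ) * ((x + θ * (y - x)) * Ai (x + θ * (y - x)))) -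
  Ai x * (∫ θ in (0:ℝ)..1, (1 - θ) * (Ai (x + θ * (y - x)) +
    (x + θ * (y - x)) * deriv Ai (x + θ * (y - x))))

noncomputable def palmPhi (x y : ℝ) : ℝ :=
  palmR x y + palmG x y * (2 * rho x - (x - y) * palmG x y) / rho x

lemma palmPhi_eq (x y : ℝ) (h : y ≠ x) :
    (rho y - (KAi x y) ^ 2 / rho x) / (x - y) = palmPhi x y := by
  have hr := (rho_pos x).ne'
  have hxy : x - y ≠ 0 := sub_ne_zero.2 h.symm
  have hyx : y - x ≠ 0 := sub_ne_zero.2 h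
  have cA := continuous_Ai
  have cD := continuous_dAi
  have h1 := taylor_one (f := rho) (f' := fun x => -(Ai x) ^ 2) hasDerivAt_rho (by fun_prop) x y
  rw [intervalIntegral.integral_neg] at h1
  have h2 := taylor_two (f'' := fun x => x * Ai x) hasDerivAt_Ai hasDerivAt_dAi (by fun_prop) x y
  have h3 := taylor_two (f' := fun x => x * Ai x) (f'' := fun x => Ai x + x * deriv Ai x)
    hasDerivAt_dAi
    (by intro z
        have := (hasDerivAt_id z).mul (hasDerivAt_Ai z)
        convert! this using 1
        simp) (by fun_prop) x y
  have e1 : rho y = rho x + (x - y) * palmR x y := by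
    unfold palmR; linarith
  have e2 : KAi x y = rho x - (x - y) * palmG x y := by
    rw [KAi, if_neg h.symm, div_eq_iff hxy]
    unfold palmG rho
    linear_combination deriv Ai x * h2 - Ai x * h3
  rw [e2, palmPhi, e1]
  field_simp
  ring

lemma continuous_palmPhi : Continuous fun p : ℝ × ℝ => palmPhi p.1 p.2 := by
  have cA := continuous_Ai
  have cD := continuous_dAi
  have cR := continuous_rho
  have c1 : Continuous fun p : ℝ × ℝ => palmR p.1 p.2 := by
    unfold palmR
    apply intervalIntegral.continuous_parametric_intervalIntegral_of_continuous' (by fun_prop)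
  have c2 : Continuous fun p : ℝ × ℝ => palmG p.1 p.2 := by
    unfold palmG
    refine Continuous.sub (Continuous.mul (by fun_prop) ?_) (Continuous.mul (by fun_prop) ?_)
    · apply intervalIntegral.continuous_parametric_intervalIntegral_of_continuous' 
        (f := fun (p : ℝ × ℝ) (θ : ℝ) => (1 - θ) * ((p.1 + θ * (p.2 - p.1)) * Ai (p.1 + θ * (p.2 - p.1)))) (by fun_prop)
    · apply intervalIntegral.continuous_parametric_intervalIntegral_of_continuous'
        (f := fun (p : ℝ × ℝ) (θ : ℝ) => (1 - θ) * (Ai (p.1 + θ * (p.2 - p.1)) + (p.1 + θ * (p.2 - p.1)) * deriv Ai (p.1 + θ * (p.2 - p.1)))) (by fun_prop)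
  unfold palmPhi
  refine c1.add (Continuous.div₀ (c2.mul ?_) (by fun_prop) fun p => (rho_pos _).ne')
  exact (by fun_prop : Continuous fun p : ℝ × ℝ => 2 * rho p.1).sub
    ((by fun_prop : Continuous fun p : ℝ × ℝ => p.1 - p.2).mul c2)

lemma palm_ae (x : ℝ) : (fun y => (rho y - (KAi x y) ^ 2 / rho x) / (x - y)) =ᵐ[volume] palmPhi x := by
  have : ∀ᵐ y : ℝ, y ≠ x := by simp [ae_iff]
  filter_upwards [this] with y hy using palmPhi_eq x y hy

lemma continuous_palmPhi_right (x : ℝ) : Continuous (palmPhi x) :=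
  Continuous.comp (g := fun p : ℝ × ℝ => palmPhi p.1 p.2) (f := fun y : ℝ => (x, y))
    continuous_palmPhi (by fun_prop)

lemma palm_integrableOn (x s : ℝ) :
    IntegrableOn (fun y => (rho y - (KAi x y) ^ 2 / rho x) / (x - y)) (Ioo (-s) s) := by
  have h : IntegrableOn (palmPhi x) (Ioo (-s) s) :=
    ((continuous_palmPhi_right x).integrableOn_Icc).mono_set Ioo_subset_Icc_self
  exact h.congr (EventuallyEq.symm (ae_restrict_of_ae (palm_ae x)))

lemma rhoHat_div (y : ℝ) : rhoHat y / (-y) = if y < 0 then (-y) ^ (-(1/2) : ℝ) / Real.pi else 0 := by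
  unfold rhoHat
  split_ifs with h
  · have h' : 0 < -y := by linarith
    have hp := Real.pi_pos
    rw [Real.rpow_neg h'.le, ← Real.sqrt_eq_rpow]
    have hs : 0 < √(-y) := Real.sqrt_pos.2 h'
    have := Real.mul_self_sqrt h'.le
    rw [div_div, div_eq_div_iff (by positivity) (by positivity)]
    field_simp
    nlinarith
  · simp

lemma rhoHat_integrableOn (s : ℝ) (hs : 0 < s) :
    IntegrableOn (fun y => rhoHat y / (-y)) (Ioo (-s) s) := by
  have h1 : IntervalIntegrable (fun y : ℝ => y ^ (-(1/2) : ℝ)) volume 0 s :=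
    intervalIntegral.intervalIntegrable_rpow' (by norm_num)
  have h2 := ((IntervalIntegrable.iff_comp_neg (by simp)).1 h1).div_const Real.pi
  simp only [neg_zero] at h2
  have h3 : IntegrableOn (fun y => (-y) ^ (-(1/2) : ℝ) / Real.pi) (Iio 0 ∩ Ioo (-s) s) := by
    refine ((intervalIntegrable_iff_integrableOn_Ioc_of_le (by linarith)).1 h2.symm).mono_set ?_
    rintro y ⟨h1, h2, h3⟩
    exact ⟨h2, le_of_lt h1⟩
  have h4 : (fun y => rhoHat y / (-y)) = (Iio 0).indicator (fun y => (-y) ^ (-(1/2) : ℝ) / Real.pi) := by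
    funext y
    rw [rhoHat_div]; simp [indicator]
  rw [h4]
  rw [IntegrableOn, integrable_indicator_iff measurableSet_Iio, IntegrableOn,
    Measure.restrict_restrict measurableSet_Iio]
  exact h3

lemma continuous_us (s : ℝ) (hs : 0 < s) : Continuous fun x =>
    ∫ y in Ioo (-s) s, (rho y - (KAi x y) ^ 2 / rho x) / (x - y) := by
  have : ∀ x, ∫ y in Ioo (-s) s, (rho y - (KAi x y) ^ 2 / rho x) / (x - y) =
      ∫ y in (-s)..s, palmPhi x y := by
    intro x
    rw [intervalIntegral.integral_of_le (by linarith), integral_Ioc_eq_integral_Ioo]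
    exact integral_congr_ae (ae_restrict_of_ae (palm_ae x))
  simp_rw [this]
  exact intervalIntegral.continuous_parametric_intervalIntegral_of_continuous' continuous_palmPhi _ _


/-- The regularised integrand. -/
noncomputable def palmPsi (x y : ℝ) : ℝ :=
  (rho y - (KAi x y) ^ 2 / rho x) / (x - y) - rhoHat y / (-y)

lemma KAi_sq_le (x y N D : ℝ) (h : 0 < |x - y|) (hN : (Ai x) ^ 2 ≤ N) (hN' : (deriv Ai x) ^ 2 ≤ N)
    (hD : (Ai y) ^ 2 ≤ D) (hD' : (deriv Ai y) ^ 2 ≤ D) :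
    (KAi x y) ^ 2 ≤ 4 * N * D / |x - y| ^ 2 := by
  have hne : x ≠ y := by
    rintro rfl; simp at h
  rw [KAi, if_neg hne, div_pow, sq_abs]
  gcongr
  have h1 : (Ai x) ^ 2 * (deriv Ai y) ^ 2 ≤ N * D := by gcongr; exact (sq_nonneg _).trans hN
  have h2 : (deriv Ai x) ^ 2 * (Ai y) ^ 2 ≤ N * D := by gcongr; exact (sq_nonneg _).trans hN
  nlinarith [sq_nonneg (Ai x * deriv Ai y + deriv Ai x * Ai y)]

lemma palm_tail (a : ℝ) (ha : 0 ≤ a) : ∃ B : ℝ, 0 ≤ B ∧ ∀ x, |x| ≤ a → ∀ y, 2 * a + 2 ≤ |y| →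
    |palmPsi x y| ≤ B / √|y| ^ 3 := by
  obtain ⟨C, hC, hdec⟩ := rho_decay
  obtain ⟨C1, M, hM, hleft⟩ := rho_left
  have hC1 : C1 = 1 / Real.pi := const_eq C1 M fun y hy => (hleft y hy).1
  have cA := continuous_Ai
  have cD := continuous_dAi
  obtain ⟨N, hNb⟩ := (isCompact_Icc (a := -a) (b := a)).exists_bound_of_continuousOn
    (f := fun x => (Ai x) ^ 2 + (deriv Ai x) ^ 2) (by fun_prop)
  have hN : ∀ x, |x| ≤ a → (Ai x) ^ 2 ≤ N ∧ (deriv Ai x) ^ 2 ≤ N := by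
    intro x hx
    have := (le_abs_self _).trans (hNb x (abs_le.1 hx))
    constructor <;> nlinarith [sq_nonneg (Ai x), sq_nonneg (deriv Ai x)]
  have hN0 : 0 ≤ N := (sq_nonneg _).trans (hN 0 (by simpa using ha)).1
  have hra := rho_pos a
  refine ⟨2 * M + 2 * a + 16 * N * M / rho a + 2 * (C + 4 * N * C / rho a), by positivity, ?_⟩
  intro x hx y hy
  have hxa := abs_le.1 hx
  obtain ⟨hNx, hNx'⟩ := hN x hx
  have hrx : rho a ≤ rho x := rho_antitone hxa.2
  have hrx0 := rho_pos x
  set t := |y| with ht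
  set w := √t with hw
  have ht2 : (2:ℝ) ≤ t := by linarith
  have hwt : w ^ 2 = t := Real.sq_sqrt (by linarith)
  have hw1 : 1 ≤ w := Real.one_le_sqrt.2 (by linarith)
  have hw0 : 0 < w := by linarith
  have hdist : t / 2 ≤ |x - y| := by
    have := abs_sub_abs_le_abs_sub y x
    rw [abs_sub_comm y x] at this
    linarith
  have hd1 : 1 ≤ |x - y| := by linarith
  have hd0 : 0 < |x - y| := by linarith
  have hker : ∀ D, (Ai y) ^ 2 ≤ D → (deriv Ai y) ^ 2 ≤ D →
      |(KAi x y) ^ 2 / rho x / (x - y)| ≤ 4 * N * D / (t / 2) ^ 2 / rho a := by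
    intro D h1 h2
    have hD0 : 0 ≤ D := (sq_nonneg _).trans h1
    rw [abs_div, abs_of_nonneg (by positivity : 0 ≤ (KAi x y) ^ 2 / rho x)]
    refine (div_le_self (by positivity) hd1).trans ?_
    have := KAi_sq_le x y N D hd0 hNx hNx' h1 h2
    calc (KAi x y) ^ 2 / rho x ≤ (KAi x y) ^ 2 / rho a := by gcongr
      _ ≤ (4 * N * D / |x - y| ^ 2) / rho a := by gcongr
      _ ≤ 4 * N * D / (t / 2) ^ 2 / rho a := by gcongr
  have hP1 : 0 ≤ 2 * M / w ^ 3 := by positivity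
  have hP2 : 0 ≤ 2 * a / w ^ 3 := by positivity
  have hP3 : 0 ≤ 16 * N * M / rho a / w ^ 3 := by positivity
  have hP4 : 0 ≤ 2 * (C + 4 * N * C / rho a) / w ^ 3 := by positivity
  rw [add_div, add_div, add_div]
  rcases le_or_gt 0 y with hy0 | hy0
  · have hty : t = y := abs_of_nonneg hy0
    obtain ⟨d1, d2, d3⟩ := hdec y hy0
    have hk := hker _ d2 d3
    have hh : rhoHat y = 0 := by simp [rhoHat, not_lt.2 hy0]
    have hexp : Real.exp (-y) ≤ 2 / w ^ 3 := by
      have := Real.quadratic_le_exp_of_nonneg hy0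
      rw [Real.exp_neg, ← one_div, div_le_div_iff₀ (Real.exp_pos _) (by positivity)]
      have h4 : w ^ 3 ≤ w ^ 4 := pow_le_pow_right₀ hw1 (by norm_num)
      have h5 : w ^ 4 = y ^ 2 := by rw [← hty, ← hwt]; ring
      linarith
    have e : palmPsi x y = rho y / (x - y) - (KAi x y) ^ 2 / rho x / (x - y) := by
      rw [palmPsi, hh]; ring
    have hr : |rho y / (x - y)| ≤ C * Real.exp (-y) := by
      rw [abs_div]; exact (div_le_self (abs_nonneg _) hd1).trans d1
    have hk2 : 4 * N * (C * Real.exp (-y)) / (t / 2) ^ 2 / rho a ≤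
        4 * N * C / rho a * Real.exp (-y) := by
      rw [div_right_comm]
      refine (div_le_self (by positivity) ?_).trans (le_of_eq (by ring))
      exact one_le_pow₀ (by linarith)
    have hfin : (C + 4 * N * C / rho a) * Real.exp (-y) ≤ (C + 4 * N * C / rho a) * (2 / w ^ 3) := by
      gcongr
    rw [e]
    have := abs_sub (rho y / (x - y)) ((KAi x y) ^ 2 / rho x / (x - y))
    have e4 : (C + 4 * N * C / rho a) * (2 / w ^ 3) = 2 * (C + 4 * N * C / rho a) / w ^ 3 := by ring
    linarith
  · have hty : t = -y := abs_of_neg hy0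
    obtain ⟨d1, d2, d3⟩ := hleft y (by linarith)
    rw [← hty, ← hw] at d1 d2 d3
    have hk := hker (M * w) (d2.trans (div_le_self (by positivity) (by linarith))) d3
    have hh : rhoHat y = w / Real.pi := by simp [rhoHat, hy0, hw, hty]
    have hxy : 0 < x - y := by linarith
    have habs : |x - y| = x - y := abs_of_pos hxy
    have e : palmPsi x y = (rho y - C1 * w) / (x - y) - C1 * w * x / ((x - y) * t)
        - (KAi x y) ^ 2 / rho x / (x - y) := by
      rw [palmPsi, hh, hC1, ← hty]
      have htn : t ≠ 0 := by linarith
      have hy' : x - y = x + t := by rw [hty]; ring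
      have hxt : x + t ≠ 0 := by rw [← hy']; exact hxy.ne'
      have hpi := Real.pi_ne_zero
      rw [hy']
      field_simp
      ring
    have h1 : |(rho y - C1 * w) / (x - y)| ≤ 2 * M / w ^ 3 := by
      rw [abs_div]
      calc _ ≤ (M / t) / (t / 2) := by gcongr
        _ = 2 * M / w ^ 4 := by rw [← hwt]; field_simp
        _ ≤ 2 * M / w ^ 3 := by
          gcongr
          norm_num
    have hC1b : |C1| ≤ 1 := by
      rw [hC1, abs_of_pos (by positivity)]
      rw [div_le_one Real.pi_pos]; linarith [Real.pi_gt_three]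
    have h2 : |C1 * w * x / ((x - y) * t)| ≤ 2 * a / w ^ 3 := by
      rw [abs_div, abs_mul, abs_mul, abs_mul, abs_of_pos hw0, abs_of_pos (by linarith : 0 < t)]
      calc _ ≤ 1 * w * a / ((t / 2) * t) := by gcongr
        _ = 2 * a / w ^ 3 := by rw [← hwt]; field_simp
    have h3 : 4 * N * (M * w) / (t / 2) ^ 2 / rho a = 16 * N * M / rho a / w ^ 3 := by
      rw [← hwt]; field_simp; ring
    rw [h3] at hk
    rw [e]
    have i1 := abs_sub ((rho y - C1 * w) / (x - y) - C1 * w * x / ((x - y) * t))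
      ((KAi x y) ^ 2 / rho x / (x - y))
    have i2 := abs_sub ((rho y - C1 * w) / (x - y)) (C1 * w * x / ((x - y) * t))
    linarith

lemma palm_tail' (a : ℝ) (ha : 0 ≤ a) : ∃ B : ℝ, 0 ≤ B ∧ ∀ x, |x| ≤ a → ∀ y, 2 * a + 2 ≤ |y| →
    |palmPsi x y| ≤ B * (1 + ‖y‖) ^ (-(3/2) : ℝ) := by
  obtain ⟨B, hB, h⟩ := palm_tail a ha
  refine ⟨8 * B, by positivity, fun x hx y hy => (h x hx y hy).trans ?_⟩
  have e : ∀ z : ℝ, 0 ≤ z → z ^ (-(3/2) : ℝ) = 1 / √z ^ 3 := by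
    intro z hz
    rw [Real.rpow_neg hz, Real.sqrt_eq_rpow, ← Real.rpow_natCast, ← Real.rpow_mul hz, one_div]
    norm_num
  rw [e _ (by positivity), Real.norm_eq_abs]
  have hy0 : 0 < √|y| := Real.sqrt_pos.2 (by linarith)
  have : √(1 + |y|) ≤ 2 * √|y| := by
    rw [Real.sqrt_le_left (by positivity), mul_pow, Real.sq_sqrt (abs_nonneg _)]
    linarith
  have h3 : √(1 + |y|) ^ 3 ≤ (2 * √|y|) ^ 3 := by gcongr
  have hp : 0 < √(1 + |y|) := Real.sqrt_pos.2 (by positivity)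
  rw [mul_one_div, div_le_div_iff₀ (by positivity) (by positivity)]
  nlinarith [mul_le_mul_of_nonneg_left h3 hB]

lemma palmPsi_integrableOn (x s : ℝ) (hs : 0 < s) : IntegrableOn (palmPsi x) (Ioo (-s) s) :=
  (palm_integrableOn x s).sub (rhoHat_integrableOn s hs)

lemma major_integrable : Integrable fun y : ℝ => (1 + ‖y‖) ^ (-(3/2) : ℝ) :=
  integrable_one_add_norm (by simp; norm_num)

lemma palmPsi_measurable (x : ℝ) : AEStronglyMeasurable (palmPsi x) volume := by
  have h1 : AEStronglyMeasurable (fun y => (rho y - (KAi x y) ^ 2 / rho x) / (x - y)) volume :=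
    (continuous_palmPhi_right x).aestronglyMeasurable.congr (palm_ae x).symm
  have h2 : Measurable fun y => rhoHat y / (-y) := by
    unfold rhoHat
    exact (Measurable.ite measurableSet_Iio (by fun_prop) (by fun_prop)).div (by fun_prop)
  exact h1.sub h2.aestronglyMeasurable

lemma palmPsi_integrable (x : ℝ) : Integrable (palmPsi x) := by
  obtain ⟨B, hB, h⟩ := palm_tail' |x| (abs_nonneg x)
  have hS : 0 < 2 * |x| + 2 := by positivity
  have h1 := palmPsi_integrableOn x _ hS
  rw [← integrableOn_univ, ← union_compl_self (Ioo (-(2 * |x| + 2)) (2 * |x| + 2))]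
  refine h1.union ?_
  refine Integrable.mono' (major_integrable.const_mul B).integrableOn (palmPsi_measurable x).restrict ?_
  refine (ae_restrict_iff' measurableSet_Ioo.compl).2 (Eventually.of_forall fun y hy => ?_)
  refine h x le_rfl y ?_
  by_contra hlt
  exact hy (abs_lt.1 (not_le.1 hlt))

lemma palm_diff (a : ℝ) (ha : 0 ≤ a) : ∃ B : ℝ, 0 ≤ B ∧ ∀ s, 2 * a + 2 ≤ s → ∀ x, |x| ≤ a →
    |(∫ y, palmPsi x y) - ((∫ y in Ioo (-s) s, (rho y - (KAi x y) ^ 2 / rho x) / (x - y)) -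
              ∫ y in Ioo (-s) s, rhoHat y / (-y))| ≤
      B * ((∫ y : ℝ, (1 + ‖y‖) ^ (-(3/2) : ℝ)) - ∫ y in (-s)..s, (1 + ‖y‖) ^ (-(3/2) : ℝ)) := by
  obtain ⟨B, hB, h⟩ := palm_tail' a ha
  refine ⟨B, hB, fun s hs x hx => ?_⟩
  have hs0 : 0 < s := by linarith
  rw [← integral_sub (palm_integrableOn x s) (rhoHat_integrableOn s hs0)]
  change |(∫ y, palmPsi x y) - ∫ y in Ioo (-s) s, palmPsi x y| ≤ _
  rw [← integral_add_compl (measurableSet_Ioo (a := -s) (b := s)) (palmPsi_integrable x),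
    ← integral_add_compl (measurableSet_Ioo (a := -s) (b := s)) major_integrable,
    intervalIntegral.integral_of_le (by linarith), integral_Ioc_eq_integral_Ioo,
    add_sub_cancel_left, add_sub_cancel_left, ← integral_const_mul, ← Real.norm_eq_abs]
  refine norm_integral_le_of_norm_le (major_integrable.const_mul B).integrableOn ?_
  refine (ae_restrict_iff' measurableSet_Ioo.compl).2 (Eventually.of_forall fun y hy => ?_)
  refine h x hx y (hs.trans ?_)
  by_contra hlt
  exact hy (abs_lt.1 (not_le.1 hlt))

lemma palm_unif (a : ℝ) (ha : 0 ≤ a) :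
    TendstoUniformlyOn
          (fun (s : ℝ) (x : ℝ) =>
            (∫ y in Set.Ioo (-s) s, (rho y - (KAi x y) ^ 2 / rho x) / (x - y)) -
              ∫ y in Set.Ioo (-s) s, rhoHat y / (-y))
          (fun x => ∫ y, palmPsi x y) Filter.atTop (Icc (-a) a) := by
  obtain ⟨B, hB, h⟩ := palm_diff a ha
  have hl := intervalIntegral_tendsto_integral major_integrable tendsto_neg_atTop_atBot
    (tendsto_id (α := ℝ) (x := atTop))
  have hl2 := (hl.const_sub (∫ y : ℝ, (1 + ‖y‖) ^ (-(3/2) : ℝ))).const_mul B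
  rw [sub_self, mul_zero] at hl2
  rw [Metric.tendstoUniformlyOn_iff]
  intro ε hε
  filter_upwards [hl2.eventually (gt_mem_nhds hε), eventually_ge_atTop (2 * a + 2)] with s h1 h2 x hx
  rw [Real.dist_eq]
  exact (h s h2 x (abs_le.2 hx)).trans_lt h1

lemma palm_continuous : Continuous fun x => ∫ y, palmPsi x y := by
  have hc : ∀ a : ℝ, 0 ≤ a → ContinuousOn (fun x => ∫ y, palmPsi x y) (Icc (-a) a) := by
    intro a ha
    refine (palm_unif a ha).continuousOn (Eventually.frequently ?_)
    filter_upwards [eventually_gt_atTop 0] with s hs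
    exact ((continuous_us s hs).sub continuous_const).continuousOn
  rw [continuous_iff_continuousAt]
  intro x
  refine (hc (|x| + 1) (by positivity)).continuousAt (Icc_mem_nhds ?_ ?_)
  · linarith [neg_abs_le x]
  · linarith [le_abs_self x]

/-- positivity of `ρ`, integrability of the Palm-correlation integrands, and
compact-uniform convergence of `u_s` to a continuous limit `u`. -/
theorem palm_correlation_compact_uniform_limit :
    (∀ x : ℝ, 0 < rho x) ∧
    (∀ x s : ℝ, 0 < s →
      IntegrableOn (fun y => (rho y - (KAi x y) ^ 2 / rho x) / (x - y)) (Set.Ioo (-s) s) ∧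
      IntegrableOn (fun y => rhoHat y / (-y)) (Set.Ioo (-s) s)) ∧
    ∃ u : ℝ → ℝ, Continuous u ∧
      ∀ K : Set ℝ, IsCompact K →
        TendstoUniformlyOn
          (fun (s : ℝ) (x : ℝ) =>
            (∫ y in Set.Ioo (-s) s, (rho y - (KAi x y) ^ 2 / rho x) / (x - y)) -
              ∫ y in Set.Ioo (-s) s, rhoHat y / (-y))
          u Filter.atTop K := by
  refine ⟨rho_pos, fun x s hs => ⟨palm_integrableOn x s, rhoHat_integrableOn s hs⟩,
    fun x => ∫ y, palmPsi x y, palm_continuous, fun K hK => ?_⟩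
  obtain ⟨a, ha⟩ := hK.isBounded.exists_norm_le
  refine (palm_unif (max a 0) (le_max_right _ _)).mono fun x hx => ?_
  exact abs_le.1 ((ha x hx).trans (le_max_left _ _))
end
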